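/- arXiv:1812.04372 — 4 statements merged into one kernel-verified Lean document; each statement's English description precedes it below -/
import Mathlib

section
/- Let 𝔽 be a finite field and let K be a global function field over 𝔽, i.e., K is a field equipped with an 𝔽-algebra structure making K a finite-degree field extension of the rational function field 𝔽(T). Let R be a finitely generated subring of K whose field of fractions is K (every element of K can be written as r/s with r, s ∈ R, s ≠ 0). Then R has a universal definition in K: there exist n ∈ ℕ and a polynomial F ∈ K[X, Y₁, …, Yₙ] such that R = { x ∈ K : for all y₁, …, yₙ ∈ K, F(x, y₁, …, yₙ) ≠ 0 }. -/
namespace UnivDef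

section DioCalculus
variable {K : Type*} [Field K]

/-- polynomial functions -/
def IsPoly {ι : Type} (g : (ι → K) → K) : Prop :=
  ∃ q : MvPolynomial ι K, ∀ x, g x = MvPolynomial.eval x q

/-- Diophantine predicates -/
def Dio {ι : Type} (P : (ι → K) → Prop) : Prop :=
  ∃ (n : ℕ) (F : MvPolynomial (ι ⊕ Fin n) K),
    ∀ x, P x ↔ ∃ y : Fin n → K, MvPolynomial.eval (Sum.elim x y) F = 0

/-- Diophantine subsets of the field -/
def Dio1 (S : Set K) : Prop := Dio (fun x : Unit → K => x () ∈ S)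

variable {ι : Type}

lemma IsPoly.var (i : ι) : IsPoly (fun x : ι → K => x i) :=
  ⟨MvPolynomial.X i, fun x => by simp⟩

lemma IsPoly.const (c : K) : IsPoly (fun _ : ι → K => c) :=
  ⟨MvPolynomial.C c, fun x => by simp⟩

lemma IsPoly.add {f g : (ι → K) → K} (hf : IsPoly f) (hg : IsPoly g) :
    IsPoly (fun x => f x + g x) := by
  obtain ⟨a, ha⟩ := hf; obtain ⟨b, hb⟩ := hg
  exact ⟨a + b, fun x => by simp [ha, hb]⟩

lemma IsPoly.sub {f g : (ι → K) → K} (hf : IsPoly f) (hg : IsPoly g) :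
    IsPoly (fun x => f x - g x) := by
  obtain ⟨a, ha⟩ := hf; obtain ⟨b, hb⟩ := hg
  exact ⟨a - b, fun x => by simp [ha, hb]⟩

lemma IsPoly.mul {f g : (ι → K) → K} (hf : IsPoly f) (hg : IsPoly g) :
    IsPoly (fun x => f x * g x) := by
  obtain ⟨a, ha⟩ := hf; obtain ⟨b, hb⟩ := hg
  exact ⟨a * b, fun x => by simp [ha, hb]⟩

lemma IsPoly.pow {f : (ι → K) → K} (hf : IsPoly f) (n : ℕ) :
    IsPoly (fun x => f x ^ n) := by
  obtain ⟨a, ha⟩ := hf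
  exact ⟨a ^ n, fun x => by simp [ha]⟩

lemma IsPoly.sum {α : Type*} (s : Finset α) {f : α → (ι → K) → K} (hf : ∀ i, IsPoly (f i)) :
    IsPoly (fun x => ∑ i ∈ s, f i x) := by
  choose a ha using hf
  exact ⟨∑ i ∈ s, a i, fun x => by simp [ha]⟩

lemma Dio.congr {P Q : (ι → K) → Prop} (hP : Dio P) (h : ∀ x, Q x ↔ P x) : Dio Q := by
  obtain ⟨n, F, hF⟩ := hP
  exact ⟨n, F, fun x => (h x).trans (hF x)⟩

lemma Dio.eq0 {g : (ι → K) → K} (hg : IsPoly g) : Dio (fun x => g x = 0) := by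
  obtain ⟨q, hq⟩ := hg
  refine ⟨0, MvPolynomial.rename Sum.inl q, fun x => ?_⟩
  simp [MvPolynomial.eval_rename, hq]

lemma Dio.eq {f g : (ι → K) → K} (hf : IsPoly f) (hg : IsPoly g) : Dio (fun x => f x = g x) :=
  (Dio.eq0 (hf.sub hg)).congr fun x => by rw [sub_eq_zero]

lemma Dio.false : Dio (fun _ : ι → K => False) :=
  (Dio.eq0 (IsPoly.const (1 : K))).congr fun x => by simp

lemma Dio.true : Dio (fun _ : ι → K => True) :=
  (Dio.eq0 (IsPoly.const (0 : K))).congr fun x => by simp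

/-- general quantifier block -/
lemma Dio.ex {m : ℕ} {P : (ι → K) → (Fin m → K) → Prop}
    (h : Dio (fun z : ι ⊕ Fin m → K => P (fun i => z (Sum.inl i)) (fun i => z (Sum.inr i)))) :
    Dio (fun x => ∃ y, P x y) := by
  obtain ⟨n, F, hF⟩ := h
  let e : (ι ⊕ Fin m) ⊕ Fin n → ι ⊕ Fin (m + n) :=
    Sum.elim (Sum.elim Sum.inl (fun i => Sum.inr (Fin.castAdd n i)))
      (fun j => Sum.inr (Fin.natAdd m j))
  refine ⟨m + n, MvPolynomial.rename e F, fun x => ?_⟩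
  have key : ∀ (y : Fin m → K) (z : Fin n → K), (Sum.elim x (Fin.append y z)) ∘ e
      = Sum.elim (Sum.elim x y) z := by
    intro y z
    funext i
    rcases i with (i | i) | i <;> simp [e]
  constructor
  · rintro ⟨y, hy⟩
    obtain ⟨z, hz⟩ := (hF (Sum.elim x y)).1 (by simpa using hy)
    refine ⟨Fin.append y z, ?_⟩
    rw [MvPolynomial.eval_rename, key, hz]
  · rintro ⟨w, hw⟩
    refine ⟨fun i => w (Fin.castAdd n i), ?_⟩
    have h2 := (hF (Sum.elim x (fun i => w (Fin.castAdd n i)))).2 ⟨fun j => w (Fin.natAdd m j), ?_⟩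
    · simpa using h2
    · rw [MvPolynomial.eval_rename] at hw
      rw [← key, Fin.append_castAdd_natAdd]
      exact hw

/-- substitution -/
lemma Dio.comp {κ : Type} {P : (κ → K) → Prop} (h : Dio P) {g : κ → (ι → K) → K}
    (hg : ∀ j, IsPoly (g j)) : Dio (fun x => P (fun j => g j x)) := by
  obtain ⟨n, F, hF⟩ := h
  choose q hq using hg
  refine ⟨n, MvPolynomial.bind₁ (Sum.elim (fun j => MvPolynomial.rename Sum.inl (q j))
    (fun i => MvPolynomial.X (Sum.inr i))) F, fun x => (hF _).trans ?_⟩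
  refine exists_congr fun y => ?_
  simp only [MvPolynomial.eval]
  rw [MvPolynomial.eval₂Hom_bind₁]
  have : (fun i => (MvPolynomial.eval₂Hom (RingHom.id K) (Sum.elim x y))
      (Sum.elim (fun j => MvPolynomial.rename Sum.inl (q j))
      (fun i => MvPolynomial.X (Sum.inr i)) i)) = Sum.elim (fun j => g j x) y := by
    funext i
    rcases i with i | i
    · simp only [Sum.elim_inl, hq]
      have := MvPolynomial.eval_rename (R := K) (Sum.inl : ι → ι ⊕ Fin n) (Sum.elim x y) (q i)
      simpa using this
    · simp
  rw [this]

lemma Dio.mem {S : Set K} (h : Dio1 S) {g : (ι → K) → K} (hg : IsPoly g) :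
    Dio (fun x => g x ∈ S) :=
  Dio.comp (κ := Unit) h (g := fun _ => g) (fun _ => hg)

lemma Dio.ex1 {P : (ι → K) → K → Prop}
    (h : Dio (fun z : Option ι → K => P (fun i => z (some i)) (z none))) :
    Dio (fun x => ∃ y, P x y) := by
  have h2 : Dio (fun x => ∃ y : Fin 1 → K, P x (y 0)) := by
    apply Dio.ex
    exact (Dio.comp h (ι := ι ⊕ Fin 1) (g := fun j z => j.elim (z (Sum.inr 0)) (fun i => z (Sum.inl i)))
      (by
        intro j
        rcases j with _ | j
        · exact IsPoly.var _
        · exact IsPoly.var _)).congr fun x => Iff.rfl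
  refine h2.congr fun x => ⟨fun ⟨y, hy⟩ => ⟨fun _ => y, hy⟩, fun ⟨y, hy⟩ => ⟨y 0, hy⟩⟩

lemma Dio.merge {P Q : (ι → K) → Prop} (hP : Dio P) (hQ : Dio Q) :
    ∃ (n : ℕ) (F G : MvPolynomial (ι ⊕ Fin n) K),
      (∀ x, P x ↔ ∃ y : Fin n → K, MvPolynomial.eval (Sum.elim x y) F = 0) ∧
      (∀ x, Q x ↔ ∃ y : Fin n → K, MvPolynomial.eval (Sum.elim x y) G = 0) ∧
      (∀ x, (P x ∧ Q x) ↔ ∃ y : Fin n → K, MvPolynomial.eval (Sum.elim x y) F = 0 ∧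
        MvPolynomial.eval (Sum.elim x y) G = 0) := by
  obtain ⟨m, F, hF⟩ := hP
  obtain ⟨n, G, hG⟩ := hQ
  let e : ι ⊕ Fin m → ι ⊕ Fin (m + n) := Sum.map id (Fin.castAdd n)
  let e' : ι ⊕ Fin n → ι ⊕ Fin (m + n) := Sum.map id (Fin.natAdd m)
  have k1 : ∀ (x : ι → K) w, (Sum.elim x w) ∘ e = Sum.elim x (fun i => w (Fin.castAdd n i)) := by
    intro x w; funext i; rcases i with i | i <;> simp [e]
  have k2 : ∀ (x : ι → K) w, (Sum.elim x w) ∘ e' = Sum.elim x (fun i => w (Fin.natAdd m i)) := by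
    intro x w; funext i; rcases i with i | i <;> simp [e']
  refine ⟨m + n, MvPolynomial.rename e F, MvPolynomial.rename e' G, ?_, ?_, ?_⟩
  · intro x
    simp only [MvPolynomial.eval_rename, k1]
    rw [hF]
    exact ⟨fun ⟨y, hy⟩ => ⟨Fin.append y 0, by simpa using hy⟩, fun ⟨y, hy⟩ => ⟨_, hy⟩⟩
  · intro x
    simp only [MvPolynomial.eval_rename, k2]
    rw [hG]
    exact ⟨fun ⟨y, hy⟩ => ⟨Fin.append 0 y, by simpa using hy⟩, fun ⟨y, hy⟩ => ⟨_, hy⟩⟩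
  · intro x
    simp only [MvPolynomial.eval_rename, k2, k1]
    rw [hG, hF]
    exact ⟨fun ⟨⟨y, hy⟩, z, hz⟩ => ⟨Fin.append y z, by simpa using hy, by simpa using hz⟩,
      fun ⟨y, hy, hz⟩ => ⟨⟨_, hy⟩, _, hz⟩⟩

lemma Dio.or {P Q : (ι → K) → Prop} (hP : Dio P) (hQ : Dio Q) : Dio (fun x => P x ∨ Q x) := by
  obtain ⟨n, F, G, hF, hG, -⟩ := hP.merge hQ
  refine ⟨n, F * G, fun x => ?_⟩
  simp only [map_mul, mul_eq_zero, exists_or]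
  rw [hF, hG]

lemma Dio.exists_finset {α : Type*} (s : Finset α) {P : α → (ι → K) → Prop}
    (hP : ∀ i ∈ s, Dio (P i)) : Dio (fun x => ∃ i ∈ s, P i x) := by
  classical
  induction s using Finset.induction_on with
  | empty => exact Dio.false.congr fun x => by simp
  | insert a s ha ih =>
    exact ((hP a (by simp)).or (ih fun i hi => hP i (by simp [hi]))).congr fun x => by simp

/-- the field is not perfect -/
def NonPerf (p : ℕ) (K : Type*) [Field K] : Prop := ∃ t : K, ∀ x : K, x ^ p ≠ t

lemma Dio.and {p : ℕ} (hp : NonPerf p K) (hp0 : p ≠ 0) {P Q : (ι → K) → Prop}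
    (hP : Dio P) (hQ : Dio Q) : Dio (fun x => P x ∧ Q x) := by
  obtain ⟨n, F, G, -, -, hFG⟩ := hP.merge hQ
  obtain ⟨t, ht⟩ := hp
  refine ⟨n, F ^ p - MvPolynomial.C t * G ^ p, fun x => (hFG _).trans ?_⟩
  refine exists_congr fun y => ?_
  simp only [map_sub, map_pow, map_mul, MvPolynomial.eval_C]
  constructor
  · rintro ⟨h1, h2⟩
    rw [h1, h2]; simp [hp0]
  · intro h
    by_cases h2 : MvPolynomial.eval (Sum.elim x y) G = 0
    · rw [h2] at h
      simp [hp0] at h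
      exact ⟨h, h2⟩
    · exfalso
      apply ht (MvPolynomial.eval (Sum.elim x y) F / MvPolynomial.eval (Sum.elim x y) G)
      rw [div_pow, div_eq_iff (pow_ne_zero _ h2)]
      exact sub_eq_zero.1 h

lemma Dio.forall_finset {p : ℕ} (hp : NonPerf p K) (hp0 : p ≠ 0) {α : Type*} (s : Finset α)
    {P : α → (ι → K) → Prop}
    (hP : ∀ i ∈ s, Dio (P i)) : Dio (fun x => ∀ i ∈ s, P i x) := by
  classical
  induction s using Finset.induction_on with
  | empty => exact Dio.true.congr fun x => by simp
  | insert a s ha ih =>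
    exact ((hP a (by simp)).and hp hp0 (ih fun i hi => hP i (by simp [hi]))).congr
      fun x => by simp

lemma Dio1.mk {S : Set K} (h : Dio (fun x : Unit → K => x () ∈ S)) : Dio1 S := h

/-- final conversion -/
lemma Dio1.final {S : Set K} (h : Dio1 Sᶜ) : ∃ (n : ℕ) (F : MvPolynomial (Fin (n + 1)) K),
    S = {x | ∀ y : Fin n → K, MvPolynomial.eval (Fin.cons x y) F ≠ 0} := by
  obtain ⟨n, F, hF⟩ := h
  let e : Unit ⊕ Fin n → Fin (n + 1) := Sum.elim (fun _ => 0) Fin.succ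
  refine ⟨n, MvPolynomial.rename e F, ?_⟩
  ext x
  have key : ∀ y : Fin n → K, (Fin.cons x y : Fin (n + 1) → K) ∘ e = Sum.elim (fun _ => x) y := by
    intro y; funext i; rcases i with i | i <;> simp [e]
  simp only [MvPolynomial.eval_rename, Set.mem_ofPred_eq, key]
  have := hF (fun _ => x)
  simp only [Set.mem_compl_iff] at this
  rw [← not_iff_not, this]
  push Not
  rfl

end DioCalculus

end UnivDef


namespace UnivDef

section RatFuncFacts
open Polynomial WithZero

variable {p : ℕ} [hp : Fact p.Prime]


open Classical in
/-- the valuation at infinity -/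
noncomputable def vi (p : ℕ) [Fact p.Prime] : Valuation (RatFunc (ZMod p)) ℤᵐ⁰ :=
  RatFunc.inftyValuation (ZMod p)

lemma vi_X : vi p (RatFunc.X) = exp 1 := by
  classical
  unfold vi
  convert RatFunc.inftyValuation.X (ZMod p)

lemma vi_poly {q : (Polynomial (ZMod p))} (hq : q ≠ 0) : vi p (algebraMap (Polynomial (ZMod p)) (RatFunc (ZMod p)) q) = exp (q.natDegree : ℤ) := by
  classical
  exact RatFunc.inftyValuation.polynomial (ZMod p) hq

lemma vi_poly_lt {q : (Polynomial (ZMod p))} (hq : vi p (algebraMap (Polynomial (ZMod p)) (RatFunc (ZMod p)) q) < 1) : q = 0 := by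
  by_contra h
  rw [vi_poly h, ← exp_zero, exp_lt_exp] at hq
  omega

lemma vi_poly_le {q : (Polynomial (ZMod p))} {n : ℕ} (hq : q.natDegree ≤ n) : vi p (algebraMap (Polynomial (ZMod p)) (RatFunc (ZMod p)) q) ≤ exp (n : ℤ) := by
  by_cases h : q = 0
  · simp [h]
  · rw [vi_poly h, exp_le_exp]; omega

lemma lt_one_iff_exp (x : ℤᵐ⁰) : x < 1 ↔ x ≤ exp (-1) := by
  rw [← exp_zero]
  by_cases h : x = 0
  · simp [h]
  · obtain ⟨n, rfl⟩ : ∃ n, x = exp n := ⟨log x, (exp_log h).symm⟩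
    rw [exp_lt_exp, exp_le_exp]; omega

lemma vi_approx (c : (RatFunc (ZMod p))) : ∃ q : (Polynomial (ZMod p)), vi p (c - algebraMap (Polynomial (ZMod p)) (RatFunc (ZMod p)) q) ≤ exp (-1) := by
  refine ⟨c.num / c.denom, ?_⟩
  have hd : c.denom ≠ 0 := c.denom_ne_zero
  have hd' : algebraMap (Polynomial (ZMod p)) (RatFunc (ZMod p)) c.denom ≠ 0 := by simpa using hd
  have e : c - algebraMap (Polynomial (ZMod p)) (RatFunc (ZMod p)) (c.num / c.denom)
      = algebraMap (Polynomial (ZMod p)) (RatFunc (ZMod p)) (c.num % c.denom) / algebraMap (Polynomial (ZMod p)) (RatFunc (ZMod p)) c.denom := by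
    rw [eq_div_iff hd', sub_mul]
    nth_rewrite 1 [← c.num_div_denom]
    rw [div_mul_cancel₀ _ hd', ← map_mul, ← map_sub]
    congr 1
    rw [mul_comm, sub_eq_iff_eq_add]
    exact (EuclideanDomain.mod_add_div c.num c.denom).symm
  rw [e, map_div₀, ← lt_one_iff_exp]
  by_cases h0 : c.num % c.denom = 0
  · simp [h0]
  · rw [vi_poly h0, vi_poly hd, ← exp_sub, ← exp_zero, exp_lt_exp]
    have := Polynomial.natDegree_lt_natDegree h0 (EuclideanDomain.mod_lt c.num hd)
    omega

lemma vi_approxN (N : ℕ) (c : (RatFunc (ZMod p))) :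
    ∃ q : (Polynomial (ZMod p)), vi p (c - algebraMap (Polynomial (ZMod p)) (RatFunc (ZMod p)) q * (RatFunc.X ^ N)⁻¹) ≤ exp (-1 - N : ℤ) := by
  obtain ⟨q, hq⟩ := vi_approx (c * RatFunc.X ^ N)
  refine ⟨q, ?_⟩
  have hX : (RatFunc.X : (RatFunc (ZMod p))) ^ N ≠ 0 := pow_ne_zero _ RatFunc.X_ne_zero
  have : c - algebraMap (Polynomial (ZMod p)) (RatFunc (ZMod p)) q * (RatFunc.X ^ N)⁻¹
     = (c * RatFunc.X ^ N - algebraMap (Polynomial (ZMod p)) (RatFunc (ZMod p)) q) * (RatFunc.X ^ N)⁻¹ := by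
    field_simp
  rw [this, map_mul, map_inv₀, map_pow, vi_X, ← exp_nsmul, ← exp_neg,
    show (-1 - N : ℤ) = -1 + -(N • 1) by simp; ring, exp_add]
  gcongr

/-- the subgroup `H_k` -/
noncomputable def Hk (p : ℕ) [Fact p.Prime] : AddSubgroup (RatFunc (ZMod p)) where
  carrier := {f | ∃ q : (ZMod p)[X], vi p (f - algebraMap _ _ q) ≤ exp (-2)}
  zero_mem' := ⟨0, by simp⟩
  add_mem' := by
    rintro f g ⟨q, hq⟩ ⟨r, hr⟩
    refine ⟨q + r, ?_⟩
    have : f + g - algebraMap _ (RatFunc (ZMod p)) (q + r)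
      = (f - algebraMap _ _ q) + (g - algebraMap _ _ r) := by rw [map_add]; ring
    rw [this]
    exact Valuation.map_add_le _ hq hr
  neg_mem' := by
    rintro f ⟨q, hq⟩
    refine ⟨-q, ?_⟩
    have : -f - algebraMap _ (RatFunc (ZMod p)) (-q) = -(f - algebraMap _ _ q) := by
      rw [map_neg]; ring
    rw [this, Valuation.map_neg]
    exact hq

lemma Hk_poly (q : (Polynomial (ZMod p))) : algebraMap (Polynomial (ZMod p)) (RatFunc (ZMod p)) q ∈ Hk p := ⟨q, by simp⟩

lemma Hk_small {f : (RatFunc (ZMod p))} (hf : vi p f ≤ exp (-2)) : f ∈ Hk p := ⟨0, by simpa using hf⟩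

lemma Hk_eq_poly {g : (RatFunc (ZMod p))} (hg : ∀ j : ℕ, RatFunc.X ^ j * g ∈ Hk p) :
    ∃ q : (Polynomial (ZMod p)), algebraMap (Polynomial (ZMod p)) (RatFunc (ZMod p)) q = g := by
  obtain ⟨q, hq⟩ := vi_approx g
  refine ⟨q, ?_⟩
  by_contra hne
  set r := g - algebraMap (Polynomial (ZMod p)) (RatFunc (ZMod p)) q with hr
  have hr0 : r ≠ 0 := fun h => hne (sub_eq_zero.1 h).symm
  have hv0 : vi p r ≠ 0 := by simpa using hr0
  obtain ⟨n, hn⟩ : ∃ n, vi p r = exp n := ⟨log (vi p r), (exp_log hv0).symm⟩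
  rw [hn, exp_le_exp] at hq
  obtain ⟨j, hj⟩ : ∃ j : ℕ, n = -1 - (j : ℤ) := ⟨(-1 - n).toNat, by omega⟩
  have h1 : RatFunc.X ^ j * r ∈ Hk p := by
    rw [hr, mul_sub]
    refine (Hk p).sub_mem (hg j) ?_
    have := Hk_poly (p := p) (Polynomial.X ^ j * q)
    simpa using this
  obtain ⟨q', hq'⟩ := h1
  have h2 : vi p (RatFunc.X ^ j * r) = exp (-1) := by
    rw [map_mul, map_pow, vi_X, hn, ← exp_nsmul, ← exp_add, hj]
    congr 1; simp
  have h3 : q' = 0 := by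
    apply vi_poly_lt
    rw [lt_one_iff_exp]
    have : algebraMap (Polynomial (ZMod p)) (RatFunc (ZMod p)) q' = RatFunc.X ^ j * r - (RatFunc.X ^ j * r - algebraMap (Polynomial (ZMod p)) (RatFunc (ZMod p)) q') := by ring
    rw [this]
    refine Valuation.map_sub_le _ h2.le (hq'.trans ?_)
    rw [exp_le_exp]; omega
  rw [h3, map_zero, sub_zero, h2, exp_le_exp] at hq'
  omega

lemma Hk_decomp (c : (RatFunc (ZMod p))) : ∃ (q : (Polynomial (ZMod p))) (a : ZMod p) (r : (RatFunc (ZMod p))),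
    c = algebraMap (Polynomial (ZMod p)) (RatFunc (ZMod p)) q + RatFunc.C a * RatFunc.X⁻¹ + r ∧ vi p r ≤ exp (-2) := by
  obtain ⟨q, hq⟩ := vi_approxN 1 c
  refine ⟨q.divX, q.coeff 0, _, ?_, hq⟩
  have := congrArg (algebraMap (Polynomial (ZMod p)) (RatFunc (ZMod p))) q.divX_mul_X_add
  have hX : (RatFunc.X : (RatFunc (ZMod p))) ≠ 0 := RatFunc.X_ne_zero
  simp only [map_add, map_mul, RatFunc.algebraMap_X, RatFunc.algebraMap_C] at this
  rw [← this]
  field_simp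
  ring

lemma exp_pow_le {x : ℤᵐ⁰} {n : ℤ} (h : x ≤ exp n) (m : ℕ) : x ^ m ≤ exp (m * n) := by
  calc x ^ m ≤ (exp n) ^ m := by gcongr
    _ = _ := by rw [← exp_nsmul]; simp

instance : CharP (RatFunc (ZMod p)) p :=
  charP_of_injective_algebraMap (algebraMap (ZMod p) (RatFunc (ZMod p))).injective p

lemma Hk_pow (c : (RatFunc (ZMod p))) {i : ℕ} (hi : i + 1 < p) : c ^ p * RatFunc.X ^ i ∈ Hk p := by
  obtain ⟨q, hq⟩ := vi_approx c
  set r := c - algebraMap (Polynomial (ZMod p)) (RatFunc (ZMod p)) q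
  have : c ^ p * RatFunc.X ^ i = algebraMap (Polynomial (ZMod p)) (RatFunc (ZMod p)) (q ^ p * Polynomial.X ^ i) + r ^ p * RatFunc.X ^ i := by
    have h : c = algebraMap (Polynomial (ZMod p)) (RatFunc (ZMod p)) q + r := by simp [r]
    nth_rewrite 1 [h]
    rw [add_pow_char]
    simp; ring
  rw [this]
  refine add_mem (Hk_poly _) (Hk_small ?_)
  rw [map_mul, map_pow, map_pow, vi_X]
  calc vi p r ^ p * exp 1 ^ i ≤ exp ((p : ℤ) * (-1)) * exp 1 ^ i := by
        gcongr
        exact exp_pow_le hq p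
    _ ≤ exp (-2) := by
      rw [← exp_nsmul, ← exp_add, exp_le_exp]; simp; omega

lemma Hk_pow' (c : (RatFunc (ZMod p))) : c ^ p * RatFunc.X ^ (p - 1) - c ∈ Hk p := by
  obtain ⟨q, a, r, hc, hr⟩ := Hk_decomp c
  have hp2 := hp.out.two_le
  have hX : (RatFunc.X : (RatFunc (ZMod p))) ≠ 0 := RatFunc.X_ne_zero
  have hXp : (RatFunc.X : (RatFunc (ZMod p))) ^ (p - 1) = RatFunc.X ^ p * RatFunc.X⁻¹ := by
    rw [eq_mul_inv_iff_mul_eq₀ hX, ← pow_succ]; congr 1; omega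
  have e : c ^ p * RatFunc.X ^ (p - 1) - c =
      algebraMap (Polynomial (ZMod p)) (RatFunc (ZMod p)) (q ^ p * Polynomial.X ^ (p - 1) - q) + (r ^ p * RatFunc.X ^ (p - 1) - r) := by
    have ha : (RatFunc.C a * RatFunc.X⁻¹ : (RatFunc (ZMod p))) ^ p * RatFunc.X ^ (p - 1)
        = RatFunc.C a * RatFunc.X⁻¹ := by
      rw [mul_pow, ← map_pow, ZMod.pow_card, hXp, inv_pow]
      have : (RatFunc.X : (RatFunc (ZMod p))) ^ p ≠ 0 := pow_ne_zero _ hX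
      field_simp
    nth_rewrite 1 [hc]
    rw [add_pow_char, add_pow_char, add_mul, add_mul, ha]
    nth_rewrite 1 [hc]
    simp; ring
  rw [e]
  refine add_mem (Hk_poly _) (Hk_small ?_)
  refine Valuation.map_sub_le _ ?_ hr
  rw [map_mul, map_pow, map_pow, vi_X]
  calc vi p r ^ p * exp 1 ^ (p - 1) ≤ exp ((p : ℤ) * (-2)) * exp 1 ^ (p - 1) := by
        gcongr
        exact exp_pow_le hr p
    _ ≤ exp (-2) := by
      rw [← exp_nsmul, ← exp_add, exp_le_exp]; simp; omega

/-- the isotypic decomposition is orthogonal for the valuation at infinity -/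
lemma vi_pdecomp (c : Fin p → (RatFunc (ZMod p))) (i : Fin p) :
    vi p (c i ^ p * RatFunc.X ^ (i : ℕ)) ≤ vi p (∑ j, c j ^ p * RatFunc.X ^ (j : ℕ)) := by
  classical
  let f : Fin p → (RatFunc (ZMod p)) := fun j => c j ^ p * RatFunc.X ^ (j : ℕ)
  have hp0 : 0 < p := hp.out.pos
  obtain ⟨m, -, hm⟩ := Finset.exists_max_image Finset.univ (fun j => vi p (f j)) ⟨i, Finset.mem_univ _⟩
  refine (hm i (Finset.mem_univ _)).trans ?_
  by_cases h0 : vi p (f m) = 0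
  · simp only [h0]; exact zero_le
  have key : ∀ j, j ≠ m → vi p (f j) < vi p (f m) := by
    intro j hj
    refine lt_of_le_of_ne (hm j (Finset.mem_univ _)) fun h => hj ?_
    have hj0 : vi p (f j) ≠ 0 := by rw [h]; exact h0
    have val : ∀ l, vi p (f l) ≠ 0 → ∃ n : ℤ, vi p (f l) = exp (p * n + (l : ℕ)) := by
      intro l hl
      have hc : vi p (c l) ≠ 0 := by
        intro h
        apply hl
        simp only [f, map_mul, map_pow, h]
        rw [zero_pow hp0.ne', zero_mul]
      refine ⟨log (vi p (c l)), ?_⟩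
      simp only [f, map_mul, map_pow, vi_X]
      nth_rewrite 1 [← exp_log hc]
      rw [← exp_nsmul, ← exp_nsmul, ← exp_add]
      simp
    obtain ⟨a, ha⟩ := val j hj0
    obtain ⟨b, hb⟩ := val m h0
    rw [ha, hb, exp_inj] at h
    have : ((j : ℕ) : ℤ) % p = ((m : ℕ) : ℤ) % p := by
      have := congrArg (· % (p : ℤ)) h
      simpa using this
    rw [Int.emod_eq_of_lt (by omega) (by have := j.2; omega),
      Int.emod_eq_of_lt (by omega) (by have := m.2; omega)] at this
    exact Fin.ext (by exact_mod_cast this)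
  have : vi p (∑ j, f j) = vi p (f m) := by
    rw [← Finset.add_sum_erase _ _ (Finset.mem_univ m)]
    apply Valuation.map_add_eq_of_lt_left
    refine Valuation.map_sum_lt _ h0 ?_
    intro j hj
    exact key j (Finset.ne_of_mem_erase hj)
  exact this.ge

lemma pdecomp_poly (c : Fin p → (RatFunc (ZMod p))) (q : (Polynomial (ZMod p)))
    (h : ∑ j, c j ^ p * RatFunc.X ^ (j : ℕ) = algebraMap (Polynomial (ZMod p)) (RatFunc (ZMod p)) q) (i : Fin p) :
    ∃ r : (Polynomial (ZMod p)), algebraMap (Polynomial (ZMod p)) (RatFunc (ZMod p)) r = c i := by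
  choose r hr using fun j => vi_approx (c j)
  let d : Fin p → (RatFunc (ZMod p)) := fun j => c j - algebraMap (Polynomial (ZMod p)) (RatFunc (ZMod p)) (r j)
  have hd : ∑ j, d j ^ p * RatFunc.X ^ (j : ℕ)
      = algebraMap (Polynomial (ZMod p)) (RatFunc (ZMod p)) (q - ∑ j, r j ^ p * Polynomial.X ^ (j : ℕ)) := by
    simp only [d, sub_pow_char, sub_mul, Finset.sum_sub_distrib, h, map_sub, map_sum, map_mul,
      map_pow, RatFunc.algebraMap_X]
  have hlt : vi p (∑ j, d j ^ p * RatFunc.X ^ (j : ℕ)) < 1 := by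
    refine Valuation.map_sum_lt _ one_ne_zero ?_
    intro j _
    rw [map_mul, map_pow, map_pow, vi_X, lt_one_iff_exp]
    calc vi p (d j) ^ p * exp 1 ^ (j : ℕ) ≤ exp ((p : ℤ) * (-1)) * exp 1 ^ (j : ℕ) := by
          gcongr
          exact exp_pow_le (hr j) p
      _ ≤ exp (-1) := by
        rw [← exp_nsmul, ← exp_add, exp_le_exp]; have := j.2; simp
  have hz := hlt
  rw [hd] at hz
  have hz := vi_poly_lt hz
  rw [hz, map_zero] at hd
  have := vi_pdecomp d i
  rw [hd, map_zero, le_zero_iff, map_mul, mul_eq_zero] at this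
  have hX : vi p (RatFunc.X ^ (i : ℕ)) ≠ 0 := by simp [RatFunc.X_ne_zero]
  have := this.resolve_right hX
  refine ⟨r i, ?_⟩
  have h3 : d i = 0 := by
    rw [map_pow] at this
    simpa using eq_zero_of_pow_eq_zero this
  exact (sub_eq_zero.1 h3).symm

lemma finite_poly_deg (n : ℕ) : {q : (Polynomial (ZMod p)) | q.natDegree ≤ n}.Finite := by
  have : Finite (Polynomial.degreeLT (ZMod p) (n + 1)) :=
    Finite.of_equiv _ (Polynomial.degreeLTEquiv (ZMod p) (n + 1)).symm.toEquiv
  refine Set.Finite.subset (Set.toFinite (Polynomial.degreeLT (ZMod p) (n + 1) : Set (Polynomial (ZMod p)))) ?_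
  intro q hq
  simp only [SetLike.mem_coe, Polynomial.mem_degreeLT]
  exact lt_of_le_of_lt Polynomial.degree_le_natDegree (by exact_mod_cast Nat.lt_succ_of_le hq)

lemma finite_poly_vi (n : ℤ) : {q : (Polynomial (ZMod p)) | vi p (algebraMap (Polynomial (ZMod p)) (RatFunc (ZMod p)) q) ≤ exp n}.Finite := by
  refine (finite_poly_deg n.toNat).subset fun q hq => ?_
  by_cases h : q = 0
  · simp [h]
  · simp only [Set.mem_ofPred_eq, vi_poly h, exp_le_exp] at hq ⊢
    omega

end RatFuncFacts
end UnivDef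


namespace UnivDef

set_option linter.unusedSectionVars false
set_option linter.unusedVariables false

section TraceFacts
open Polynomial WithZero

variable {p : ℕ} [hp : Fact p.Prime]


lemma poly_pdecomp (q : (Polynomial (ZMod p))) : ∃ r : Fin p → (Polynomial (ZMod p)), q = ∑ i, r i ^ p * Polynomial.X ^ (i : ℕ) := by
  have hp0 : 0 < p := hp.out.pos
  induction q using Polynomial.induction_on' with
  | add a b ha hb =>
    obtain ⟨r, hr⟩ := ha
    obtain ⟨t, ht⟩ := hb
    refine ⟨fun i => r i + t i, ?_⟩
    simp only [add_pow_char, add_mul, Finset.sum_add_distrib]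
    rw [← hr, ← ht]
  | monomial n a =>
    refine ⟨fun i => if (i : ℕ) = n % p then monomial (n / p) a else 0, ?_⟩
    rw [Finset.sum_eq_single (⟨n % p, Nat.mod_lt _ hp0⟩ : Fin p)]
    · simp only [if_true, monomial_pow, ZMod.pow_card, monomial_mul_X_pow]
      rw [mul_comm, Nat.div_add_mod]
    · intro j _ hj
      have : ¬ ((j : ℕ) = n % p) := fun h => hj (Fin.ext h)
      simp only [if_neg this]
      rw [zero_pow hp0.ne', zero_mul]
    · simp

variable {K : Type*} [Field K] [CharP K p] [Algebra (Polynomial (ZMod p)) K]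
  [Algebra (RatFunc (ZMod p)) K]
  [IsScalarTower (Polynomial (ZMod p)) (RatFunc (ZMod p)) K]

variable (p K) in
/-- the coordinate -/
noncomputable def co : K := algebraMap (Polynomial (ZMod p)) K Polynomial.X

lemma co_eq : co p K = algebraMap (RatFunc (ZMod p)) K RatFunc.X := by
  rw [co, IsScalarTower.algebraMap_apply (Polynomial (ZMod p)) (RatFunc (ZMod p)) K, RatFunc.algebraMap_X]

/-- the additive map `ζ` -/
noncomputable def zeta (σ : Fin p → K) : K :=
  ∑ i, σ i ^ p * co p K ^ (i : ℕ) - σ ⟨p - 1, Nat.sub_lt hp.out.pos one_pos⟩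

lemma zeta_add (σ τ : Fin p → K) : zeta (fun i => σ i + τ i) = zeta σ + zeta τ := by
  unfold zeta
  simp only [add_pow_char, add_mul, Finset.sum_add_distrib]
  ring

lemma zeta_sub (σ τ : Fin p → K) : zeta (fun i => σ i - τ i) = zeta σ - zeta τ := by
  unfold zeta
  simp only [sub_pow_char, sub_mul, Finset.sum_sub_distrib]
  ring

variable [FiniteDimensional (RatFunc (ZMod p)) K] [Algebra.IsSeparable (RatFunc (ZMod p)) K]

lemma trace_pow (x : K) : Algebra.trace (RatFunc (ZMod p)) K (x ^ p) = Algebra.trace (RatFunc (ZMod p)) K x ^ p := by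
  apply (algebraMap (RatFunc (ZMod p)) (AlgebraicClosure (RatFunc (ZMod p)))).injective
  have : CharP (AlgebraicClosure (RatFunc (ZMod p))) p :=
    charP_of_injective_algebraMap (algebraMap (RatFunc (ZMod p)) (AlgebraicClosure (RatFunc (ZMod p)))).injective p
  rw [RingHom.map_pow, trace_eq_sum_embeddings, trace_eq_sum_embeddings, sum_pow_char]
  simp

lemma trace_pow_mul (x : K) (i : ℕ) : Algebra.trace (RatFunc (ZMod p)) K (x ^ p * co p K ^ i)
    = Algebra.trace (RatFunc (ZMod p)) K x ^ p * RatFunc.X ^ i := by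
  rw [co_eq, ← map_pow, mul_comm, ← Algebra.smul_def, map_smul, trace_pow, smul_eq_mul, mul_comm]

variable (p K) in
/-- the subgroup `H` -/
noncomputable def HH : AddSubgroup K := (Hk p).comap (Algebra.trace (RatFunc (ZMod p)) K).toAddMonoidHom

lemma mem_HH {f : K} : f ∈ HH p K ↔ Algebra.trace (RatFunc (ZMod p)) K f ∈ Hk p := Iff.rfl

lemma zeta_mem_HH (σ : Fin p → K) : zeta σ ∈ HH p K := by
  rw [mem_HH, zeta, map_sub, map_sum]
  simp only [trace_pow_mul]
  have hp1 : p - 1 < p := Nat.sub_lt hp.out.pos one_pos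
  rw [← Finset.add_sum_erase _ _ (Finset.mem_univ (⟨p - 1, hp1⟩ : Fin p)), add_sub_right_comm]
  refine add_mem (Hk_pow' _) (sum_mem fun i hi => Hk_pow _ ?_)
  have h1 := i.2
  have h2 : (i : ℕ) ≠ p - 1 := fun h => Finset.ne_of_mem_erase hi (Fin.ext h)
  omega

lemma exists_pdecomp (f : K) : ∃ g : Fin p → K, f = ∑ i, g i ^ p * co p K ^ (i : ℕ) := by
  let b := Module.finBasis (RatFunc (ZMod p)) K
  have hspan := Field.span_map_pow_expChar_pow_eq_top_of_isSeparable (F := (RatFunc (ZMod p))) (E := K) p 1 b.span_eq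
  have hf : f ∈ Submodule.span (RatFunc (ZMod p)) (Set.range (fun i => b i ^ p ^ 1)) := by
    rw [hspan]; trivial
  rw [Submodule.mem_span_range_iff_exists_fun] at hf
  obtain ⟨c, hc⟩ := hf
  have hdec : ∀ j, ∃ d : Fin p → (RatFunc (ZMod p)), c j = ∑ i, d i ^ p * RatFunc.X ^ (i : ℕ) := by
    intro j
    obtain ⟨r, hr⟩ := poly_pdecomp ((c j).num * (c j).denom ^ (p - 1))
    have hd : algebraMap (Polynomial (ZMod p)) (RatFunc (ZMod p)) (c j).denom ≠ 0 := by simpa using (c j).denom_ne_zero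
    refine ⟨fun i => algebraMap (Polynomial (ZMod p)) (RatFunc (ZMod p)) (r i) / algebraMap (Polynomial (ZMod p)) (RatFunc (ZMod p)) (c j).denom, ?_⟩
    have h2 := congrArg (algebraMap (Polynomial (ZMod p)) (RatFunc (ZMod p))) hr
    simp only [map_mul, map_pow, map_sum, RatFunc.algebraMap_X] at h2
    simp only [div_pow, div_mul_eq_mul_div]
    rw [← Finset.sum_div, ← h2, eq_div_iff (pow_ne_zero _ hd)]
    nth_rewrite 1 [← (c j).num_div_denom]
    rw [← mul_pow_sub_one hp.out.ne_zero (algebraMap (Polynomial (ZMod p)) (RatFunc (ZMod p)) (c j).denom)]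
    field_simp
  choose d hd using hdec
  refine ⟨fun i => ∑ j, algebraMap (RatFunc (ZMod p)) K (d j i) * b j, ?_⟩
  simp only [sum_pow_char, mul_pow, Finset.sum_mul]
  rw [Finset.sum_comm, ← hc]
  refine Finset.sum_congr rfl fun j _ => ?_
  rw [hd j, Algebra.smul_def, map_sum, Finset.sum_mul, pow_one]
  refine Finset.sum_congr rfl fun i _ => ?_
  rw [co_eq, map_mul, map_pow, map_pow]
  ring

variable (p K) in
/-- the trace dual of the integral closure -/
noncomputable def AD : AddSubgroup K where
  carrier := {f | ∀ a : K, IsIntegral (Polynomial (ZMod p)) a → ∃ q : (Polynomial (ZMod p)), algebraMap (Polynomial (ZMod p)) (RatFunc (ZMod p)) q = Algebra.trace (RatFunc (ZMod p)) K (f * a)}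
  zero_mem' := fun a _ => ⟨0, by simp⟩
  add_mem' := by
    intro f g hf hg a ha
    obtain ⟨q, hq⟩ := hf a ha
    obtain ⟨r, hr⟩ := hg a ha
    exact ⟨q + r, by rw [map_add, hq, hr, add_mul, map_add]⟩
  neg_mem' := by
    intro f hf a ha
    obtain ⟨q, hq⟩ := hf a ha
    exact ⟨-q, by rw [map_neg, hq, neg_mul, map_neg]⟩

lemma AD_mul {f a : K} (hf : f ∈ AD p K) (ha : IsIntegral (Polynomial (ZMod p)) a) : f * a ∈ AD p K := by
  intro b hb
  obtain ⟨q, hq⟩ := hf (a * b) (ha.mul hb)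
  exact ⟨q, by rw [hq, mul_assoc]⟩

lemma integral_mem_AD {f : K} (hf : IsIntegral (Polynomial (ZMod p)) f) : f ∈ AD p K := by
  intro a ha
  have : IsIntegral (Polynomial (ZMod p)) (Algebra.trace (RatFunc (ZMod p)) K (f * a)) := Algebra.isIntegral_trace (hf.mul ha)
  exact IsIntegrallyClosed.isIntegral_iff.1 this

lemma AD_mem_HH {f : K} (hf : f ∈ AD p K) : f ∈ HH p K := by
  obtain ⟨q, hq⟩ := hf 1 isIntegral_one
  rw [mem_HH]
  rw [mul_one] at hq
  rw [← hq]
  exact Hk_poly q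

/-- criterion for the trace dual -/
lemma mem_AD_of {f : K} (hf : ∀ a : K, IsIntegral (Polynomial (ZMod p)) a → f * a ∈ HH p K) : f ∈ AD p K := by
  intro a ha
  apply Hk_eq_poly
  intro j
  have hX : IsIntegral (Polynomial (ZMod p)) (co p K) := isIntegral_algebraMap
  have := hf (a * co p K ^ j) (ha.mul (hX.pow j))
  rw [mem_HH, co_eq, ← map_pow, ← mul_assoc, mul_comm, ← Algebra.smul_def, map_smul,
    smul_eq_mul] at this
  exact this

lemma pdecomp_AD {f : K} (hf : f ∈ AD p K) {g : Fin p → K}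
    (hg : f = ∑ i, g i ^ p * co p K ^ (i : ℕ)) (i : Fin p) : g i ∈ AD p K := by
  intro a ha
  obtain ⟨q, hq⟩ := hf (a ^ p) (ha.pow p)
  refine pdecomp_poly (fun i => Algebra.trace (RatFunc (ZMod p)) K (g i * a)) q ?_ i
  rw [hq, hg, Finset.sum_mul, map_sum]
  refine Finset.sum_congr rfl fun j _ => ?_
  rw [← trace_pow_mul, mul_pow]
  congr 1
  ring

variable (p K) in
lemma exists_int_basis : ∃ (n : ℕ) (e : Module.Basis (Fin n) (RatFunc (ZMod p)) K), ∀ j, IsIntegral (Polynomial (ZMod p)) (e j) := by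
  obtain ⟨s, b, hb⟩ := FiniteDimensional.exists_is_basis_integral (Polynomial (ZMod p)) (RatFunc (ZMod p)) K
  refine ⟨_, b.reindex s.equivFin, fun j => ?_⟩
  simpa using hb _

lemma exists_bound {ι : Type*} [Finite ι] (c : ι → (RatFunc (ZMod p))) : ∃ N : ℕ, ∀ i, vi p (c i) ≤ exp (N : ℤ) := by
  have : ∀ i, ∃ N : ℕ, vi p (c i) ≤ exp (N : ℤ) := by
    intro i
    by_cases h : vi p (c i) = 0
    · exact ⟨0, by simp [h]⟩
    · refine ⟨(log (vi p (c i))).toNat, ?_⟩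
      nth_rewrite 1 [← exp_log h]
      rw [exp_le_exp]
      omega
  choose N hN using this
  obtain ⟨M, hM⟩ := (Set.finite_range N).bddAbove
  refine ⟨M, fun i => (hN i).trans ?_⟩
  rw [exp_le_exp]
  exact_mod_cast hM ⟨i, rfl⟩

variable (p K) in
theorem finiteness : ∃ C : Set K, C.Finite ∧ C ⊆ AD p K ∧
    ∀ f ∈ AD p K, ∃ c ∈ C, ∃ σ : Fin p → K, f = c + zeta σ := by
  obtain ⟨n, e, he⟩ := exists_int_basis p K
  have hp2 := hp.out.two_le
  obtain ⟨N, hN⟩ := exists_bound (fun z : Fin n × Fin n => e.repr (e z.1 ^ p) z.2)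
  let B : ℤ → K → Prop := fun m f => ∀ j, vi p (Algebra.trace (RatFunc (ZMod p)) K (f * e j)) ≤ exp m
  refine ⟨{f | f ∈ AD p K ∧ B N f}, ?_, fun f hf => hf.1, ?_⟩
  · -- finiteness
    have hfin : {q : Fin n → (Polynomial (ZMod p)) | ∀ j, q j ∈ {q : (Polynomial (ZMod p)) | vi p (algebraMap (Polynomial (ZMod p)) (RatFunc (ZMod p)) q) ≤ exp (N : ℤ)}}.Finite := by
      exact Set.Finite.pi' fun _ => finite_poly_vi _
    refine (hfin.image fun q => ∑ j, algebraMap (Polynomial (ZMod p)) (RatFunc (ZMod p)) (q j) • e.traceDual j).subset ?_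
    rintro f ⟨hf, hB⟩
    choose q hq using fun j => hf (e j) (he j)
    refine ⟨q, fun j => ?_, ?_⟩
    · simp only [Set.mem_ofPred_eq, hq]; exact hB j
    · simp only [hq]
      conv_rhs => rw [← e.traceDual.sum_repr f]
      refine Finset.sum_congr rfl fun j _ => ?_
      rw [Module.Basis.traceDual_repr_apply]
      rfl
  · -- descent
    have step : ∀ m : ℕ, ∀ f ∈ AD p K, B (N + m) f → ∃ c, (c ∈ AD p K ∧ B N c) ∧
        ∃ σ : Fin p → K, f = c + zeta σ := by
      intro m
      induction m with
      | zero =>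
        intro f hf hB
        refine ⟨f, ⟨hf, by simpa using hB⟩, fun _ => 0, ?_⟩
        simp [zeta, hp.out.ne_zero]
      | succ m ih =>
        intro f hf hB
        obtain ⟨g, hg⟩ := exists_pdecomp f
        let l : Fin p := ⟨p - 1, Nat.sub_lt hp.out.pos one_pos⟩
        have hgA := pdecomp_AD hf hg l
        have hgB : B (N + m) (g l) := by
          intro j
          have h1 := vi_pdecomp (fun i => Algebra.trace (RatFunc (ZMod p)) K (g i * e j)) l
          have h2 : ∑ i, Algebra.trace (RatFunc (ZMod p)) K (g i * e j) ^ p * RatFunc.X ^ (i : ℕ)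
              = Algebra.trace (RatFunc (ZMod p)) K (f * e j ^ p) := by
            rw [hg, Finset.sum_mul, map_sum]
            refine Finset.sum_congr rfl fun j _ => ?_
            rw [← trace_pow_mul, mul_pow]
            congr 1
            ring
          have h3 : vi p (Algebra.trace (RatFunc (ZMod p)) K (f * e j ^ p)) ≤ exp ((N : ℤ) + (N + (m + 1 : ℕ))) := by
            rw [← e.sum_repr (e j ^ p), Finset.mul_sum, map_sum]
            refine Valuation.map_sum_le _ fun i _ => ?_
            rw [mul_smul_comm, map_smul, smul_eq_mul, map_mul, exp_add]
            exact mul_le_mul' (hN (j, i)) (hB i)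
          rw [h2] at h1
          have h4 := h1.trans h3
          by_cases h0 : vi p (Algebra.trace (RatFunc (ZMod p)) K (g l * e j)) = 0
          · rw [h0]; exact zero_le
          rw [map_mul, map_pow, map_pow, vi_X] at h4
          rw [← exp_log h0] at h4 ⊢
          rw [← exp_nsmul, ← exp_nsmul, ← exp_add, exp_le_exp] at h4
          rw [exp_le_exp]
          set a := log (vi p (Algebra.trace (RatFunc (ZMod p)) K (g l * e j)))
          simp only [nsmul_eq_mul, l, mul_one] at h4
          by_contra hlt
          push Not at hlt
          have hpz : ((p - 1 : ℕ) : ℤ) = p - 1 := by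
            have := hp.out.one_le
            push_cast [this]; ring
          rw [hpz] at h4
          push_cast at h4
          have : (2 : ℤ) ≤ p := by exact_mod_cast hp2
          nlinarith
        obtain ⟨c, hc, σ, hσ⟩ := ih (g l) hgA hgB
        refine ⟨c, hc, fun i => g i + σ i, ?_⟩
        rw [zeta_add, zeta, ← hg, add_left_comm, ← hσ]
        simp [l]
    intro f hf
    obtain ⟨M, hM⟩ := exists_bound (fun j => Algebra.trace (RatFunc (ZMod p)) K (f * e j))
    exact step M f hf (fun j => (hM j).trans (by rw [exp_le_exp]; omega))

variable (p K) in
lemma exists_denominator : ∃ h : K, h ≠ 0 ∧ IsIntegral (Polynomial (ZMod p)) h ∧ ∀ f ∈ AD p K, IsIntegral (Polynomial (ZMod p)) (f * h) := by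
  classical
  obtain ⟨n, e, he⟩ := exists_int_basis p K
  obtain ⟨y, hy, hy'⟩ := exists_integral_multiples (Polynomial (ZMod p)) (RatFunc (ZMod p)) (Finset.univ.image e.traceDual)
  refine ⟨algebraMap (Polynomial (ZMod p)) K y, ?_, isIntegral_algebraMap, ?_⟩
  · rw [IsScalarTower.algebraMap_apply (Polynomial (ZMod p)) (RatFunc (ZMod p)) K]
    simpa using hy
  · intro f hf
    choose q hq using fun j => hf (e j) (he j)
    rw [← e.traceDual.sum_repr f, Finset.sum_mul]
    refine IsIntegral.sum _ fun j _ => ?_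
    rw [Module.Basis.traceDual_repr_apply]
    have : Algebra.traceForm (RatFunc (ZMod p)) K f (e j) = algebraMap (Polynomial (ZMod p)) (RatFunc (ZMod p)) (q j) := (hq j).symm
    rw [this, Algebra.smul_def, ← IsScalarTower.algebraMap_apply, mul_assoc, mul_comm (e.traceDual j)]
    have h9 := hy' (e.traceDual j) (by simp)
    rw [Algebra.smul_def] at h9
    exact isIntegral_algebraMap.mul h9

end TraceFacts
end UnivDef


namespace UnivDef

set_option linter.unusedSectionVars false
set_option linter.unusedVariables false

section Ded
open WithZero IsDedekindDomain

variable {A : Type*} [CommRing A] [IsDedekindDomain A] {K : Type*} [Field K] [Algebra A K]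
  [IsFractionRing A K]

lemma val_le_one (w : HeightOneSpectrum A) (a : A) : w.valuation K (algebraMap A K a) ≤ 1 :=
  w.valuation_le_one a

lemma val_lt_one_iff (w : HeightOneSpectrum A) (a : A) :
    w.valuation K (algebraMap A K a) < 1 ↔ a ∈ w.asIdeal :=
  w.valuation_lt_one_iff_mem a

lemma val_le_pow_iff (w : HeightOneSpectrum A) (a : A) (n : ℕ) :
    w.valuation K (algebraMap A K a) ≤ exp (-(n : ℤ)) ↔ a ∈ w.asIdeal ^ n := by
  rw [← w.intValuation_le_pow_iff_mem, ← w.valuation_of_algebraMap (K := K)]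

lemma exists_int {x : K} (h : ∀ w : HeightOneSpectrum A, w.valuation K x ≤ 1) :
    ∃ a : A, algebraMap A K a = x :=
  HeightOneSpectrum.mem_integers_of_valuation_le_one K x h

lemma finite_zero_int {c : A} (hc : c ≠ 0) :
    {w : HeightOneSpectrum A | w.valuation K (algebraMap A K c) < 1}.Finite := by
  have := Ideal.finite_factors (I := Ideal.span {c}) (by simpa using hc)
  refine this.subset fun w hw => ?_
  exact (w.valuation_lt_one_iff_dvd c).1 hw

lemma finite_poles (x : K) : {w : HeightOneSpectrum A | 1 < w.valuation K x}.Finite := by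
  obtain ⟨a, b, hb, rfl⟩ := IsFractionRing.div_surjective (A := A) x
  have hb0 : b ≠ 0 := nonZeroDivisors.ne_zero hb
  refine (finite_zero_int (K := K) hb0).subset fun w hw => ?_
  by_contra h
  have h1 : w.valuation K (algebraMap A K b) = 1 :=
    le_antisymm (val_le_one w b) (not_lt.1 h)
  have hw' : 1 < w.valuation K (algebraMap A K a / algebraMap A K b) := hw
  rw [map_div₀, h1, div_one] at hw'
  exact absurd (val_le_one w a) (not_le.2 hw')

lemma finite_zeros {x : K} (hx : x ≠ 0) :
    {w : HeightOneSpectrum A | w.valuation K x < 1}.Finite := by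
  refine (finite_poles (A := A) x⁻¹).subset fun w hw => ?_
  have hw' : w.valuation K x < 1 := hw
  have h0 : 0 < w.valuation K x := by simpa [zero_lt_iff] using hx
  show 1 < w.valuation K x⁻¹
  rw [map_inv₀]
  exact (one_lt_inv₀ h0).2 hw'

lemma exists_val_lower (T : Finset (HeightOneSpectrum A)) {x : K} (hx : x ≠ 0) :
    ∃ N : ℕ, ∀ w ∈ T, exp (-(N : ℤ)) ≤ w.valuation K x := by
  have h0 : ∀ w : HeightOneSpectrum A, w.valuation K x ≠ 0 := fun w => by simpa using hx
  refine ⟨∑ w ∈ T, (-log (w.valuation K x)).toNat, fun w hw => ?_⟩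
  nth_rewrite 1 [← exp_log (h0 w)]
  rw [exp_le_exp]
  have := Finset.single_le_sum (f := fun w : HeightOneSpectrum A => (-log (w.valuation K x)).toNat)
    (fun i _ => Nat.zero_le _) hw
  omega

/-- strong approximation -/
theorem strong_approx (T : Finset (HeightOneSpectrum A)) (f : HeightOneSpectrum A → K) (n : ℕ) :
    ∃ a : K, (∀ w ∈ T, w.valuation K (a - f w) ≤ exp (-(n : ℤ))) ∧
      ∀ w ∉ T, w.valuation K a ≤ 1 := by
  classical
  obtain ⟨⟨c, hcm⟩, hc⟩ := IsLocalization.exist_integer_multiples_of_finset (nonZeroDivisors A)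
    (T.image f)
  have hc0 : c ≠ 0 := nonZeroDivisors.ne_zero hcm
  have hcK : algebraMap A K c ≠ 0 := by simpa using hc0
  let T' : Finset (HeightOneSpectrum A) := T ∪ (finite_zero_int (K := K) hc0).toFinset
  obtain ⟨N, hN⟩ := exists_val_lower (K := K) T' hcK
  have hb : ∀ w, ∃ b : A, w ∈ T → algebraMap A K b = algebraMap A K c * f w := by
    intro w
    by_cases hw : w ∈ T
    · obtain ⟨b, hb⟩ := hc (f w) (Finset.mem_image_of_mem f hw)
      exact ⟨b, fun _ => by rw [hb, Algebra.smul_def]⟩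
    · exact ⟨0, fun h => absurd h hw⟩
  choose b hb using hb
  obtain ⟨a, ha⟩ := exists_forall_sub_mem_ideal (s := T') (fun w => w.asIdeal) (fun _ => N + n)
    (fun w _ => w.prime) (fun w _ w' _ h h2 => h (HeightOneSpectrum.ext h2))
    (fun w => if (w : HeightOneSpectrum A) ∈ T then b w else 0)
  have hpos : ∀ w : HeightOneSpectrum A, 0 < w.valuation K (algebraMap A K c) := fun w => by
    simpa [zero_lt_iff] using hcK
  refine ⟨algebraMap A K a / algebraMap A K c, fun w hw => ?_, fun w hw => ?_⟩
  · have h1 := ha w (Finset.mem_union_left _ hw)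
    simp only [hw, if_true] at h1
    rw [← val_le_pow_iff (K := K)] at h1
    have : algebraMap A K a / algebraMap A K c - f w
        = algebraMap A K (a - b w) / algebraMap A K c := by
      rw [map_sub, hb w hw]; field_simp
    rw [this, map_div₀, div_le_iff₀ (hpos w)]
    refine h1.trans ?_
    have h2 := hN w (Finset.mem_union_left _ hw)
    calc exp (-((N + n : ℕ) : ℤ)) = exp (-(n : ℤ)) * exp (-(N : ℤ)) := by
          rw [← exp_add]; congr 1; push_cast; ring
      _ ≤ _ := by gcongr
  · by_cases hw' : w ∈ T'
    · have h1 := ha w hw'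
      simp only [hw, if_false, sub_zero] at h1
      rw [← val_le_pow_iff (K := K)] at h1
      rw [map_div₀, div_le_iff₀ (hpos w), one_mul]
      refine h1.trans (le_trans ?_ (hN w hw'))
      rw [exp_le_exp]; push_cast; omega
    · have h1 : w.valuation K (algebraMap A K c) = 1 := by
        refine le_antisymm (val_le_one w c) (not_lt.1 fun h => hw' ?_)
        exact Finset.mem_union_right _ (by simpa using h)
      rw [map_div₀, h1, div_one]
      exact val_le_one w a

lemma exp_neg_le_one (n : ℕ) : exp (-(n : ℤ)) ≤ 1 := by
  rw [← exp_zero, exp_le_exp]; omega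

theorem strong_approx_int (T : Finset (HeightOneSpectrum A)) (f : HeightOneSpectrum A → K) (n : ℕ)
    (hf : ∀ w ∈ T, w.valuation K (f w) ≤ 1) :
    ∃ a : A, (∀ w ∈ T, w.valuation K (algebraMap A K a - f w) ≤ exp (-(n : ℤ))) := by
  obtain ⟨a, ha, ha'⟩ := strong_approx T f n
  have : ∀ w : HeightOneSpectrum A, w.valuation K a ≤ 1 := by
    intro w
    by_cases hw : w ∈ T
    · have : a = (a - f w) + f w := by ring
      rw [this]
      exact Valuation.map_add_le _ ((ha w hw).trans (exp_neg_le_one n)) (hf w hw)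
    · exact ha' w hw
  obtain ⟨b, rfl⟩ := exists_int this
  exact ⟨b, ha⟩

/-- local-global principle for modules -/
lemma local_global (M : AddSubgroup K) (hM : ∀ m ∈ M, ∀ a : A, m * algebraMap A K a ∈ M)
    (hA : ∀ a : A, algebraMap A K a ∈ M) (g : K)
    (hg : ∀ w : HeightOneSpectrum A, ∃ c ∈ M, w.valuation K (g - c) ≤ 1) (hnf : ¬ IsField A) :
    g ∈ M := by
  let I : Ideal A :=
    { carrier := {b | g * algebraMap A K b ∈ M}
      zero_mem' := by simp [M.zero_mem]
      add_mem' := by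
        intro a b ha hb
        simp only [Set.mem_ofPred_eq, map_add, mul_add] at *
        exact M.add_mem ha hb
      smul_mem' := by
        intro c x hx
        simp only [Set.mem_ofPred_eq, smul_eq_mul, map_mul] at *
        rw [mul_left_comm, mul_comm]
        exact hM _ hx c }
  have hI : I = ⊤ := by
    by_contra hne
    obtain ⟨m, hm, hIm⟩ := Ideal.exists_le_maximal I hne
    let w : HeightOneSpectrum A := ⟨m, hm.isPrime, Ring.ne_bot_of_isMaximal_of_not_isField hm hnf⟩
    obtain ⟨c, hc, hgc⟩ := hg w
    obtain ⟨n, ⟨d, hd⟩, hnd⟩ := w.exists_primeCompl_mul_eq_of_integer _ hgc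
    apply hd
    apply hIm
    show g * algebraMap A K d ∈ M
    have : g * algebraMap A K d = algebraMap A K n + c * algebraMap A K d := by
      rw [← hnd]; ring
    rw [this]
    exact M.add_mem (hA n) (hM c hc d)
  have h1 : (1 : A) ∈ I := by rw [hI]; trivial
  have : g * algebraMap A K 1 ∈ M := h1
  simpa using this

end Ded

section Complete
open WithZero IsDedekindDomain

variable {A : Type*} [CommRing A] [IsDedekindDomain A] {K : Type*} [Field K] [Algebra A K]
  [IsFractionRing A K] [Ring.HasFiniteQuotients A]

lemma exists_unit_pow (η : Aˣ) {I : Ideal A} (hI : I ≠ ⊥) : ∃ i : ℕ, 0 < i ∧ ((η ^ i : Aˣ) : A) - 1 ∈ I := by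
  have := Ring.HasFiniteQuotients.finiteQuotient hI
  let u : (A ⧸ I)ˣ := Units.map (Ideal.Quotient.mk I).toMonoidHom η
  refine ⟨orderOf u, orderOf_pos u, ?_⟩
  rw [← Ideal.Quotient.eq_zero_iff_mem]
  have h := pow_orderOf_eq_one u
  have h2 := congrArg Units.val h
  simp only [Units.val_pow_eq_pow_val, Units.val_one, u] at h2
  simp only [Units.val_pow_eq_pow_val, map_sub, map_pow, map_one, sub_eq_zero]
  exact h2

lemma exists_recurrent (f : ℕ → A) {I : Ideal A} (hI : I ≠ ⊥) :
    ∃ k0 : ℕ, ∀ m : ℕ, ∃ k ≥ m, f k - f k0 ∈ I := by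
  have := Ring.HasFiniteQuotients.finiteQuotient hI
  obtain ⟨y, hy⟩ := Finite.exists_infinite_fiber (fun k => Ideal.Quotient.mk I (f k))
  have hinf : ((fun k => Ideal.Quotient.mk I (f k)) ⁻¹' {y}).Infinite := Set.infinite_coe_iff.1 hy
  obtain ⟨k0, hk0⟩ := hinf.nonempty
  refine ⟨k0, fun m => ?_⟩
  obtain ⟨k, hk, hkm⟩ := hinf.exists_gt m
  refine ⟨k, hkm.le, ?_⟩
  rw [← Ideal.Quotient.eq]
  exact (Set.mem_singleton_iff.1 hk).trans (Set.mem_singleton_iff.1 hk0).symm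

variable {p : ℕ} [hp : Fact p.Prime] [CharP A p]

/-- the arithmetic part: the elements `G` -/
lemma exists_G (η : Aˣ) (V : A) (hV : V ≠ 0) (c : A) (hVc : V = 1 + (1 - (η : A)) * c) (S : ℕ → Prop)
    (hS : ∀ m, ∃ k ≥ m, S k) :
    ∃ (k : ℕ) (n : ℕ) (G g' : A), S k ∧ G = 1 + (1 - (η : A)) * g' ∧
      1 - ((η ^ n : Aˣ) : A) = (1 - (η : A)) ^ p ^ k * V * G := by
  set U : A := 1 - (η : A) with hU
  obtain ⟨J0, hJ0, hJV⟩ := exists_unit_pow η (I := Ideal.span {V}) (by simpa using hV)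
  rw [Ideal.mem_span_singleton] at hJV
  obtain ⟨a, j0, hj0, hJ⟩ := Nat.exists_eq_pow_mul_and_not_dvd hJ0.ne' p hp.out.ne_one
  obtain ⟨k, hka, hk⟩ := hS a
  let j := j0 ^ (p - 1)
  have hjA : (j : A) = 1 := by
    have h1 : ((j0 : ZMod p)) ^ (p - 1) = 1 := by
      apply ZMod.pow_card_sub_one_eq_one
      rwa [Ne, ZMod.natCast_eq_zero_iff]
    have h2 : ((j : ℕ) : ZMod p) = ((1 : ℕ) : ZMod p) := by simp [j, h1]
    rw [ZMod.natCast_eq_natCast_iff] at h2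
    have := (CharP.natCast_eq_natCast A p).2 h2
    simpa using this
  let g : A := ∑ i ∈ Finset.range j, (η : A) ^ i
  have hgU : U * g = 1 - (η : A) ^ j := by
    rw [hU]; exact mul_neg_geom_sum _ _
  have hg1 : U ∣ g - 1 := by
    have : g - 1 = ∑ i ∈ Finset.range j, ((η : A) ^ i - 1) := by
      rw [Finset.sum_sub_distrib]; simp [g, hjA]
    rw [this]
    refine Finset.dvd_sum fun i _ => ?_
    have h := sub_one_dvd_pow_sub_one (η : A) i
    rw [hU, ← neg_sub (η : A) 1]
    exact (neg_dvd).2 h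
  have hUV : IsCoprime V U := ⟨1, -c, by rw [hVc]; ring⟩
  have hdiv : J0 ∣ j * p ^ k := by
    rw [hJ, mul_comm]
    exact mul_dvd_mul (dvd_pow_self _ (Nat.sub_ne_zero_of_lt hp.out.one_lt)) (pow_dvd_pow _ hka)
  have hpow : 1 - ((η ^ (j * p ^ k) : Aˣ) : A) = U ^ p ^ k * g ^ p ^ k := by
    rw [← mul_pow, hgU, sub_pow_char_pow, one_pow, ← pow_mul]
    simp
  have hVd : V ∣ U ^ p ^ k * g ^ p ^ k := by
    rw [← hpow]
    obtain ⟨l, hl⟩ := hdiv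
    rw [hl, ← neg_sub, dvd_neg, pow_mul]
    refine hJV.trans ?_
    rw [Units.val_pow_eq_pow_val (η ^ J0) l]
    exact sub_one_dvd_pow_sub_one _ _
  obtain ⟨G, hG⟩ := (IsCoprime.pow_right hUV).dvd_of_dvd_mul_left hVd
  have hG1 : U ∣ G - 1 := by
    have h1 : U ∣ g ^ p ^ k - 1 := hg1.trans (sub_one_dvd_pow_sub_one _ _)
    have h2 : G - 1 = (g ^ p ^ k - 1) - U * (c * G) := by rw [hG, hVc]; ring
    rw [h2]
    exact dvd_sub h1 (dvd_mul_right _ _)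
  obtain ⟨g', hg'⟩ := hG1
  refine ⟨k, j * p ^ k, G, g', hk, ?_, ?_⟩
  · rw [← hg']; ring
  · rw [hpow, hG]; ring

end Complete
end UnivDef


namespace UnivDef

set_option linter.unusedSectionVars false
set_option linter.unusedVariables false

section Complete2
open WithZero IsDedekindDomain

variable {A : Type*} [CommRing A] [IsDedekindDomain A] {K : Type*} [Field K] [Algebra A K]
  [IsFractionRing A K] [Ring.HasFiniteQuotients A]


lemma val_ge_of_lt {w : HeightOneSpectrum A} {x y : K} (h : w.valuation K (x - y) ≤ 1)
    (hy : 1 < w.valuation K y) : w.valuation K x = w.valuation K y := by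
  have : x = y + (x - y) := by ring
  rw [this]
  exact Valuation.map_add_eq_of_lt_left _ (lt_of_le_of_lt h hy)

theorem completeness (p : ℕ) [hp : Fact p.Prime] [CharP A p] (ε : Aˣ) (hε : ∀ n : ℕ, 0 < n → ε ^ n ≠ 1) (v : HeightOneSpectrum A)
    (d : ℕ) (hd : 1 ≤ d) (e : K) (he : ∀ w : HeightOneSpectrum A, w ≠ v → w.valuation K e ≤ 1)
    (hev : v.valuation K e ≤ exp (d : ℤ)) (hev1 : 1 < v.valuation K e) (y : K)
    (hy : v.valuation K y ≤ exp (-(2 * d : ℤ))) :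
    ∃ τa τb τ3 τ5 : K, τa ≠ 0 ∧ τb ≠ 0 ∧ τ3 ≠ 0 ∧ τ5 ≠ 0 ∧
      (∃ a : A, algebraMap A K a = τa - e) ∧ (∃ a : A, algebraMap A K a = τb - e) ∧
      (∃ a : A, algebraMap A K a = τ3 - e) ∧ (∃ a : A, algebraMap A K a = τ5 - e) ∧
      y = τa⁻¹ - τb⁻¹ + τ3⁻¹ * (τa⁻¹ - τ5⁻¹) := by
  classical
  have nz : ∀ τ : K, (∃ a : A, algebraMap A K a = τ - e) → τ ≠ 0 := by
    rintro τ ⟨a, ha⟩ rfl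
    have := val_le_one (K := K) v a
    rw [ha, zero_sub, Valuation.map_neg] at this
    exact absurd this (not_le.2 hev1)
  -- step 1
  obtain ⟨i, hi, hiv⟩ := exists_unit_pow ε (I := v.asIdeal ^ d) (pow_ne_zero _ v.ne_bot)
  set η : Aˣ := ε ^ i with hη
  set U : A := 1 - (η : A) with hU
  have hUv : U ∈ v.asIdeal ^ d := by
    rw [hU, ← neg_sub]; exact neg_mem hiv
  have hU0 : U ≠ 0 := by
    intro h
    rw [hU, sub_eq_zero] at h
    exact hε i hi (Units.ext (by rw [← hη]; exact h.symm))
  have hUK : algebraMap A K U ≠ 0 := by simpa using hU0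
  have hUvK : v.valuation K (algebraMap A K U) ≤ exp (-(d : ℤ)) := (val_le_pow_iff v U d).2 hUv
  have hUv1 : v.valuation K (algebraMap A K U) < 1 :=
    lt_of_le_of_lt hUvK (by rw [← exp_zero, exp_lt_exp]; omega)
  obtain ⟨u, hu⟩ : ∃ u : A, algebraMap A K u = algebraMap A K U * e := by
    apply exists_int
    intro w
    rw [map_mul]
    by_cases hw : w = v
    · subst hw
      calc _ ≤ exp (-(d : ℤ)) * exp (d : ℤ) := mul_le_mul' hUvK hev
        _ = 1 := by rw [← exp_add]; simp
    · exact mul_le_one' (val_le_one w U) (he w hw)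
  -- step 2
  have hTU := finite_zero_int (K := K) hU0
  obtain ⟨β, hβ⟩ := strong_approx_int hTU.toFinset
    (fun w => if w = v then (0 : K) else if w.valuation K y ≤ 1 then -e else 1 - e) 1 (by
      intro w _
      by_cases hw : w = v
      · simp [hw]
      · simp only [hw, if_false]
        split_ifs
        · rw [Valuation.map_neg]; exact he w hw
        · exact Valuation.map_sub_le _ (by simp) (he w hw))
  set τb : K := e + algebraMap A K β with hτb
  have hτbA : ∃ a : A, algebraMap A K a = τb - e := ⟨β, by rw [hτb]; ring⟩
  have hτbw : ∀ w : HeightOneSpectrum A, w ≠ v → w.valuation K τb ≤ 1 := fun w hw =>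
    Valuation.map_add_le _ (he w hw) (val_le_one w β)
  have hτbv : v.valuation K τb = v.valuation K e :=
    val_ge_of_lt (by rw [hτb, add_sub_cancel_left]; exact val_le_one v β) hev1
  set D : K := 1 + y * τb with hD
  have hyτ : v.valuation K (y * τb) ≤ exp (-(d : ℤ)) := by
    rw [map_mul, hτbv]
    calc _ ≤ exp (-(2 * d : ℤ)) * exp (d : ℤ) := mul_le_mul' hy hev
      _ = _ := by rw [← exp_add]; congr 1; ring
  have hDv : v.valuation K D = 1 := by
    rw [hD, Valuation.map_add_eq_of_lt_left _ (by
      rw [map_one]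
      exact lt_of_le_of_lt hyτ (by rw [← exp_zero, exp_lt_exp]; omega)), map_one]
  have hD0 : D ≠ 0 := by
    intro h; rw [h, map_zero] at hDv; exact zero_ne_one hDv
  have hDU : ∀ w : HeightOneSpectrum A, w.valuation K (algebraMap A K U) < 1 →
      1 ≤ w.valuation K D := by
    intro w hw
    by_cases hwv : w = v
    · rw [hwv, hDv]
    have h1 := hβ w (by simpa using hw)
    simp only [hwv, if_false] at h1
    have hlt : exp (-((1 : ℕ) : ℤ)) < 1 := by rw [← exp_zero, exp_lt_exp]; omega
    split_ifs at h1 with hyw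
    · have h2 : w.valuation K τb < 1 := by
        rw [sub_neg_eq_add, add_comm] at h1
        exact lt_of_le_of_lt h1 hlt
      have h3 : w.valuation K (y * τb) < 1 := by
        rw [map_mul]
        exact lt_of_le_of_lt (mul_le_of_le_one_left' hyw) h2
      rw [hD, Valuation.map_add_eq_of_lt_left _ (by rwa [map_one]), map_one]
    · have h2 : w.valuation K τb = 1 := by
        have : τb = 1 + (algebraMap A K β - (1 - e)) := by rw [hτb]; ring
        rw [this, Valuation.map_add_eq_of_lt_left _ (by
          rw [map_one]; exact lt_of_le_of_lt h1 hlt), map_one]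
      have h3 : 1 < w.valuation K (y * τb) := by
        rw [map_mul, h2, mul_one]; exact not_le.1 hyw
      rw [hD, Valuation.map_add_eq_of_lt_right _ (by rwa [map_one])]
      exact h3.le
  -- step 3
  have hTD := finite_zeros (A := A) hD0
  obtain ⟨N, hN⟩ := exists_val_lower (K := K) hTD.toFinset hD0
  obtain ⟨M, hM⟩ := exists_val_lower (K := K) hTU.toFinset hUK
  let I : Ideal A := ∏ w ∈ hTD.toFinset, w.asIdeal ^ N
  have hI : I ≠ ⊥ := Finset.prod_ne_zero_iff.2 fun w _ => pow_ne_zero _ w.ne_bot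
  obtain ⟨k0, hk0⟩ := exists_recurrent (fun k => U ^ p ^ k) hI
  have hUD : ∀ w ∈ hTD.toFinset, w.valuation K (algebraMap A K U) = 1 := by
    intro w hw
    refine le_antisymm (val_le_one w U) (not_lt.1 fun h => ?_)
    have h1 : w.valuation K D < 1 := by simpa using hw
    exact absurd (hDU w h) (not_le.2 h1)
  have hDneV : ∀ w ∈ hTD.toFinset, w ≠ v := by
    rintro w hw rfl
    have h1 := hUD w hw
    exact absurd h1 hUv1.ne
  obtain ⟨V, hV⟩ := strong_approx_int (hTD.toFinset ∪ hTU.toFinset)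
    (fun w => if w ∈ hTD.toFinset then -τb / algebraMap A K U ^ p ^ k0 else 1) (N + M) (by
      intro w _
      split_ifs with h
      · rw [map_div₀, map_pow, hUD w h, one_pow, div_one, Valuation.map_neg]
        exact hτbw w (hDneV w h)
      · simp)
  obtain ⟨c, hc⟩ : ∃ c : A, algebraMap A K c = (algebraMap A K V - 1) / algebraMap A K U := by
    apply exists_int
    intro w
    have hpos : 0 < w.valuation K (algebraMap A K U) := by simpa [zero_lt_iff] using hUK
    rw [map_div₀, div_le_iff₀ hpos, one_mul]
    by_cases hw : w.valuation K (algebraMap A K U) < 1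
    · have hw1 : w ∈ hTU.toFinset := by simpa using hw
      have hw2 : w ∉ hTD.toFinset := fun h => hw.ne (hUD w h)
      have h1 := hV w (Finset.mem_union_right _ hw1)
      simp only [hw2, if_false] at h1
      refine h1.trans (le_trans ?_ (hM w hw1))
      rw [exp_le_exp]; push_cast; omega
    · have hw1 : w.valuation K (algebraMap A K U) = 1 := le_antisymm (val_le_one w U) (not_lt.1 hw)
      rw [hw1]
      exact Valuation.map_sub_le _ (val_le_one w V) (by simp)
  have hVc : V = 1 + U * c := by
    apply IsFractionRing.injective A K
    rw [map_add, map_mul, map_one, hc]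
    field_simp
    ring
  have hV0 : V ≠ 0 := by
    rintro rfl
    have h1 : algebraMap A K U * algebraMap A K (-c) = 1 := by
      rw [← map_mul, ← map_one (algebraMap A K)]
      congr 1
      linear_combination hVc
    have h2 := congrArg (v.valuation K) h1
    rw [map_mul, map_one] at h2
    have := lt_of_le_of_lt (mul_le_of_le_one_right' (val_le_one (K := K) v (-c))) hUv1
    exact this.ne h2
  obtain ⟨k, n, G, g', hk, hG, hαG⟩ := exists_G (p := p) η V hV0 c hVc (fun k => U ^ p ^ k - U ^ p ^ k0 ∈ I) hk0
  rw [← hU] at hG hαG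
  set Φ : A := U ^ p ^ k * V with hΦ
  -- step 4
  set τa : K := (τb + algebraMap A K Φ) / D with hτa
  have hτaw : ∀ w : HeightOneSpectrum A, w ≠ v → w.valuation K τa ≤ 1 := by
    intro w hwv
    have hpos : 0 < w.valuation K D := by simpa [zero_lt_iff] using hD0
    rw [hτa, map_div₀, div_le_iff₀ hpos, one_mul]
    by_cases hw : w.valuation K D < 1
    · have hw1 : w ∈ hTD.toFinset := by simpa using hw
      refine le_trans ?_ (hN w hw1)
      have h1 := hV w (Finset.mem_union_left _ hw1)
      simp only [hw1, if_true] at h1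
      have e1 : τb + algebraMap A K Φ = algebraMap A K U ^ p ^ k0 *
          (algebraMap A K V - -τb / algebraMap A K U ^ p ^ k0)
          + algebraMap A K (U ^ p ^ k - U ^ p ^ k0) * algebraMap A K V := by
        rw [hΦ]
        simp only [map_sub, map_mul, map_pow]
        field_simp
        ring
      rw [e1]
      refine Valuation.map_add_le _ ?_ ?_
      · rw [map_mul, map_pow, hUD w hw1, one_pow, one_mul]
        refine h1.trans ?_
        rw [exp_le_exp]; push_cast; omega
      · rw [map_mul]
        have h2 : U ^ p ^ k - U ^ p ^ k0 ∈ w.asIdeal ^ N := by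
          have : I ≤ w.asIdeal ^ N := Ideal.le_of_dvd (Finset.dvd_prod_of_mem _ hw1)
          exact this hk
        have h3 := (val_le_pow_iff (K := K) w _ N).2 h2
        calc _ ≤ exp (-(N : ℤ)) * 1 := mul_le_mul' h3 (val_le_one w V)
          _ = _ := mul_one _
    · refine le_trans ?_ (not_lt.1 hw)
      exact Valuation.map_add_le _ (hτbw w hwv) (val_le_one w Φ)
  have hτaA : ∃ a : A, algebraMap A K a = τa - e := by
    apply exists_int
    intro w
    by_cases hwv : w = v
    · have e1 : τa - e = (algebraMap A K (β + Φ) - e * (y * τb)) / D := by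
        rw [hτa, map_add, eq_div_iff hD0, sub_mul, div_mul_cancel₀ _ hD0, hD, hτb]
        ring
      rw [hwv, e1, map_div₀, hDv, div_one]
      refine Valuation.map_sub_le _ (val_le_one v _) ?_
      rw [map_mul]
      calc _ ≤ exp (d : ℤ) * exp (-(d : ℤ)) := mul_le_mul' hev hyτ
        _ = 1 := by rw [← exp_add]; simp
    · exact Valuation.map_sub_le _ (hτaw w hwv) (he w hwv)
  obtain ⟨a0, ha0⟩ := hτaA
  set α : Aˣ := (η ^ n)⁻¹ with hα
  have hαη : (α : A) * ((η ^ n : Aˣ) : A) = 1 := by rw [hα]; exact Units.inv_mul _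
  have hα1 : ∃ b : A, (α : A) - 1 = U * b := by
    refine ⟨α * (U ^ (p ^ k - 1) * V * G), ?_⟩
    have : U ^ p ^ k = U * U ^ (p ^ k - 1) :=
      (mul_pow_sub_one (pow_ne_zero _ hp.out.ne_zero) U).symm
    calc (α : A) - 1 = α * (1 - ((η ^ n : Aˣ) : A)) := by rw [mul_sub, hαη, mul_one]
      _ = _ := by rw [hαG, hΦ, this]; ring
  obtain ⟨b, hb⟩ := hα1
  set τ5 : K := τa * algebraMap A K α with hτ5
  set τ3 : K := algebraMap A K G * τb with hτ3
  have hτ5A : ∃ a : A, algebraMap A K a = τ5 - e := by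
    refine ⟨α * a0 + b * u, ?_⟩
    rw [map_add, map_mul, map_mul, ha0, hu, hτ5]
    have : algebraMap A K α - 1 = algebraMap A K U * algebraMap A K b := by
      rw [← map_mul, ← hb, map_sub, map_one]
    linear_combination e * (-this)
  have hτ3A : ∃ a : A, algebraMap A K a = τ3 - e := by
    refine ⟨G * β + g' * u, ?_⟩
    rw [map_add, map_mul, map_mul, hu, hτ3, hτb]
    have : algebraMap A K G = 1 + algebraMap A K U * algebraMap A K g' := by
      rw [hG, map_add, map_mul, map_one]
    linear_combination (-e) * this
  have n0 := nz τa ⟨a0, ha0⟩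
  have n1 := nz τb hτbA
  have n3 := nz τ3 hτ3A
  have n5 := nz τ5 hτ5A
  refine ⟨τa, τb, τ3, τ5, n0, n1, n3, n5, ⟨a0, ha0⟩, hτbA, hτ3A, hτ5A, ?_⟩
  have hGK : algebraMap A K G ≠ 0 := fun h => n3 (by rw [hτ3, h, zero_mul])
  have hαK : algebraMap A K α ≠ 0 := fun h => n5 (by rw [hτ5, h, mul_zero])
  have e2 : (algebraMap A K α)⁻¹ = 1 - algebraMap A K Φ * algebraMap A K G := by
    apply inv_eq_of_mul_eq_one_right
    rw [← map_mul, ← hαG, ← map_one (algebraMap A K), ← map_sub, ← map_mul]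
    congr 1
    rw [sub_sub_cancel, hαη]
  have e3 : τa * D = τb + algebraMap A K Φ := by rw [hτa, div_mul_cancel₀ _ hD0]
  rw [hD] at e3
  rw [hτ5, hτ3, mul_inv τa, e2]
  clear_value τa τb Φ
  generalize algebraMap A K G = g at *
  generalize algebraMap A K Φ = φ at *
  have e4 : τa⁻¹ - τb⁻¹ + (g * τb)⁻¹ * (τa⁻¹ - τa⁻¹ * (1 - φ * g)) =
      (τb - τa + φ) * (τa⁻¹ * τb⁻¹) := by
    field_simp
    ring
  rw [e4, show τb - τa + φ = y * (τa * τb) by linear_combination -e3]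
  field_simp
end Complete2
end UnivDef


namespace UnivDef

set_option linter.unusedSectionVars false
set_option linter.unusedVariables false

section Core1
open WithZero IsDedekindDomain

variable (p : ℕ) [hp : Fact p.Prime] (K : Type*) [Field K] [CharP K p]
  [Algebra (Polynomial (ZMod p)) K]
  [Algebra (RatFunc (ZMod p)) K]
  [IsScalarTower (Polynomial (ZMod p)) (RatFunc (ZMod p)) K]
  [FiniteDimensional (RatFunc (ZMod p)) K] [Algebra.IsSeparable (RatFunc (ZMod p)) K]

lemma nonperf_of_sep : NonPerf p K := by
  refine ⟨co p K, fun x hx => ?_⟩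
  obtain ⟨a, ha⟩ := Algebra.trace_surjective (RatFunc (ZMod p)) K RatFunc.X
  obtain ⟨g, hg⟩ := exists_pdecomp (p := p) a
  have h1 : a = (∑ i, g i * x ^ (i : ℕ)) ^ p := by
    rw [sum_pow_char, hg]
    refine Finset.sum_congr rfl fun i _ => ?_
    rw [mul_pow, ← hx, ← pow_mul, ← pow_mul, mul_comm p]
  rw [h1, trace_pow] at ha
  generalize Algebra.trace (RatFunc (ZMod p)) K (∑ i, g i * x ^ (i : ℕ)) = f at ha
  have h2 := congrArg (vi p) ha
  rw [map_pow, vi_X] at h2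
  have h0 : vi p f ≠ 0 := by
    intro h
    rw [h, zero_pow hp.out.ne_zero] at h2
    exact exp_ne_zero h2.symm
  rw [← exp_log h0, ← exp_nsmul, exp_inj, nsmul_eq_mul] at h2
  have := Int.eq_one_or_neg_one_of_mul_eq_one h2
  have := hp.out.two_le
  omega

/-- finite set of representatives -/
noncomputable def CC : Set K := Classical.choose (finiteness p K)

/-- the existentially definable replacement for the trace dual -/
def ZZ : Set K := {f | ∃ c ∈ CC p K, ∃ σ : Fin p → K, f = c + zeta σ}

lemma CC_finite : (CC p K).Finite := (Classical.choose_spec (finiteness p K)).1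
lemma CC_AD : CC p K ⊆ AD p K := (Classical.choose_spec (finiteness p K)).2.1
variable {p K}
lemma AD_ZZ {f : K} (hf : f ∈ AD p K) : f ∈ ZZ p K :=
  (Classical.choose_spec (finiteness p K)).2.2 f hf
variable (p K)

lemma ZZ_dio : Dio1 (ZZ p K) := by
  apply Dio1.mk
  have h : Dio (fun x : Unit → K => ∃ c ∈ (CC_finite p K).toFinset, ∃ σ : Fin p → K,
      x () = c + zeta σ) := by
    apply Dio.exists_finset
    intro c _
    apply Dio.ex
    apply Dio.eq (IsPoly.var _)
    refine IsPoly.add (IsPoly.const c) ?_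
    unfold zeta
    exact IsPoly.sub (IsPoly.sum _ fun i => ((IsPoly.var _).pow _).mul (IsPoly.const _)) (IsPoly.var _)
  exact h.congr fun x => by simp [ZZ]

/-- certificates -/
def Cert (e y : K) : Prop := ∃ τ b : Fin 4 → K, (∀ i, b i * τ i = 1) ∧ (∀ i, τ i - e ∈ ZZ p K) ∧
  y = b 0 - b 1 + b 2 * (b 0 - b 3)

variable {K} in
lemma Dio.cert {ι : Type} {e y : (ι → K) → K} (he : IsPoly e) (hy : IsPoly y) :
    Dio (fun x => Cert p K (e x) (y x)) := by
  have hn := nonperf_of_sep p K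
  have h : Dio (fun x : Fin 2 → K => Cert p K (x 0) (x 1)) := by
    unfold Cert
    apply Dio.ex
    apply Dio.ex
    apply Dio.and hn hp.out.ne_zero
    · have : Dio (fun z : (Fin 2 ⊕ Fin 4) ⊕ Fin 4 → K => ∀ i ∈ (Finset.univ : Finset (Fin 4)),
        z (Sum.inr i) * z (Sum.inl (Sum.inr i)) = 1) :=
        Dio.forall_finset hn hp.out.ne_zero _ fun i _ =>
          Dio.eq ((IsPoly.var _).mul (IsPoly.var _)) (IsPoly.const _)
      exact this.congr fun x => by simp
    apply Dio.and hn hp.out.ne_zero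
    · have : Dio (fun z : (Fin 2 ⊕ Fin 4) ⊕ Fin 4 → K => ∀ i ∈ (Finset.univ : Finset (Fin 4)),
        z (Sum.inl (Sum.inr i)) - z (Sum.inl (Sum.inl 0)) ∈ ZZ p K) :=
        Dio.forall_finset hn hp.out.ne_zero _ fun i _ =>
          Dio.mem (ZZ_dio p K) ((IsPoly.var _).sub (IsPoly.var _))
      exact this.congr fun x => by simp
    · exact Dio.eq (IsPoly.var _) (((IsPoly.var _).sub (IsPoly.var _)).add
        ((IsPoly.var _).mul ((IsPoly.var _).sub (IsPoly.var _))))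
  exact (h.comp (g := fun j => if j = 0 then e else y) (by
    intro j; split_ifs <;> assumption)).congr fun x => by simp

variable (A : Type*) [CommRing A] [IsDedekindDomain A] [Algebra A K]
  [IsFractionRing A K]

lemma zeta_integral (hA : ∀ x : K, IsIntegral (Polynomial (ZMod p)) x ↔ ∃ a : A, algebraMap A K a = x)
    (w : HeightOneSpectrum A) (σ : Fin p → K) (hσ : ∀ i, w.valuation K (σ i) ≤ 1) :
    w.valuation K (zeta σ) ≤ 1 := by
  have hs : w.valuation K (co p K) ≤ 1 := by
    obtain ⟨a, ha⟩ := (hA (co p K)).1 isIntegral_algebraMap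
    rw [← ha]; exact val_le_one w a
  unfold zeta
  refine Valuation.map_sub_le _ ?_ (hσ _)
  refine Valuation.map_sum_le _ fun i _ => ?_
  rw [map_mul, map_pow, map_pow]
  exact mul_le_one' (pow_le_one' (hσ i) _) (pow_le_one' hs _)

theorem soundness (hnf : ¬ IsField A)
    (hA : ∀ x : K, IsIntegral (Polynomial (ZMod p)) x ↔ ∃ a : A, algebraMap A K a = x)
    {ι : Type*} (f : ι → K) (f0 : K) (hf : ∀ i, f i - f0 ∈ ZZ p K) (hf0 : f0 ∉ HH p K) :
    ∃ w : HeightOneSpectrum A, ∀ i, 1 < w.valuation K (f i) := by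
  by_contra hcon
  push Not at hcon
  choose i hi using hcon
  choose c hc σ hσ using fun w => hf (i w)
  have hT := finite_poles (A := A) f0
  choose ρ hρ hρ' using fun j => strong_approx hT.toFinset (fun w => - σ w j) 0
  have hg : f0 - zeta ρ ∈ AD p K := by
    apply local_global (A := A)
    · intro m hm a
      exact AD_mul hm ((hA _).2 ⟨a, rfl⟩)
    · intro a
      exact integral_mem_AD ((hA _).2 ⟨a, rfl⟩)
    · intro w
      by_cases hw : w ∈ hT.toFinset
      · refine ⟨- c w, neg_mem (CC_AD p K (hc w)), ?_⟩
        have e1 : f0 - zeta ρ - - c w = f (i w) - zeta (fun j => ρ j + σ w j) := by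
          rw [zeta_add]
          linear_combination -hσ w
        rw [e1]
        refine Valuation.map_sub_le _ (hi w) (zeta_integral p K A hA w _ fun j => ?_)
        simpa using hρ j w hw
      · refine ⟨0, zero_mem _, ?_⟩
        rw [sub_zero]
        refine Valuation.map_sub_le _ ?_ (zeta_integral p K A hA w _ fun j => hρ' j w hw)
        simpa using hw
    · exact hnf
  apply hf0
  have := add_mem (AD_mem_HH hg) (zeta_mem_HH ρ)
  simpa using this

theorem cert_sound (hnf : ¬ IsField A)
    (hA : ∀ x : K, IsIntegral (Polynomial (ZMod p)) x ↔ ∃ a : A, algebraMap A K a = x)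
    {e y : K} (he : e ∉ HH p K) (h : Cert p K e y) :
    ∃ w : HeightOneSpectrum A, 1 < w.valuation K e ∧ w.valuation K y < 1 := by
  obtain ⟨τ, b, hb, hτ, hy⟩ := h
  obtain ⟨w, hw⟩ := soundness p K A hnf hA (fun i : Option (Fin 4) => i.elim e τ) e
    (by
      rintro (_ | i)
      · simpa using AD_ZZ (zero_mem _)
      · exact hτ i) he
  have hbw : ∀ i, w.valuation K (b i) < 1 := by
    intro i
    have h1 := congrArg (w.valuation K) (hb i)
    rw [map_mul, map_one] at h1
    have h2 : 1 < w.valuation K (τ i) := hw (some i)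
    by_contra h3
    have h4 := mul_le_mul' (not_lt.1 h3) (le_refl (w.valuation K (τ i)))
    rw [h1, one_mul] at h4
    exact absurd h2 (not_lt.2 h4)
  refine ⟨w, hw none, ?_⟩
  rw [hy]
  have sub_lt : ∀ x z : K, w.valuation K x < 1 → w.valuation K z < 1 → w.valuation K (x - z) < 1 :=
    fun x z hx hz => Valuation.map_sub_lt _ hx hz
  refine Valuation.map_add_lt _ (sub_lt _ _ (hbw _) (hbw _)) ?_
  rw [map_mul]
  exact lt_of_le_of_lt (mul_le_of_le_one_left' (hbw 2).le) (sub_lt _ _ (hbw _) (hbw _))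

theorem cert_complete [Ring.HasFiniteQuotients A] 
    (hA : ∀ x : K, IsIntegral (Polynomial (ZMod p)) x ↔ ∃ a : A, algebraMap A K a = x)
    (ε : Aˣ) (hε : ∀ n : ℕ, 0 < n → ε ^ n ≠ 1) (v : HeightOneSpectrum A)
    (d : ℕ) (hd : 1 ≤ d) (e : K) (he : ∀ w : HeightOneSpectrum A, w ≠ v → w.valuation K e ≤ 1)
    (hev : v.valuation K e ≤ exp (d : ℤ)) (hev1 : 1 < v.valuation K e) (y : K)
    (hy : v.valuation K y ≤ exp (-(2 * d : ℤ))) (e' : K) (he' : IsIntegral (Polynomial (ZMod p)) (e - e')) :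
    Cert p K e' y := by
  have : CharP A p := (RingHom.charP_iff _ (IsFractionRing.injective A K) p).2 inferInstance
  obtain ⟨τa, τb, τ3, τ5, n0, n1, n3, n5, h0, h1, h3, h5, h⟩ :=
    completeness p ε hε v d hd e he hev hev1 y hy
  have key : ∀ τ : K, (∃ a : A, algebraMap A K a = τ - e) → τ - e' ∈ ZZ p K := by
    intro τ hτ
    have : τ - e' = (τ - e) + (e - e') := by ring
    rw [this]
    exact AD_ZZ (integral_mem_AD (((hA _).2 hτ).add he'))
  refine ⟨![τa, τb, τ3, τ5], ![τa⁻¹, τb⁻¹, τ3⁻¹, τ5⁻¹], ?_, ?_, ?_⟩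
  · intro i
    fin_cases i
    · exact inv_mul_cancel₀ n0
    · exact inv_mul_cancel₀ n1
    · exact inv_mul_cancel₀ n3
    · exact inv_mul_cancel₀ n5
  · intro i
    fin_cases i
    · exact key _ h0
    · exact key _ h1
    · exact key _ h3
    · exact key _ h5
  · simpa using h

theorem exists_e [Ring.HasFiniteQuotients A] (hA : ∀ x : K, IsIntegral (Polynomial (ZMod p)) x ↔ ∃ a : A, algebraMap A K a = x) :
    ∃ d : ℕ, 1 ≤ d ∧ ∀ v : HeightOneSpectrum A, ∃ e : K, e ∉ HH p K ∧
      (∀ w : HeightOneSpectrum A, w ≠ v → w.valuation K e ≤ 1) ∧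
      v.valuation K e ≤ exp (d : ℤ) ∧ 1 < v.valuation K e := by
  obtain ⟨h, h0, hi, hh⟩ := exists_denominator p K
  have hT := finite_zeros (A := A) h0
  obtain ⟨N, hN⟩ := exists_val_lower hT.toFinset h0
  have hN' : ∀ w : HeightOneSpectrum A, exp (-(N : ℤ)) ≤ w.valuation K h := by
    intro w
    by_cases hw : w.valuation K h < 1
    · exact hN w (by simpa using hw)
    · exact (exp_neg_le_one N).trans (not_lt.1 hw)
  refine ⟨N + 1, by omega, fun v => ?_⟩
  have key : ∃ e : K, e ∉ HH p K ∧ (∀ w : HeightOneSpectrum A, w ≠ v → w.valuation K e ≤ 1) ∧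
      v.valuation K e ≤ exp ((N + 1 : ℕ) : ℤ) := by
    by_contra hcon
    push Not at hcon
    obtain ⟨π, hπ⟩ := v.valuation_exists_uniformizer K
    have hv : v.valuation K (π⁻¹ ^ (N + 1)) = exp ((N + 1 : ℕ) : ℤ) := by
      rw [map_pow, map_inv₀, hπ, ← exp_neg, ← exp_nsmul]
      simp
    obtain ⟨f, hf, hf'⟩ := strong_approx {v} (fun _ => π⁻¹ ^ (N + 1)) 0
    have hfv : v.valuation K f = exp ((N + 1 : ℕ) : ℤ) := by
      rw [← hv]
      refine val_ge_of_lt (by simpa using hf v (by simp)) ?_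
      rw [hv, ← exp_zero, exp_lt_exp]; omega
    have hfw : ∀ w : HeightOneSpectrum A, w ≠ v → w.valuation K f ≤ 1 := fun w hw =>
      hf' w (by simpa using hw)
    have hAD : f ∈ AD p K := by
      apply mem_AD_of
      intro a ha
      by_contra hcon2
      obtain ⟨a, rfl⟩ := (hA a).1 ha
      refine absurd (hcon _ hcon2 fun w hw => ?_) (not_lt.2 ?_)
      · rw [map_mul]
        exact mul_le_one' (hfw w hw) (val_le_one w a)
      · rw [map_mul, hfv]
        exact mul_le_of_le_one_right' (val_le_one v a)
    obtain ⟨b, hb⟩ := (hA _).1 (hh f hAD)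
    have h1 := val_le_one (K := K) v b
    rw [hb, map_mul, hfv] at h1
    have h2 := (mul_le_mul' (le_refl (exp ((N + 1 : ℕ) : ℤ))) (hN' v)).trans h1
    rw [← exp_add, ← exp_zero, exp_le_exp] at h2
    push_cast at h2
    omega
  obtain ⟨e, he, he1, he2⟩ := key
  refine ⟨e, he, he1, he2, ?_⟩
  by_contra hle
  obtain ⟨a, ha⟩ := exists_int (A := A) (x := e) fun w => by
    by_cases hw : w = v
    · rw [hw]; exact not_lt.1 hle
    · exact he1 w hw
  exact he (AD_mem_HH (integral_mem_AD ((hA e).2 ⟨a, ha⟩)))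

/-- local result -/
theorem local_W [Ring.HasFiniteQuotients A] (hnf : ¬ IsField A)
    (hA : ∀ x : K, IsIntegral (Polynomial (ZMod p)) x ↔ ∃ a : A, algebraMap A K a = x)
    (ε : Aˣ) (hε : ∀ n : ℕ, 0 < n → ε ^ n ≠ 1) (v : HeightOneSpectrum A) :
    ∃ (W : Set K) (d : ℕ), Dio1 W ∧ (∀ y : K, v.valuation K y ≤ exp (-(d : ℤ)) → y ∈ W) ∧
      ∀ y ∈ W, v.valuation K y < 1 := by
  obtain ⟨d, hd, hd'⟩ := exists_e p K A hA
  obtain ⟨e, he, he1, he2, he3⟩ := hd' v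
  refine ⟨{y | Cert p K e y}, 2 * d, ?_, ?_, ?_⟩
  · exact Dio.cert p (IsPoly.const e) (IsPoly.var ())
  · intro y hy
    refine cert_complete p K A hA ε hε v d hd e he1 he2 he3 y ?_ e ?_
    · simpa using hy
    · simpa using isIntegral_zero
  · intro y hy
    obtain ⟨w, hw1, hw2⟩ := cert_sound p K A hnf hA he hy
    by_cases hw : w = v
    · rwa [← hw]
    · exact absurd hw1 (not_lt.2 (he1 w hw))

end Core1
end UnivDef


namespace UnivDef

set_option linter.unusedSectionVars false
set_option linter.unusedVariables false

section Sep
open Polynomial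

variable {p : ℕ} [hp : Fact p.Prime] {K : Type*} [Field K] [CharP K p]

lemma no_rel (s : K) (hs : ∀ x : K, x ^ p ≠ s) (l : Fin p → K) (x : K)
    (h : x ^ p = ∑ i, l i ^ p * s ^ (i : ℕ)) (i : Fin p) (hi : (i : ℕ) ≠ 0) : l i = 0 := by
  let F := (frobenius K p).fieldRange
  have memF : ∀ z : K, z ^ p ∈ F := fun z => ⟨z, by simp [frobenius_def]⟩
  have hirr : Irreducible (X ^ p - C (⟨s ^ p, memF s⟩ : F)) := by
    apply X_pow_sub_C_irreducible_of_prime hp.out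
    rintro ⟨b, ⟨z, rfl⟩⟩ hb
    have := congrArg Subtype.val hb
    simp only [frobenius_def, SubmonoidClass.mk_pow] at this
    exact hs z (frobenius_inj K p (by simpa [frobenius_def] using this))
  have hmin : X ^ p - C (⟨s ^ p, memF s⟩ : F) = minpoly F s := by
    apply minpoly.eq_of_irreducible_of_monic hirr
    · simp only [map_sub, map_pow, aeval_X, aeval_C]
      exact sub_self _
    · exact monic_X_pow_sub_C _ hp.out.ne_zero
  let q : F[X] := ∑ i : Fin p, C (⟨l i ^ p, memF _⟩ : F) * X ^ (i : ℕ) - C ⟨x ^ p, memF x⟩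
  have hq0 : aeval s q = 0 := by
    simp only [q, map_sub, map_sum, map_mul, map_pow, aeval_X, aeval_C]
    rw [sub_eq_zero]
    exact h.symm
  have hdeg : q.degree < p := by
    refine lt_of_le_of_lt (degree_sub_le _ _) (max_lt ?_ ?_)
    · refine lt_of_le_of_lt (degree_sum_le _ _) ?_
      rw [Finset.sup_lt_iff (by exact WithBot.bot_lt_coe p)]
      intro j _
      refine lt_of_le_of_lt (degree_C_mul_X_pow_le _ _) ?_
      exact_mod_cast j.2
    · refine lt_of_le_of_lt degree_C_le ?_
      exact_mod_cast hp.out.pos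
  have hqz : q = 0 := by
    by_contra hne
    have := minpoly.degree_le_of_ne_zero F s hne hq0
    rw [← hmin, degree_X_pow_sub_C hp.out.pos] at this
    exact absurd hdeg (not_lt.2 this)
  have hc := congrArg (fun r => coeff r (i : ℕ)) hqz
  simp only [q, coeff_sub, finsetSum_coeff, coeff_C_mul, coeff_X_pow, coeff_C, hi, if_false, sub_zero,
    coeff_zero] at hc
  rw [Finset.sum_eq_single i (by
    intro j _ hj
    rw [if_neg (fun h => hj (Fin.ext h.symm)), mul_zero]) (by simp)] at hc
  simp only [if_true, mul_one] at hc
  have h2 := congrArg Subtype.val hc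
  exact pow_eq_zero_iff hp.out.ne_zero |>.1 h2

variable [Algebra (Polynomial (ZMod p)) K]
  [Algebra (RatFunc (ZMod p)) K]
  [IsScalarTower (Polynomial (ZMod p)) (RatFunc (ZMod p)) K]
  [FiniteDimensional (RatFunc (ZMod p)) K]

theorem sep_of (hs : ∀ x : K, x ^ p ≠ co p K) : Algebra.IsSeparable (RatFunc (ZMod p)) K := by
  rw [← separableClosure.eq_top_iff]
  set L := separableClosure (RatFunc (ZMod p)) K with hL
  have key : ∀ x : K, x ^ p ∈ L → x ∈ L := by
    intro x hx
    have : CharP L p := (RingHom.charP_iff _ (algebraMap L K).injective p).2 inferInstance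
    let : Algebra (Polynomial (ZMod p)) L :=
      ((algebraMap (RatFunc (ZMod p)) L).comp (algebraMap (Polynomial (ZMod p)) (RatFunc (ZMod p)))).toAlgebra
    have : IsScalarTower (Polynomial (ZMod p)) (RatFunc (ZMod p)) L := IsScalarTower.of_algebraMap_eq fun _ => rfl
    obtain ⟨g, hg⟩ := exists_pdecomp (p := p) (K := L) ⟨x ^ p, hx⟩
    have hg' := congrArg (algebraMap L K) hg
    have hco : algebraMap L K (co p L) = co p K := by
      rw [co_eq, co_eq]; rfl
    simp only [map_sum, map_mul, map_pow, hco] at hg'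
    have h0 := no_rel (co p K) hs (fun i => algebraMap L K (g i)) x hg'
    have hp0 : 0 < p := hp.out.pos
    rw [Finset.sum_eq_single (⟨0, hp0⟩ : Fin p) (by
      intro j _ hj
      have h1 := h0 j (fun h => hj (Fin.ext h))
      rw [h1, zero_pow hp.out.ne_zero, zero_mul]) (by simp)] at hg'
    simp only [pow_zero, mul_one] at hg'
    have h3 : x = algebraMap L K (g ⟨0, hp0⟩) := frobenius_inj K p hg'
    rw [h3]
    exact (g ⟨0, hp0⟩).2
  have : ExpChar (RatFunc (ZMod p)) p := ExpChar.prime hp.out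
  have hpi := separableClosure.isPurelyInseparable (RatFunc (ZMod p)) K
  have : ExpChar L p := expChar_of_injective_algebraMap (algebraMap (RatFunc (ZMod p)) L).injective p
  rw [eq_top_iff]
  intro x _
  obtain ⟨n, y, hy⟩ := IsPurelyInseparable.pow_mem L p x
  have : ∀ n : ℕ, ∀ x : K, x ^ p ^ n ∈ L → x ∈ L := by
    intro n
    induction n with
    | zero => intro x hx; simpa using hx
    | succ n ih =>
      intro x hx
      apply ih
      apply key
      rwa [← pow_mul, ← pow_succ]
  exact this n x (by rw [← hy]; exact y.2)

end Sep
end UnivDef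


namespace UnivDef

set_option linter.unusedSectionVars false
set_option linter.unusedVariables false

section Setup
open Polynomial

variable {p : ℕ} [hp : Fact p.Prime] {K : Type*} [Field K] [CharP K p] [Algebra (ZMod p) K]

variable (p K) in
/-- `K` is a function field in one variable over the prime field -/
def GF : Prop := ∀ s : K, Transcendental (ZMod p) s → FiniteDimensional (IntermediateField.adjoin (ZMod p) {s}) K

theorem setup (hK : GF p K) (s : K) (hs : Transcendental (ZMod p) s) (hs' : ∀ x : K, x ^ p ≠ s) :
    ∃ (_ : Algebra (Polynomial (ZMod p)) K) (_ : Algebra (RatFunc (ZMod p)) K)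
      (_ : IsScalarTower (Polynomial (ZMod p)) (RatFunc (ZMod p)) K)
      (_ : FiniteDimensional (RatFunc (ZMod p)) K)
      (_ : Algebra.IsSeparable (RatFunc (ZMod p)) K), co p K = s := by
  let e := RatFunc.algEquivOfTranscendental s hs
  let i1 : Algebra (Polynomial (ZMod p)) K := (aeval s : (ZMod p)[X] →ₐ[ZMod p] K).toRingHom.toAlgebra
  let i2 : Algebra (RatFunc (ZMod p)) K :=
    ((algebraMap (IntermediateField.adjoin (ZMod p) {s}) K).comp e.toRingEquiv.toRingHom).toAlgebra
  have i3 : IsScalarTower (Polynomial (ZMod p)) (RatFunc (ZMod p)) K := by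
    apply IsScalarTower.of_algebraMap_eq
    intro q
    show aeval s q = algebraMap (IntermediateField.adjoin (ZMod p) {s}) K (e (algebraMap _ _ q))
    simp only [e, RatFunc.algEquivOfTranscendental_algebraMap]
    rw [← aeval_algebraMap_apply]
    rfl
  have i4 : FiniteDimensional (RatFunc (ZMod p)) K := by
    have := hK s hs
    have h1 : (algebraMap (IntermediateField.adjoin (ZMod p) {s}) K).Finite := by
      rw [RingHom.finite_algebraMap]; exact this
    have h2 : (e.toRingEquiv.toRingHom).Finite := RingHom.Finite.of_surjective _ e.surjective
    have h3 := h1.comp h2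
    exact h3
  have hco : co p K = s := by
    show aeval s X = s
    simp
  have i5 := sep_of (p := p) (K := K) (by rw [hco]; exact hs')
  exact ⟨i1, i2, i3, i4, i5, hco⟩

variable (p) in
/-- integrality over `𝔽_p[s]` -/
def IntOver (s x : K) : Prop := IsIntegral (Algebra.adjoin (ZMod p) {s}) x

lemma isIntegral_iff_intOver [Algebra (Polynomial (ZMod p)) K] {s : K} (h : co p K = s) (x : K) :
    IsIntegral (Polynomial (ZMod p)) x ↔ IntOver p s x := by
  have hmap : algebraMap (Polynomial (ZMod p)) K =
      (aeval s : (ZMod p)[X] →ₐ[ZMod p] K).toRingHom := by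
    apply Polynomial.ringHom_ext'
    · exact Subsingleton.elim _ _
    · show co p K = _
      simp [h]
  let f : (ZMod p)[X] →+* Algebra.adjoin (ZMod p) {s} :=
    (aeval (⟨s, Algebra.self_mem_adjoin_singleton _ _⟩ : Algebra.adjoin (ZMod p) {s}) :
      (ZMod p)[X] →ₐ[ZMod p] _).toRingHom
  have hf : (algebraMap (Algebra.adjoin (ZMod p) {s}) K).comp f = algebraMap (Polynomial (ZMod p)) K := by
    rw [hmap]
    apply Polynomial.ringHom_ext'
    · exact Subsingleton.elim _ _
    · simp [f]
  have hsurj : Function.Surjective f := by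
    rintro ⟨y, hy⟩
    rw [Algebra.adjoin_singleton_eq_range_aeval] at hy
    obtain ⟨q, rfl⟩ := hy
    refine ⟨q, Subtype.ext ?_⟩
    have := congrArg (fun g => g q) hf
    rw [hmap] at this
    exact this
  unfold IntOver IsIntegral
  rw [← hf]
  constructor
  · rintro ⟨q, hq, hq0⟩
    refine ⟨q.map f, hq.map f, ?_⟩
    rw [eval₂_map]; exact hq0
  · rintro ⟨q, hq, hq0⟩
    obtain ⟨r, hr, -, hr'⟩ := lifts_and_natDegree_eq_and_monic
      ((mem_lifts q).2 (map_surjective f hsurj q)) hq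
    refine ⟨r, hr', ?_⟩
    rw [← eval₂_map, hr]; exact hq0

instance polyFQ : Ring.HasFiniteQuotients (Polynomial (ZMod p)) where
  finiteQuotient {I} hI := by
    obtain ⟨q, hq, hq0⟩ := Submodule.exists_mem_ne_zero_of_ne_bot hI
    have := (finite_poly_deg (p := p) q.natDegree).to_subtype
    refine Finite.of_surjective (fun r : {r : (ZMod p)[X] | r.natDegree ≤ q.natDegree} =>
      Ideal.Quotient.mk I r.1) ?_
    intro x
    obtain ⟨r, rfl⟩ := Ideal.Quotient.mk_surjective x
    refine ⟨⟨r % q, ?_⟩, ?_⟩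
    · exact natDegree_le_natDegree (EuclideanDomain.mod_lt r hq0).le
    · rw [Ideal.Quotient.eq]
      have h : r % q - r = q * (-(r / q)) := by
        linear_combination (EuclideanDomain.div_add_mod r q)
      simp only [h]
      exact I.mul_mem_right _ hq

variable [Algebra (Polynomial (ZMod p)) K]
  [Algebra (RatFunc (ZMod p)) K]
  [IsScalarTower (Polynomial (ZMod p)) (RatFunc (ZMod p)) K]
  [FiniteDimensional (RatFunc (ZMod p)) K] [Algebra.IsSeparable (RatFunc (ZMod p)) K]

variable (p K) in
/-- the ring of integers -/
noncomputable abbrev RI := FunctionField.ringOfIntegers (ZMod p) K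

instance RI_FQ : Ring.HasFiniteQuotients (RI p K) :=
  have : Module.Finite (Polynomial (ZMod p)) (RI p K) := by
    have : IsNoetherian (Polynomial (ZMod p)) (RI p K) := inferInstance
    infer_instance
  Ring.HasFiniteQuotients.of_module_finite (Polynomial (ZMod p)) _


lemma RI_nf : ¬ IsField (RI p K) := FunctionField.ringOfIntegers.not_isField (ZMod p) K

lemma RI_iff (x : K) : IsIntegral (Polynomial (ZMod p)) x ↔ ∃ a : RI p K, algebraMap (RI p K) K a = x :=
  IsIntegralClosure.isIntegral_iff

end Setup
end UnivDef


namespace UnivDef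

set_option linter.unusedSectionVars false
set_option linter.unusedVariables false

section Local
open Polynomial WithZero IsDedekindDomain

variable {p : ℕ} [hp : Fact p.Prime] {K : Type*} [Field K] [CharP K p] [Algebra (ZMod p) K]

lemma coordS (t : K) (ht : Transcendental (ZMod p) t) (ht' : ∀ x : K, x ^ p ≠ t) :
    Transcendental (ZMod p) (t ^ p + t⁻¹) ∧ (∀ x : K, x ^ p ≠ t ^ p + t⁻¹) ∧
      IntOver p (t ^ p + t⁻¹) t ∧ IntOver p (t ^ p + t⁻¹) t⁻¹ := by
  have ht0 : t ≠ 0 := by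
    rintro rfl
    exact ht (isAlgebraic_zero)
  set s := t ^ p + t⁻¹ with hs
  have h1 : IntOver p s t := by
    let s' : Algebra.adjoin (ZMod p) {s} := ⟨s, Algebra.self_mem_adjoin_singleton _ _⟩
    refine ⟨X ^ (p + 1) - C s' * X + C 1, ?_, ?_⟩
    · have : (X ^ (p + 1) - C s' * X + C 1 : (Algebra.adjoin (ZMod p) {s})[X]) =
        X ^ (p + 1) + (- (C s') * X + C 1) := by ring
      rw [this]
      refine monic_X_pow_add ?_
      rw [← C_neg]
      refine lt_of_le_of_lt degree_linear_le ?_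
      exact_mod_cast Nat.lt_add_of_pos_left hp.out.pos
    · simp only [eval₂_add, eval₂_sub, eval₂_mul, eval₂_pow, eval₂_X, eval₂_C, eval₂_one, map_one]
      have : algebraMap (Algebra.adjoin (ZMod p) {s}) K s' = s := rfl
      rw [this, hs]
      field_simp
      ring
  have hs1 : IntOver p s s := by
    have := isIntegral_algebraMap (R := Algebra.adjoin (ZMod p) {s}) (A := K)
      (x := ⟨s, Algebra.self_mem_adjoin_singleton _ _⟩)
    exact this
  have h2 : IntOver p s t⁻¹ := by
    have : t⁻¹ = s - t ^ p := by rw [hs]; ring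
    rw [this]
    exact IsIntegral.sub hs1 (IsIntegral.pow h1 p)
  refine ⟨?_, ?_, h1, h2⟩
  · intro halg
    have hi : IsIntegral (ZMod p) s := halg.isIntegral
    have : Algebra.IsIntegral (ZMod p) (Algebra.adjoin (ZMod p) {s}) :=
      Algebra.IsIntegral.adjoin (by simpa using hi)
    exact ht (isIntegral_trans (R := ZMod p) (A := Algebra.adjoin (ZMod p) {s}) t h1).isAlgebraic
  · intro x hx
    apply ht' (x - t)⁻¹
    rw [inv_pow, sub_pow_char, hx, hs, add_sub_cancel_left, inv_inv]

/-- choose a coordinate which is a unit -/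
lemma coord_unit (w : Valuation K ℤᵐ⁰) (t : K) (ht : Transcendental (ZMod p) t)
    (ht' : ∀ x : K, x ^ p ≠ t) :
    ∃ t1 : K, Transcendental (ZMod p) t1 ∧ (∀ x : K, x ^ p ≠ t1) ∧ w t1 = 1 := by
  have one_alg : IsAlgebraic (ZMod p) (1 : K) := isAlgebraic_one
  rcases lt_trichotomy (w t) 1 with h | h | h
  · refine ⟨1 + t, ?_, ?_, ?_⟩
    · intro h1
      apply ht
      simpa using h1.sub one_alg
    · intro x hx
      apply ht' (x - 1)
      rw [sub_pow_char, hx]; simp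
    · rw [Valuation.map_add_eq_of_lt_left _ (by rwa [map_one]), map_one]
  · exact ⟨t, ht, ht', h⟩
  · refine ⟨1 + t⁻¹, ?_, ?_, ?_⟩
    · intro h1
      apply ht
      have := (h1.sub one_alg).inv
      simpa using this
    · intro x hx
      apply ht' (x - 1)⁻¹
      rw [inv_pow, sub_pow_char, hx]; simp
    · rw [Valuation.map_add_eq_of_lt_left _ (by
        rw [map_one, map_inv₀]; exact inv_lt_one_of_one_lt₀ h), map_one]

lemma val_intOver (w : Valuation K ℤᵐ⁰) {s x : K} (hs : w s ≤ 1) (hx : IntOver p s x) : w x ≤ 1 := by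
  have hsub : ∀ y ∈ Algebra.adjoin (ZMod p) {s}, w y ≤ 1 := by
    intro y hy
    induction hy using Algebra.adjoin_induction with
    | mem z hz => rw [Set.mem_singleton_iff.1 hz]; exact hs
    | algebraMap r =>
      by_cases hr : r = 0
      · simp [hr]
      · have h1 : r ^ (p - 1) = 1 := ZMod.pow_card_sub_one_eq_one hr
        have h2 : w (algebraMap (ZMod p) K r) ^ (p - 1) = 1 := by
          rw [← map_pow, ← map_pow, h1, map_one, map_one]
        have : p - 1 ≠ 0 := by have := hp.out.two_le; omega
        exact ((pow_eq_one_iff.1 h2).resolve_right this).le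
    | add a b _ _ ha hb => exact Valuation.map_add_le _ ha hb
    | mul a b _ _ ha hb => rw [map_mul]; exact mul_le_one' ha hb
  obtain ⟨q, hq, hq0⟩ := hx
  have h1 : IsIntegral w.integer x := by
    let f : Algebra.adjoin (ZMod p) {s} →+* w.integer :=
      { toFun := fun y => ⟨y, hsub y y.2⟩
        map_one' := rfl
        map_mul' := fun _ _ => rfl
        map_zero' := rfl
        map_add' := fun _ _ => rfl }
    refine ⟨q.map f, hq.map f, ?_⟩
    rw [eval₂_map]
    exact hq0
  exact (Valuation.Integers.mem_of_integral (Valuation.integer.integers w) h1)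

/-- the local theorem -/
theorem local_val (hK : GF p K) (t : K) (ht : Transcendental (ZMod p) t)
    (ht' : ∀ x : K, x ^ p ≠ t) (w : Valuation K ℤᵐ⁰) (hw : ∃ π : K, w π = exp (-1 : ℤ)) :
    ∃ (W : Set K) (d : ℕ), Dio1 W ∧ (∀ y : K, w y ≤ exp (-(d : ℤ)) → y ∈ W) ∧
      ∀ y ∈ W, w y < 1 := by
  obtain ⟨t1, h1, h2, h3⟩ := coord_unit w t ht ht'
  obtain ⟨hs, hs', hi, hi'⟩ := coordS t1 h1 h2
  have hws : w (t1 ^ p + t1⁻¹) ≤ 1 :=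
    Valuation.map_add_le _ (by rw [map_pow, h3, one_pow]) (by rw [map_inv₀, h3, inv_one])
  generalize t1 ^ p + t1⁻¹ = s at *
  obtain ⟨i1, i2, i3, i4, i5, hco⟩ := setup hK s hs hs'
  obtain ⟨π, hπ⟩ := hw
  have hintegral : ∀ a : RI p K, w (algebraMap (RI p K) K a) ≤ 1 := fun a =>
    val_intOver w hws ((isIntegral_iff_intOver hco _).1 ((RI_iff _).2 ⟨a, rfl⟩))
  -- the prime
  let I : Ideal (RI p K) :=
    { carrier := {a | w (algebraMap (RI p K) K a) < 1}
      zero_mem' := by simp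
      add_mem' := by
        intro a b ha hb
        simp only [Set.mem_ofPred_eq, map_add]
        exact Valuation.map_add_lt _ ha hb
      smul_mem' := by
        intro a b hb
        simp only [Set.mem_ofPred_eq, smul_eq_mul, map_mul]
        exact lt_of_le_of_lt (mul_le_of_le_one_left' (hintegral a)) hb }
  have memI : ∀ a, a ∈ I ↔ w (algebraMap (RI p K) K a) < 1 := fun a => Iff.rfl
  have nmemI : ∀ a, a ∉ I → w (algebraMap (RI p K) K a) = 1 := fun a ha =>
    le_antisymm (hintegral a) (not_lt.1 ha)
  have hprime : I.IsPrime := by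
    refine ⟨?_, ?_⟩
    · rw [Ideal.ne_top_iff_one, memI]; simp
    · intro a b hab
      by_contra hcon
      push Not at hcon
      rw [memI, map_mul, map_mul, nmemI a hcon.1, nmemI b hcon.2] at hab
      simp at hab
  have hbot : I ≠ ⊥ := by
    intro hI
    obtain ⟨a, b, hb, hab⟩ := IsFractionRing.div_surjective (A := RI p K) π
    have hb0 : b ≠ 0 := nonZeroDivisors.ne_zero hb
    have ha0 : a ≠ 0 := by
      rintro rfl
      rw [map_zero, zero_div] at hab
      rw [← hab, map_zero] at hπ
      exact exp_ne_zero hπ.symm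
    have e1 := nmemI a (by rw [hI]; simpa using ha0)
    have e2 := nmemI b (by rw [hI]; simpa using hb0)
    rw [← hab, map_div₀, e1, e2, div_one, ← exp_zero, exp_inj] at hπ
    omega
  let v : HeightOneSpectrum (RI p K) := ⟨I, hprime, hbot⟩
  have le_le : ∀ x : K, v.valuation K x ≤ 1 → w x ≤ 1 := by
    intro x hx
    obtain ⟨n, d, hnd⟩ := HeightOneSpectrum.exists_primeCompl_mul_eq_of_integer v x hx
    have := congrArg w hnd
    rw [map_mul, nmemI d d.2, mul_one] at this
    rw [this]; exact hintegral n
  have lt_lt : ∀ x : K, v.valuation K x < 1 → w x < 1 := by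
    intro x hx
    obtain ⟨n, d, hnd⟩ := HeightOneSpectrum.exists_primeCompl_mul_eq_of_integer v x hx.le
    have h := congrArg w hnd
    rw [map_mul, nmemI d d.2, mul_one] at h
    rw [h]
    have h' := congrArg (v.valuation K) hnd
    have : v.valuation K (algebraMap (RI p K) K n) < 1 := by
      rw [← h', map_mul]
      exact lt_of_le_of_lt (mul_le_of_le_one_right' (val_le_one v _)) hx
    exact (val_lt_one_iff v n).1 this
  have le_le' : ∀ x : K, w x ≤ 1 → v.valuation K x ≤ 1 := by
    intro x hx
    by_contra hcon
    have h4 := lt_lt x⁻¹ (by rw [map_inv₀]; exact inv_lt_one_of_one_lt₀ (not_le.1 hcon))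
    rw [map_inv₀] at h4
    have hx0 : x ≠ 0 := by rintro rfl; simp at hcon
    have := (inv_lt_one₀ (by simpa [zero_lt_iff] using hx0)).1 h4
    exact absurd hx (not_le.2 this)
  have lt_lt' : ∀ x : K, w x < 1 → v.valuation K x < 1 := by
    intro x hx
    by_contra hcon
    have hx0 : x ≠ 0 := by rintro rfl; simp at hcon
    have h4 := le_le x⁻¹ (by rw [map_inv₀]; exact inv_le_one_of_one_le₀ (not_lt.1 hcon))
    rw [map_inv₀] at h4
    have := (inv_le_one₀ (by simpa [zero_lt_iff] using hx0)).1 h4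
    exact absurd hx (not_lt.2 this)
  -- the unit
  obtain ⟨a, ha⟩ := (RI_iff t1).1 ((isIntegral_iff_intOver hco _).2 hi)
  obtain ⟨b, hb⟩ := (RI_iff t1⁻¹).1 ((isIntegral_iff_intOver hco _).2 hi')
  have ht10 : t1 ≠ 0 := by rintro rfl; simp at h3
  have hab : a * b = 1 := by
    apply IsFractionRing.injective (RI p K) K
    rw [map_mul, ha, hb, map_one, mul_inv_cancel₀ ht10]
  let ε : (RI p K)ˣ := ⟨a, b, hab, by rw [mul_comm, hab]⟩
  have hε : ∀ n : ℕ, 0 < n → ε ^ n ≠ 1 := by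
    intro n hn h
    have h5 := congrArg (fun u : (RI p K)ˣ => algebraMap (RI p K) K (u : RI p K)) h
    simp only [Units.val_pow_eq_pow_val, map_pow, Units.val_one, map_one] at h5
    have h6 : t1 ^ n = 1 := by rw [← ha]; exact h5
    apply h1
    refine ⟨X ^ n - C 1, X_pow_sub_C_ne_zero hn 1, by simp [h6]⟩
  obtain ⟨W, d, hW, hW1, hW2⟩ := local_W p K (RI p K) RI_nf RI_iff ε hε v
  refine ⟨W, d, hW, fun y hy => hW1 y ?_, fun y hy => lt_lt y (hW2 y hy)⟩
  have hπ0 : π ≠ 0 := by rintro rfl; rw [map_zero] at hπ; exact exp_ne_zero hπ.symm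
  have e1 : y = π ^ d * (y * (π⁻¹) ^ d) := by
    rw [mul_comm y, ← mul_assoc, ← mul_pow, mul_inv_cancel₀ hπ0, one_pow, one_mul]
  rw [e1, map_mul, map_pow]
  have e2 : v.valuation K (y * (π⁻¹) ^ d) ≤ 1 := by
    apply le_le'
    rw [map_mul, map_pow, map_inv₀, hπ, ← exp_neg, ← exp_nsmul]
    calc _ ≤ exp (-(d : ℤ)) * exp (d • - (-1 : ℤ)) := mul_le_mul' hy le_rfl
      _ = 1 := by rw [← exp_add]; simp
  have e3 : v.valuation K π ≤ exp (-1 : ℤ) := by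
    rw [← lt_one_iff_exp]
    apply lt_lt'
    rw [hπ, ← exp_zero, exp_lt_exp]; omega
  calc _ ≤ exp (-1 : ℤ) ^ d * 1 := mul_le_mul' (pow_le_pow_left' e3 d) e2
    _ = _ := by rw [mul_one, ← exp_nsmul]; simp

/-- complement of a valuation ring -/
theorem compl_val_dio (hK : GF p K) (t : K) (ht : Transcendental (ZMod p) t)
    (ht' : ∀ x : K, x ^ p ≠ t) (w : Valuation K ℤᵐ⁰) (hw : ∃ π : K, w π = exp (-1 : ℤ)) :
    Dio1 {x : K | 1 < w x} := by
  obtain ⟨i1, i2, i3, i4, i5, hco⟩ := setup hK t ht ht'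
  obtain ⟨W, d, hW, hW1, hW2⟩ := local_val hK t ht ht' w hw
  apply Dio1.mk
  have h : Dio (fun x : Unit → K => ∃ y, x () ^ d * y = 1 ∧ y ∈ W) := by
    apply Dio.ex1
    apply Dio.and (nonperf_of_sep p K) hp.out.ne_zero
    · exact Dio.eq (((IsPoly.var _).pow _).mul (IsPoly.var _)) (IsPoly.const _)
    · exact Dio.mem hW (IsPoly.var _)
  refine h.congr fun x => ?_
  generalize x () = x
  simp only [Set.mem_ofPred_eq]
  constructor
  · intro hx
    have hx0 : x ≠ 0 := by rintro rfl; simp at hx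
    refine ⟨(x⁻¹) ^ d, by rw [← mul_pow, mul_inv_cancel₀ hx0, one_pow], hW1 _ ?_⟩
    have e3 : w x⁻¹ ≤ exp (-1 : ℤ) := by
      rw [← lt_one_iff_exp, map_inv₀]
      exact inv_lt_one_of_one_lt₀ hx
    rw [map_pow]
    calc _ ≤ exp (-1 : ℤ) ^ d := pow_le_pow_left' e3 d
      _ = _ := by rw [← exp_nsmul]; simp
  · rintro ⟨y, hy, hyW⟩
    by_contra hcon
    have h1 := congrArg w hy
    rw [map_mul, map_pow, map_one] at h1
    have h2 := mul_le_mul' (pow_le_one' (not_lt.1 hcon) d) (le_refl (w y))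
    rw [h1, one_mul] at h2
    exact absurd (hW2 y hyW) (not_lt.2 h2)

end Local
end UnivDef


namespace UnivDef

set_option linter.unusedSectionVars false
set_option linter.unusedVariables false

section Infty
open Polynomial WithZero IsDedekindDomain

variable {p : ℕ} [hp : Fact p.Prime] {K : Type*} [Field K] [CharP K p] [Algebra (ZMod p) K]

lemma algebraMap_eq_aeval [Algebra (Polynomial (ZMod p)) K] {s : K} (h : co p K = s) :
    algebraMap (Polynomial (ZMod p)) K = (aeval s : (ZMod p)[X] →ₐ[ZMod p] K).toRingHom := by
  apply Polynomial.ringHom_ext'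
  · exact Subsingleton.elim _ _
  · show co p K = _
    simp [h]

/-- the primes above `u = 0` -/
theorem zero_primes (hK : GF p K) (u : K) (hu : Transcendental (ZMod p) u) (hu' : ∀ x : K, x ^ p ≠ u) :
    ∃ T : Finset (Valuation K ℤᵐ⁰), (∀ w ∈ T, (∃ π : K, w π = exp (-1 : ℤ)) ∧ w u < 1) ∧
      ∀ x : K, (∀ w ∈ T, w x ≤ 1) → ∃ c : (ZMod p)[X], c.coeff 0 ≠ 0 ∧
        ((aeval u : (ZMod p)[X] →ₐ[ZMod p] K).toRingHom).IsIntegralElem (aeval u c * x) := by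
  classical
  obtain ⟨i1, i2, i3, i4, i5, hco⟩ := setup hK u hu hu'
  have hmap := algebraMap_eq_aeval hco
  have hu0 : u ≠ 0 := by rintro rfl; exact hu isAlgebraic_zero
  have hT := finite_zeros (A := RI p K) hu0
  refine ⟨hT.toFinset.image (fun v => v.valuation K), ?_, ?_⟩
  · intro w hw
    simp only [Finset.mem_image, Set.Finite.mem_toFinset, Set.mem_ofPred_eq] at hw
    obtain ⟨v, hv, rfl⟩ := hw
    exact ⟨v.valuation_exists_uniformizer K, hv⟩
  · intro x hx
    let J : Ideal (RI p K) :=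
      { carrier := {b | ∃ a : RI p K, algebraMap (RI p K) K a = algebraMap (RI p K) K b * x}
        zero_mem' := ⟨0, by simp⟩
        add_mem' := by
          rintro a b ⟨c, hc⟩ ⟨d, hd⟩
          exact ⟨c + d, by rw [map_add, map_add, hc, hd]; ring⟩
        smul_mem' := by
          rintro a b ⟨c, hc⟩
          exact ⟨a * c, by rw [smul_eq_mul, map_mul, map_mul, hc]; ring⟩ }
    have hcon : ¬ J.comap (algebraMap (ZMod p)[X] (RI p K)) ≤ Ideal.span {X} := by
      intro hle
      have : (Ideal.span {(X : (ZMod p)[X])}).IsPrime :=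
        (Ideal.span_singleton_prime X_ne_zero).2 prime_X
      have : Algebra.IsIntegral (ZMod p)[X] (RI p K) := IsIntegralClosure.isIntegral_algebra _ K
      obtain ⟨Q, hQ, hQp, hQX⟩ := Ideal.exists_ideal_over_prime_of_isIntegral _ J hle
      have hXQ : algebraMap (ZMod p)[X] (RI p K) X ∈ Q := by
        rw [← Ideal.mem_comap, hQX]; exact Ideal.mem_span_singleton_self X
      have hXK : algebraMap (RI p K) K (algebraMap (ZMod p)[X] (RI p K) X) = u := by
        rw [← IsScalarTower.algebraMap_apply]; exact hco
      have hQ0 : Q ≠ ⊥ := by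
        rintro rfl
        rw [Ideal.mem_bot] at hXQ
        rw [hXQ, map_zero] at hXK
        exact hu0 hXK.symm
      let v : HeightOneSpectrum (RI p K) := ⟨Q, hQp, hQ0⟩
      have hvu : v.valuation K u < 1 := by
        rw [← hXK]; exact (val_lt_one_iff v _).2 hXQ
      have hvx := hx (v.valuation K) (Finset.mem_image.2 ⟨v, by simpa using hvu, rfl⟩)
      obtain ⟨n, d, hnd⟩ := HeightOneSpectrum.exists_primeCompl_mul_eq_of_integer v x hvx
      exact d.2 (hQ ⟨n, by rw [← hnd, mul_comm]⟩)
    rw [SetLike.not_le_iff_exists] at hcon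
    obtain ⟨c, ⟨a, ha⟩, hc⟩ := hcon
    refine ⟨c, ?_, ?_⟩
    · rwa [Ideal.mem_span_singleton, X_dvd_iff] at hc
    · rw [← IsScalarTower.algebraMap_apply, hmap] at ha
      have := (RI_iff _).2 ⟨a, ha⟩
      rw [← hmap]
      exact this

lemma val_const (w : Valuation K ℤᵐ⁰) (r : ZMod p) : w (algebraMap (ZMod p) K r) ≤ 1 := by
  refine val_intOver (p := p) w (s := 0) (by simp) ?_
  have := isIntegral_algebraMap (R := Algebra.adjoin (ZMod p) {(0 : K)}) (A := K)
      (x := algebraMap (ZMod p) _ r)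
  exact this

lemma val_const' (w : Valuation K ℤᵐ⁰) {r : ZMod p} (hr : r ≠ 0) : w (algebraMap (ZMod p) K r) = 1 := by
  refine le_antisymm (val_const w r) ?_
  have h1 := val_const w r⁻¹
  rw [map_inv₀, map_inv₀] at h1
  refine (inv_le_one₀ ?_).1 h1
  simpa [zero_lt_iff] using hr

lemma val_poly_le (w : Valuation K ℤᵐ⁰) {s : K} (hs : 1 < w s) (q : (ZMod p)[X]) (m : ℕ)
    (hq : q.natDegree ≤ m) : w (aeval s q) ≤ w s ^ m := by
  rw [aeval_eq_sum_range]
  refine Valuation.map_sum_le _ fun i hi => ?_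
  rw [Algebra.smul_def, map_mul, map_pow]
  calc _ ≤ 1 * w s ^ i := mul_le_mul' (val_const w _) le_rfl
    _ = w s ^ i := one_mul _
    _ ≤ w s ^ m := pow_le_pow_right' hs.le (by have := Finset.mem_range.1 hi; omega)

lemma val_poly_eq (w : Valuation K ℤᵐ⁰) {s : K} (hs : 1 < w s) (q : (ZMod p)[X]) (hq : q ≠ 0) :
    w (aeval s q) = w s ^ q.natDegree := by
  rw [← eraseLead_add_monomial_natDegree_leadingCoeff q, map_add, aeval_monomial]
  have hm : w (algebraMap (ZMod p) K q.leadingCoeff * s ^ q.natDegree) = w s ^ q.natDegree := by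
    rw [map_mul, map_pow, val_const' w (leadingCoeff_ne_zero.2 hq), one_mul]
  have hlt : w (aeval s q.eraseLead) < w s ^ q.natDegree := by
    by_cases h0 : q.natDegree = 0
    · have : q.eraseLead = 0 := by
        rw [eq_C_of_natDegree_eq_zero h0]; simp
      rw [this, map_zero, map_zero, h0, pow_zero]
      exact zero_lt_one
    · refine lt_of_le_of_lt (val_poly_le w hs _ (q.natDegree - 1) (eraseLead_natDegree_le q)) ?_
      exact pow_lt_pow_right₀ hs (by omega)
  rw [Valuation.map_add_eq_of_lt_right _ (by rwa [hm]), hm,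
    eraseLead_add_monomial_natDegree_leadingCoeff q]

variable [Algebra (Polynomial (ZMod p)) K]
  [Algebra (RatFunc (ZMod p)) K]
  [IsScalarTower (Polynomial (ZMod p)) (RatFunc (ZMod p)) K]
  [FiniteDimensional (RatFunc (ZMod p)) K] [Algebra.IsSeparable (RatFunc (ZMod p)) K]

lemma val_ratfunc (w : Valuation K ℤᵐ⁰) (hs : 1 < w (co p K)) (a : RatFunc (ZMod p)) (N : ℕ)
    (ha : vi p a ≤ exp (-(N : ℤ))) : w (algebraMap (RatFunc (ZMod p)) K a) ≤ exp (-(N : ℤ)) := by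
  by_cases ha0 : a = 0
  · simp [ha0]
  have hmap := algebraMap_eq_aeval (p := p) (K := K) rfl
  have hd := a.denom_ne_zero
  have hn : a.num ≠ 0 := RatFunc.num_ne_zero ha0
  have h1 : a * algebraMap _ _ a.denom = algebraMap _ _ a.num := by
    rw [← eq_div_iff (by simpa using hd), RatFunc.num_div_denom]
  have h2 := congrArg (vi p) h1
  rw [map_mul, vi_poly hd, vi_poly hn] at h2
  have h3 : exp (a.num.natDegree : ℤ) ≤ exp (-(N : ℤ)) * exp (a.denom.natDegree : ℤ) := by
    rw [← h2]; exact mul_le_mul' ha le_rfl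
  rw [← exp_add, exp_le_exp] at h3
  have h4 := congrArg (fun z => w (algebraMap (RatFunc (ZMod p)) K z)) h1
  simp only [map_mul, ← IsScalarTower.algebraMap_apply] at h4
  rw [hmap] at h4
  have h5 : w (algebraMap (RatFunc (ZMod p)) K a) * w (co p K) ^ a.denom.natDegree =
      w (co p K) ^ a.num.natDegree := by
    rw [← val_poly_eq w hs _ hd, ← val_poly_eq w hs _ hn]; exact h4
  have hpos : 0 < w (co p K) := lt_trans zero_lt_one hs
  have h6 : w (algebraMap (RatFunc (ZMod p)) K a) * w (co p K) ^ N ≤ 1 := by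
    have e1 : a.denom.natDegree = N + a.num.natDegree + (a.denom.natDegree - N - a.num.natDegree) := by
      omega
    rw [e1, pow_add, pow_add] at h5
    have h7 : w (algebraMap (RatFunc (ZMod p)) K a) * w (co p K) ^ N * w (co p K) ^ a.num.natDegree ≤
        1 * w (co p K) ^ a.num.natDegree := by
      rw [one_mul]
      refine le_trans ?_ h5.le
      rw [mul_assoc]
      exact mul_le_mul' le_rfl (le_mul_of_one_le_right' (one_le_pow_of_one_le' hs.le _))
    exact le_of_mul_le_mul_right h7 (pow_pos hpos _)
  have h8 : exp (1 : ℤ) ≤ w (co p K) := by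
    by_contra hlt
    have h9 : (w (co p K))⁻¹ < 1 := inv_lt_one_of_one_lt₀ hs
    rw [lt_one_iff_exp, exp_neg] at h9
    exact hlt ((inv_le_inv₀ hpos (exp_pos)).1 h9)
  have h9 : w (algebraMap (RatFunc (ZMod p)) K a) * exp (N : ℤ) ≤ 1 := by
    refine le_trans (mul_le_mul' le_rfl ?_) h6
    have := pow_le_pow_left' h8 N
    rwa [← exp_nsmul, nsmul_eq_mul, mul_one] at this
  rw [exp_neg]
  rw [← one_div]
  exact (le_div_iff₀ exp_pos).2 h9

end Infty
end UnivDef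


namespace UnivDef

set_option linter.unusedSectionVars false
set_option linter.unusedVariables false

section Glob
open Polynomial WithZero IsDedekindDomain

variable {p : ℕ} [hp : Fact p.Prime] {K : Type*} [Field K] [CharP K p] [Algebra (ZMod p) K]

section Inst
variable [Algebra (Polynomial (ZMod p)) K]
  [Algebra (RatFunc (ZMod p)) K]
  [IsScalarTower (Polynomial (ZMod p)) (RatFunc (ZMod p)) K]
  [FiniteDimensional (RatFunc (ZMod p)) K] [Algebra.IsSeparable (RatFunc (ZMod p)) K]

lemma exists_E {n : ℕ} (b : Module.Basis (Fin n) (RatFunc (ZMod p)) K)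
    (hb : ∀ j, IsIntegral (ZMod p)[X] (b j)) (N : ℕ) :
    ∃ E : Finset K, ∀ e : K, ∃ a e' m : K, e = a + e' + m ∧ IsIntegral (ZMod p)[X] a ∧ e' ∈ E ∧
      ∃ r : Fin n → RatFunc (ZMod p), (∀ j, vi p (r j) ≤ exp (-(N : ℤ))) ∧
        m = ∑ j, algebraMap (RatFunc (ZMod p)) K (r j) * b j := by
  classical
  have hfin : {q : Fin n → (ZMod p)[X] | ∀ j, q j ∈ {q : (ZMod p)[X] | q.natDegree ≤ N}}.Finite :=
    Set.Finite.pi' fun j => finite_poly_deg N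
  let F : (Fin n → (ZMod p)[X]) → K := fun q =>
    ∑ j, algebraMap (RatFunc (ZMod p)) K (algebraMap _ _ (q j) * (RatFunc.X ^ N)⁻¹) * b j
  refine ⟨hfin.toFinset.image F, fun e => ?_⟩
  choose q hq using fun j => vi_approxN (p := p) N (b.repr e j)
  have hmon : (X ^ N : (ZMod p)[X]).Monic := monic_X_pow N
  have hdec : ∀ j, algebraMap (ZMod p)[X] (RatFunc (ZMod p)) (q j) * (RatFunc.X ^ N)⁻¹ =
      algebraMap _ _ (q j /ₘ X ^ N) + algebraMap _ _ (q j %ₘ X ^ N) * (RatFunc.X ^ N)⁻¹ := by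
    intro j
    have hX : (RatFunc.X : RatFunc (ZMod p)) ^ N ≠ 0 := pow_ne_zero _ RatFunc.X_ne_zero
    conv_lhs => rw [← modByMonic_add_div (q j) (X ^ N), map_add, map_mul, map_pow, RatFunc.algebraMap_X]
    field_simp
    ring
  refine ⟨∑ j, algebraMap (ZMod p)[X] K (q j /ₘ X ^ N) * b j, F (fun j => q j %ₘ X ^ N),
    ∑ j, algebraMap (RatFunc (ZMod p)) K
      (b.repr e j - algebraMap _ _ (q j) * (RatFunc.X ^ N)⁻¹) * b j, ?_, ?_, ?_, _, ?_, rfl⟩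
  · conv_lhs => rw [← b.sum_repr e]
    rw [← Finset.sum_add_distrib, ← Finset.sum_add_distrib]
    refine Finset.sum_congr rfl fun j _ => ?_
    rw [Algebra.smul_def, ← add_mul, ← add_mul,
      IsScalarTower.algebraMap_apply (ZMod p)[X] (RatFunc (ZMod p)) K, ← map_add, ← map_add, hdec]
    congr 2
    ring
  · exact IsIntegral.sum _ fun j _ => isIntegral_algebraMap.mul (hb j)
  · refine Finset.mem_image.2 ⟨_, ?_, rfl⟩
    simp only [Set.Finite.mem_toFinset, Set.mem_ofPred_eq]
    intro j
    have := natDegree_modByMonic_le (q j) hmon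
    simpa using this
  · intro j
    refine (hq j).trans ?_
    rw [exp_le_exp]; omega

lemma vi_aeval_inv (q : (ZMod p)[X]) : vi p (aeval (RatFunc.X⁻¹ : RatFunc (ZMod p)) q) ≤ 1 := by
  rw [aeval_eq_sum_range]
  refine Valuation.map_sum_le _ fun i _ => ?_
  rw [Algebra.smul_def, map_mul, map_pow, map_inv₀, vi_X]
  refine mul_le_one' (val_const _ _) (pow_le_one' ?_ _)
  rw [← exp_neg, ← exp_zero, exp_le_exp]; omega

lemma vi_aeval_inv' (q : (ZMod p)[X]) (hq : q.coeff 0 ≠ 0) :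
    vi p (aeval (RatFunc.X⁻¹ : RatFunc (ZMod p)) q) = 1 := by
  rw [← X_mul_divX_add q, map_add, map_mul, aeval_X, aeval_C]
  have h1 := val_const' (vi p) hq
  rw [Valuation.map_add_eq_of_lt_right, h1]
  rw [h1, map_mul, map_inv₀, vi_X]
  refine lt_of_le_of_lt (mul_le_of_le_one_right' (vi_aeval_inv _)) ?_
  rw [← exp_neg, ← exp_zero, exp_lt_exp]; omega

lemma co_eq_map : co p K = algebraMap (RatFunc (ZMod p)) K RatFunc.X := by
  rw [← RatFunc.algebraMap_X, ← IsScalarTower.algebraMap_apply]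
  rfl

lemma vi_trace_le (y : K) (c : (ZMod p)[X]) (hc : c.coeff 0 ≠ 0)
    (h : ((aeval (co p K)⁻¹ : (ZMod p)[X] →ₐ[ZMod p] K).toRingHom).IsIntegralElem
      (aeval (co p K)⁻¹ c * y)) : vi p (Algebra.trace (RatFunc (ZMod p)) K y) ≤ 1 := by
  let f : (ZMod p)[X] →+* (vi p).integer :=
    (aeval (RatFunc.X⁻¹ : RatFunc (ZMod p))).toRingHom.codRestrict (vi p).integer
      (fun q => vi_aeval_inv q)
  have hf : (aeval (co p K)⁻¹ : (ZMod p)[X] →ₐ[ZMod p] K).toRingHom =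
      (algebraMap (vi p).integer K).comp f := by
    apply Polynomial.ringHom_ext'
    · exact Subsingleton.elim _ _
    · show aeval (co p K)⁻¹ X = algebraMap (RatFunc (ZMod p)) K (aeval (RatFunc.X⁻¹ : RatFunc (ZMod p)) X)
      rw [aeval_X, aeval_X, map_inv₀, co_eq_map]
  have hfc : (aeval (co p K)⁻¹ c : K) = algebraMap (RatFunc (ZMod p)) K
      (aeval (RatFunc.X⁻¹ : RatFunc (ZMod p)) c) := congrArg (fun g => g c) hf
  have h1 : IsIntegral (vi p).integer (aeval (co p K)⁻¹ c * y) := by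
    obtain ⟨q, hq, hq0⟩ := h
    refine ⟨q.map f, hq.map f, ?_⟩
    rw [eval₂_map, ← hf]; exact hq0
  have h2 : IsIntegral (vi p).integer (Algebra.trace (RatFunc (ZMod p)) K (aeval (co p K)⁻¹ c * y)) :=
    Algebra.isIntegral_trace h1
  have h3 := Valuation.Integers.mem_of_integral (Valuation.integer.integers (vi p)) h2
  rw [hfc, ← Algebra.smul_def, map_smul, smul_eq_mul, Valuation.mem_integer_iff, map_mul,
    vi_aeval_inv' c hc, one_mul] at h3
  exact h3

lemma small_mem_HH (f : K) (c : (ZMod p)[X]) (hc : c.coeff 0 ≠ 0)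
    (h : ((aeval (co p K)⁻¹ : (ZMod p)[X] →ₐ[ZMod p] K).toRingHom).IsIntegralElem
      (aeval (co p K)⁻¹ c * ((co p K) ^ 2 * f))) : f ∈ HH p K := by
  have h1 := vi_trace_le _ c hc h
  rw [mem_HH]
  apply Hk_small
  rw [co_eq_map, ← map_pow, ← Algebra.smul_def, map_smul, smul_eq_mul, map_mul, map_pow, vi_X,
    ← exp_nsmul] at h1
  rw [show (-2 : ℤ) = - (2 • 1) by norm_num, exp_neg, ← one_div, le_div_iff₀ exp_pos, mul_comm]
  exact h1

end Inst

end Glob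
end UnivDef


namespace UnivDef

set_option linter.unusedSectionVars false
set_option linter.unusedVariables false

section Glob2
open Polynomial WithZero IsDedekindDomain

variable {p : ℕ} [hp : Fact p.Prime] {K : Type*} [Field K] [CharP K p] [Algebra (ZMod p) K]

lemma exists_exp_le (x : ℤᵐ⁰) : ∃ N : ℕ, x ≤ exp (N : ℤ) := by
  by_cases h : x = 0
  · exact ⟨0, by simp [h]⟩
  · refine ⟨(log x).toNat, ?_⟩
    rw [← exp_log h, exp_le_exp, log_exp]
    exact Int.self_le_toNat _

lemma exists_exp_le_fin {ι : Type*} (s : Finset ι) (f : ι → ℤᵐ⁰) :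
    ∃ N : ℕ, ∀ i ∈ s, f i ≤ exp (N : ℤ) := by
  choose N hN using fun i => exists_exp_le (f i)
  refine ⟨s.sup N, fun i hi => (hN i).trans ?_⟩
  rw [exp_le_exp]
  exact_mod_cast Finset.le_sup hi

theorem compl_int_dio (hK : GF p K) (t : K) (ht : Transcendental (ZMod p) t)
    (ht' : ∀ x : K, x ^ p ≠ t) : Dio1 {x : K | ¬ IntOver p (t ^ p + t⁻¹) x} := by
  classical
  obtain ⟨hs, hs', hi, hi'⟩ := coordS t ht ht'
  generalize t ^ p + t⁻¹ = s at *
  have hu : Transcendental (ZMod p) s⁻¹ := fun h => hs (by simpa using h.inv)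
  have hu' : ∀ x : K, x ^ p ≠ s⁻¹ := fun x hx => hs' x⁻¹ (by rw [inv_pow, hx, inv_inv])
  have hs0 : s ≠ 0 := by rintro rfl; exact hs isAlgebraic_zero
  obtain ⟨T, hT1, hT2⟩ := zero_primes hK s⁻¹ hu hu'
  have hTs : ∀ w ∈ T, 1 < w s := by
    intro w hw
    have := (hT1 w hw).2
    rw [map_inv₀] at this
    exact (inv_lt_one₀ (by simpa [zero_lt_iff] using hs0)).1 this
  have hW : ∀ w : Valuation K ℤᵐ⁰, ∃ (W : Set K) (d : ℕ), Dio1 W ∧ (w ∈ T →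
      (∀ y : K, w y ≤ exp (-(d : ℤ)) → y ∈ W) ∧ ∀ y ∈ W, w y < 1) := by
    intro w
    by_cases hw : w ∈ T
    · obtain ⟨W, d, h1, h2, h3⟩ := local_val hK t ht ht' w (hT1 w hw).1
      exact ⟨W, d, h1, fun _ => ⟨h2, h3⟩⟩
    · exact ⟨∅, 0, Dio.false, fun h => absurd h hw⟩
  choose W d hWd hW using hW
  obtain ⟨i1, i2, i3, i4, i5, hco⟩ := setup hK s hs hs'
  have hnp := nonperf_of_sep p K
  have hp0 := hp.out.ne_zero
  -- the set at infinity
  let Winf : Set K := {f | ∀ w ∈ T, s ^ 2 * f ∈ W w}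
  have hWinf : Dio1 Winf := Dio.forall_finset hnp hp0 T fun w _ =>
    Dio.mem (hWd w) ((IsPoly.const _).mul (IsPoly.var _))
  have hWHH : ∀ f ∈ Winf, f ∈ HH p K := by
    intro f hf
    obtain ⟨c, hc, h⟩ := hT2 (s ^ 2 * f) fun w hw => ((hW w hw).2 _ (hf w hw)).le
    rw [← hco] at h
    exact small_mem_HH f c hc h
  obtain ⟨n, b, hb⟩ := exists_int_basis p K
  obtain ⟨N1, hN1⟩ := exists_exp_le_fin (T ×ˢ (Finset.univ : Finset (Fin n)))
    (fun z => z.1 (s ^ 2 * b z.2))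
  let N := T.sup d + N1
  obtain ⟨E, hE⟩ := exists_E b hb N
  have hM : ∀ r : Fin n → RatFunc (ZMod p), (∀ j, vi p (r j) ≤ exp (-(N : ℤ))) →
      ∑ j, algebraMap (RatFunc (ZMod p)) K (r j) * b j ∈ Winf := by
    intro r hr w hw
    apply (hW w hw).1
    rw [Finset.mul_sum]
    refine Valuation.map_sum_le _ fun j _ => ?_
    rw [mul_left_comm, map_mul]
    have e1 := val_ratfunc w (by rw [hco]; exact hTs w hw) (r j) N (hr j)
    have e2 := hN1 (w, j) (by simp [hw])
    refine (mul_le_mul' e1 e2).trans ?_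
    rw [← exp_add, exp_le_exp]
    have : d w ≤ T.sup d := Finset.le_sup hw
    simp only [N]
    push_cast
    omega
  let E' := E.filter (fun e => e ∉ HH p K)
  let Sg : Set K := {e | ∃ e' ∈ E', e - e' ∈ Winf}
  have hSg : Dio1 Sg := Dio.exists_finset E' fun e' _ =>
    Dio.mem hWinf ((IsPoly.var _).sub (IsPoly.const _))
  have hSgH : ∀ e ∈ Sg, e ∉ HH p K := by
    rintro e ⟨e', he', h⟩ heH
    refine (Finset.mem_filter.1 he').2 ?_
    have := sub_mem heH (hWHH _ h)
    simpa using this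
  have hSgc : ∀ e, e ∉ HH p K → ∃ e'' ∈ Sg, IsIntegral (ZMod p)[X] (e - e'') := by
    intro e he
    obtain ⟨a, e', m, h, ha, he', r, hr, hm⟩ := hE e
    have hmW : m ∈ Winf := by rw [hm]; exact hM r hr
    refine ⟨e' + m, ⟨e', Finset.mem_filter.2 ⟨he', fun h' => he ?_⟩, by simpa using hmW⟩, ?_⟩
    · rw [h]
      exact add_mem (add_mem (AD_mem_HH (integral_mem_AD ha)) h') (hWHH _ hmW)
    · rw [h]
      convert ha using 1
      ring
  -- the unit
  obtain ⟨a, ha⟩ := (RI_iff t).1 ((isIntegral_iff_intOver hco _).2 hi)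
  obtain ⟨b', hb'⟩ := (RI_iff t⁻¹).1 ((isIntegral_iff_intOver hco _).2 hi')
  have ht0 : t ≠ 0 := by rintro rfl; exact ht isAlgebraic_zero
  have hab : a * b' = 1 := by
    apply IsFractionRing.injective (RI p K) K
    rw [map_mul, ha, hb', map_one, mul_inv_cancel₀ ht0]
  let ε : (RI p K)ˣ := ⟨a, b', hab, by rw [mul_comm, hab]⟩
  have hε : ∀ n : ℕ, 0 < n → ε ^ n ≠ 1 := by
    intro n hn h
    have h5 := congrArg (fun u : (RI p K)ˣ => algebraMap (RI p K) K (u : RI p K)) h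
    simp only [Units.val_pow_eq_pow_val, map_pow, Units.val_one, map_one] at h5
    have h6 : t ^ n = 1 := by rw [← ha]; exact h5
    apply ht
    refine ⟨X ^ n - C 1, X_pow_sub_C_ne_zero hn 1, by simp [h6]⟩
  obtain ⟨D, hD, hD'⟩ := exists_e p K (RI p K) RI_iff
  have h : Dio (fun x : Unit → K => ∃ y, x () ^ (2 * D) * y = 1 ∧ ∃ e, e ∈ Sg ∧ Cert p K e y) := by
    apply Dio.ex1
    apply Dio.and hnp hp0
    · exact Dio.eq (((IsPoly.var _).pow _).mul (IsPoly.var _)) (IsPoly.const _)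
    · apply Dio.ex1
      apply Dio.and hnp hp0
      · exact Dio.mem hSg (IsPoly.var _)
      · exact Dio.cert p (IsPoly.var _) (IsPoly.var _)
  refine h.congr fun x => ?_
  generalize x () = x
  simp only [Set.mem_ofPred_eq]
  rw [← isIntegral_iff_intOver hco, RI_iff]
  constructor
  · intro hx
    have hv : ∃ v : HeightOneSpectrum (RI p K), 1 < v.valuation K x := by
      by_contra hcon
      push Not at hcon
      exact hx (exists_int (fun w => hcon w))
    obtain ⟨v, hv⟩ := hv
    have hx0 : x ≠ 0 := by rintro rfl; simp at hv
    obtain ⟨e, he, he1, he2, he3⟩ := hD' v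
    obtain ⟨e'', h1, h2⟩ := hSgc e he
    refine ⟨(x⁻¹) ^ (2 * D), by rw [← mul_pow, mul_inv_cancel₀ hx0, one_pow], e'', h1,
      cert_complete p K (RI p K) RI_iff ε hε v D hD e he1 he2 he3 _ ?_ e'' h2⟩
    have e3 : v.valuation K x⁻¹ ≤ exp (-1 : ℤ) := by
      rw [← lt_one_iff_exp, map_inv₀]
      exact inv_lt_one_of_one_lt₀ hv
    rw [map_pow]
    calc _ ≤ exp (-1 : ℤ) ^ (2 * D) := pow_le_pow_left' e3 _
      _ = _ := by rw [← exp_nsmul]; simp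
  · rintro ⟨y, hy, e, he, hc⟩ ⟨z, rfl⟩
    obtain ⟨w, hw1, hw2⟩ := cert_sound p K (RI p K) RI_nf RI_iff (hSgH e he) hc
    have h1 := congrArg (w.valuation K) hy
    rw [map_mul, map_pow, map_one] at h1
    have h2 := mul_le_mul' (pow_le_one' (val_le_one (K := K) w z) (2 * D)) (le_refl (w.valuation K y))
    rw [h1, one_mul] at h2
    exact absurd hw2 (not_lt.2 h2)

end Glob2
end UnivDef


namespace UnivDef

set_option linter.unusedSectionVars false
set_option linter.unusedVariables false

section Fin1
open Polynomial WithZero IsDedekindDomain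

variable {p : ℕ} [hp : Fact p.Prime] {K : Type*} [Field K] [CharP K p] [Algebra (ZMod p) K]

lemma intOver_of_val (hK : GF p K) (t : K) (ht : Transcendental (ZMod p) t)
    (ht' : ∀ x : K, x ^ p ≠ t) (x : K)
    (hx : ∀ w : Valuation K ℤᵐ⁰, w t ≤ 1 → w x ≤ 1) : IntOver p t x := by
  obtain ⟨i1, i2, i3, i4, i5, hco⟩ := setup hK t ht ht'
  rw [← isIntegral_iff_intOver hco, RI_iff]
  refine exists_int fun w => hx _ ?_
  obtain ⟨a, ha⟩ := (RI_iff (co p K)).1 isIntegral_algebraMap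
  rw [← hco, ← ha]
  exact val_le_one w a

lemma intOver_self (s : K) : IntOver p s s :=
  isIntegral_algebraMap (R := Algebra.adjoin (ZMod p) {s}) (A := K)
    (x := ⟨s, Algebra.self_mem_adjoin_singleton _ _⟩)

/-- the complement of the integral closure of `F_p[t]` -/
theorem compl_B_dio (hK : GF p K) (t : K) (ht : Transcendental (ZMod p) t)
    (ht' : ∀ x : K, x ^ p ≠ t) : Dio1 {x : K | ¬ IntOver p t x} := by
  classical
  obtain ⟨hs, hs', hi, hi'⟩ := coordS t ht ht'
  have h1 := compl_int_dio hK t ht ht'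
  have ht0 : t ≠ 0 := by rintro rfl; exact ht isAlgebraic_zero
  obtain ⟨i1, i2, i3, i4, i5, hco⟩ := setup hK t ht ht'
  have hT := finite_zeros (A := RI p K) ht0
  have h2 : Dio (fun x : Unit → K => x () ∈ {x : K | ¬ IntOver p (t ^ p + t⁻¹) x} ∨
      ∃ v ∈ hT.toFinset, x () ∈ {x : K | 1 < v.valuation K x}) :=
    Dio.or h1 (Dio.exists_finset _ fun v _ =>
      compl_val_dio hK t ht ht' _ (v.valuation_exists_uniformizer K))
  refine Dio1.mk (h2.congr fun x => ?_)
  generalize x () = x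
  simp only [Set.mem_ofPred_eq, Set.Finite.mem_toFinset]
  have hvt : ∀ v : HeightOneSpectrum (RI p K), v.valuation K t ≤ 1 := by
    intro v
    obtain ⟨a, ha⟩ := (RI_iff t).1 ((isIntegral_iff_intOver hco _).2 (intOver_self t))
    rw [← ha]; exact val_le_one v a
  constructor
  · intro hx
    by_contra hcon
    push Not at hcon
    apply hx
    rw [← isIntegral_iff_intOver hco, RI_iff]
    refine exists_int fun v => ?_
    rcases (hvt v).lt_or_eq with h | h
    · exact hcon.2 v h
    · refine val_intOver _ ?_ hcon.1
      exact Valuation.map_add_le _ (by rw [map_pow, h, one_pow]) (by rw [map_inv₀, h, inv_one])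
  · rintro (hx | ⟨v, -, hv⟩) hB
    · apply hx
      refine intOver_of_val hK _ hs hs' x fun w hw => ?_
      exact val_intOver w (val_intOver w hw hi) hB
    · exact absurd hv (not_lt.2 (val_intOver _ (hvt v) hB))

lemma const_mem (R : Subring K) (r : ZMod p) : algebraMap (ZMod p) K r ∈ R := by
  obtain ⟨n, rfl⟩ := ZMod.intCast_surjective r
  rw [map_intCast]
  exact intCast_mem R n

lemma exists_conductor (hK : GF p K) (R : Subring K)
    (hfrac : ∀ x : K, ∃ r s : K, r ∈ R ∧ s ∈ R ∧ s ≠ 0 ∧ x = r / s)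
    (t : K) (ht : Transcendental (ZMod p) t) (ht' : ∀ x : K, x ^ p ≠ t) (n : ℕ)
    (htR : t ^ p ^ n ∈ R) :
    ∃ h ∈ R, h ≠ 0 ∧ ∀ x, IntOver p t x → h * x ∈ R := by
  classical
  have : IsFractionRing R K := by
    refine IsFractionRing.of_field R K fun z => ?_
    obtain ⟨r, s, hr, hs, hs0, rfl⟩ := hfrac z
    exact ⟨⟨r, hr⟩, ⟨s, hs⟩, rfl⟩
  have htint : IsIntegral R t := by
    refine IsIntegral.of_pow (n := p ^ n) (pow_pos hp.out.pos n) ?_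
    exact isIntegral_algebraMap (R := R) (A := K) (x := ⟨_, htR⟩)
  have : Algebra.IsIntegral R (Algebra.adjoin R {t}) :=
    Algebra.IsIntegral.adjoin (by rintro x hx; rw [Set.mem_singleton_iff.1 hx]; exact htint)
  have hsub : ∀ y ∈ Algebra.adjoin (ZMod p) {t}, y ∈ Algebra.adjoin R {t} := by
    intro y hy
    induction hy using Algebra.adjoin_induction with
    | mem z hz => rw [Set.mem_singleton_iff.1 hz]; exact Algebra.self_mem_adjoin_singleton _ _
    | algebraMap r => exact Subalgebra.algebraMap_mem _ (⟨_, const_mem R r⟩ : R)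
    | add a b _ _ ha hb => exact add_mem ha hb
    | mul a b _ _ ha hb => exact mul_mem ha hb
  have hBint : ∀ x, IntOver p t x → IsIntegral R x := by
    intro x hx
    refine isIntegral_trans (A := Algebra.adjoin R {t}) x ?_
    obtain ⟨q, hq, hq0⟩ := hx
    let f : Algebra.adjoin (ZMod p) {t} →+* Algebra.adjoin R {t} :=
      { toFun := fun y => ⟨y, hsub y y.2⟩
        map_one' := rfl
        map_mul' := fun _ _ => rfl
        map_zero' := rfl
        map_add' := fun _ _ => rfl }
    refine ⟨q.map f, hq.map f, ?_⟩
    rw [eval₂_map]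
    exact hq0
  obtain ⟨i1, i2, i3, i4, i5, hco⟩ := setup hK t ht ht'
  have hfin : Module.Finite (Polynomial (ZMod p)) (RI p K) := by
    have : IsNoetherian (Polynomial (ZMod p)) (RI p K) := inferInstance
    infer_instance
  obtain ⟨S, hS⟩ := hfin.fg_top
  let S' : Set K := insert t ((fun a : RI p K => algebraMap (RI p K) K a) '' (S : Set (RI p K)))
  have hS'fin : S'.Finite := ((S.finite_toSet).image _).insert t
  have hintegral : ∀ a : RI p K, IntOver p t (algebraMap (RI p K) K a) := fun a =>
    (isIntegral_iff_intOver hco _).1 ((RI_iff _).2 ⟨a, rfl⟩)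
  have hFG := fg_adjoin_of_finite (R := R) hS'fin (by
    rintro x (rfl | ⟨a, -, rfl⟩)
    · exact htint
    · exact hBint _ (hintegral a))
  obtain ⟨h, hh, hh'⟩ := FractionalIdeal.isFractional_of_fg (S := nonZeroDivisors R) hFG
  have hmap := algebraMap_eq_aeval hco
  have hpoly : ∀ q : (ZMod p)[X], algebraMap (ZMod p)[X] K q ∈ Algebra.adjoin R S' := by
    intro q
    have h1 : algebraMap (ZMod p)[X] K q ∈ Algebra.adjoin (ZMod p) {t} := by
      rw [hmap]; exact aeval_mem_adjoin_singleton _ _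
    exact Algebra.adjoin_mono (by simp [S']) (hsub _ h1)
  have hmem : ∀ a : RI p K, algebraMap (RI p K) K a ∈ Algebra.adjoin R S' := by
    intro a
    have : a ∈ Submodule.span (ZMod p)[X] (S : Set (RI p K)) := by rw [hS]; trivial
    induction this using Submodule.span_induction with
    | mem x hx => exact Algebra.subset_adjoin (Or.inr ⟨x, hx, rfl⟩)
    | zero => rw [map_zero]; exact zero_mem _
    | add x y _ _ hx hy => rw [map_add]; exact add_mem hx hy
    | smul q x _ hx =>
      rw [Algebra.smul_def, map_mul, ← IsScalarTower.algebraMap_apply]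
      exact mul_mem (hpoly q) hx
  refine ⟨h, h.2, ?_, fun x hx => ?_⟩
  · have := nonZeroDivisors.ne_zero hh
    simpa using this
  · obtain ⟨a, rfl⟩ := (RI_iff x).1 ((isIntegral_iff_intOver hco _).2 hx)
    obtain ⟨r, hr⟩ := hh' _ (hmem a)
    have h2 : (r : K) = (h : K) * algebraMap (RI p K) K a := hr
    rw [← h2]
    exact r.2

theorem main1 (hK : GF p K) (R : Subring K)
    (hfrac : ∀ x : K, ∃ r s : K, r ∈ R ∧ s ∈ R ∧ s ≠ 0 ∧ x = r / s)
    (t : K) (ht : Transcendental (ZMod p) t) (ht' : ∀ x : K, x ^ p ≠ t) (n : ℕ)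
    (htR : t ^ p ^ n ∈ R) (hintegral : ∀ r ∈ R, IntOver p (t ^ p ^ n) r) : Dio1 ((R : Set K)ᶜ) := by
  classical
  have hRB : ∀ r ∈ R, IntOver p t r := fun r hr =>
    intOver_of_val hK t ht ht' r fun w hw =>
      val_intOver w (by rw [map_pow]; exact pow_le_one' hw _) (hintegral r hr)
  obtain ⟨h, hhR, hh0, hh⟩ := exists_conductor hK R hfrac t ht ht' n htR
  have hBd := compl_B_dio hK t ht ht'
  obtain ⟨i1, i2, i3, i4, i5, hco⟩ := setup hK t ht ht'
  have hnp := nonperf_of_sep p K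
  have hp0 := hp.out.ne_zero
  have hB : ∀ x : K, IntOver p t x ↔ ∃ a : RI p K, algebraMap (RI p K) K a = x := fun x => by
    rw [← isIntegral_iff_intOver hco, RI_iff]
  choose W d hWd hW1 hW2 using fun v : HeightOneSpectrum (RI p K) =>
    local_val hK t ht ht' (v.valuation K) (v.valuation_exists_uniformizer K)
  have hT := finite_zeros (A := RI p K) hh0
  let WW : Set K := {x | ∀ v ∈ hT.toFinset, h⁻¹ * x ∈ W v}
  have hWW : Dio1 WW := Dio.forall_finset hnp hp0 _ fun v _ =>
    Dio.mem (hWd v) ((IsPoly.const _).mul (IsPoly.var _))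
  obtain ⟨a, ha⟩ := (hB h).1 (hRB h hhR)
  have ha0 : a ≠ 0 := by rintro rfl; rw [map_zero] at ha; exact hh0 ha.symm
  have hWR : ∀ x ∈ WW, IntOver p t x → x ∈ R := by
    intro x hx hxB
    have h1 : IntOver p t (h⁻¹ * x) := by
      rw [hB]
      refine exists_int fun v => ?_
      by_cases hv : v.valuation K h < 1
      · exact (hW2 v _ (hx v (by simpa using hv))).le
      · have e1 : v.valuation K h = 1 :=
          le_antisymm (by rw [← ha]; exact val_le_one v a) (not_lt.1 hv)
        rw [map_mul, map_inv₀, e1, inv_one, one_mul]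
        obtain ⟨b, rfl⟩ := (hB x).1 hxB
        exact val_le_one v b
    have := hh _ h1
    rwa [← mul_assoc, mul_inv_cancel₀ hh0, one_mul] at this
  let D := hT.toFinset.sup d
  have hDW : ∀ b : RI p K, algebraMap (RI p K) K (a ^ (D + 1) * b) ∈ WW := by
    intro b v hv
    apply hW1
    have hv' : v.valuation K h < 1 := by simpa using hv
    have e1 : h⁻¹ * algebraMap (RI p K) K (a ^ (D + 1) * b) = h ^ D * algebraMap (RI p K) K b := by
      rw [map_mul, map_pow, ha, pow_succ', ← mul_assoc, ← mul_assoc, inv_mul_cancel₀ hh0, one_mul]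
    rw [e1, map_mul, map_pow]
    rw [lt_one_iff_exp] at hv'
    calc _ ≤ exp (-1 : ℤ) ^ D * 1 := mul_le_mul' (pow_le_pow_left' hv' _) (val_le_one v b)
      _ = exp (-(D : ℤ)) := by rw [mul_one, ← exp_nsmul]; simp
      _ ≤ _ := by
        rw [exp_le_exp]
        have : d v ≤ D := Finset.le_sup hv
        omega
  let I : Ideal (RI p K) := Ideal.span {a ^ (D + 1)}
  have hI : I ≠ ⊥ := by
    simp only [I, Ne, Ideal.span_singleton_eq_bot]
    exact pow_ne_zero _ ha0
  have hfinQ : Finite (RI p K ⧸ I) := Ring.HasFiniteQuotients.finiteQuotient hI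
  have := Fintype.ofFinite (RI p K ⧸ I)
  let C : Finset K := ((Finset.univ : Finset (RI p K ⧸ I)).image
    (fun z => algebraMap (RI p K) K (Quotient.out z))).filter (fun c => c ∉ R)
  have hD : Dio (fun x : Unit → K => x () ∈ {x : K | ¬ IntOver p t x} ∨ ∃ c ∈ C, x () - c ∈ WW) :=
    Dio.or hBd (Dio.exists_finset C fun c _ => Dio.mem hWW ((IsPoly.var _).sub (IsPoly.const _)))
  refine Dio1.mk (hD.congr fun x => ?_)
  generalize x () = x
  simp only [Set.mem_compl_iff, SetLike.mem_coe, Set.mem_ofPred_eq]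
  constructor
  · intro hx
    by_cases hxB : IntOver p t x
    · right
      obtain ⟨b, rfl⟩ := (hB x).1 hxB
      let c := Quotient.out (Ideal.Quotient.mk I b)
      have hc : Ideal.Quotient.mk I c = Ideal.Quotient.mk I b := Ideal.Quotient.mk_out _
      have hbc : b - c ∈ I := Ideal.Quotient.eq.1 hc.symm
      obtain ⟨e, he⟩ := Ideal.mem_span_singleton'.1 hbc
      have hw : algebraMap (RI p K) K b - algebraMap (RI p K) K c ∈ WW := by
        rw [← map_sub, ← he, mul_comm]; exact hDW e
      refine ⟨algebraMap (RI p K) K c, Finset.mem_filter.2 ⟨?_, fun hcR => hx ?_⟩, hw⟩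
      · exact Finset.mem_image.2 ⟨_, Finset.mem_univ _, rfl⟩
      · have := hWR _ hw (by rw [← map_sub]; exact (hB _).2 ⟨_, rfl⟩)
        have := add_mem this hcR
        simpa using this
    · exact Or.inl hxB
  · rintro (hx | ⟨c, hc, hw⟩) hxR
    · exact hx (hRB x hxR)
    · obtain ⟨hc1, hc2⟩ := Finset.mem_filter.1 hc
      obtain ⟨z, -, hz⟩ := Finset.mem_image.1 hc1
      apply hc2
      have h1 : IntOver p t (x - c) := by
        obtain ⟨b, hb⟩ := (hB x).1 (hRB x hxR)
        exact (hB _).2 ⟨b - Quotient.out z, by rw [map_sub, hb, hz]⟩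
      have := sub_mem hxR (hWR _ hw h1)
      simpa using this

end Fin1
end UnivDef


namespace UnivDef

set_option linter.unusedSectionVars false
set_option linter.unusedVariables false

section Fin2
open Polynomial WithZero IsDedekindDomain

variable {p : ℕ} [hp : Fact p.Prime] {K : Type*} [Field K] [CharP K p] [Algebra (ZMod p) K]

lemma not_mem_adjoin_pow (x : K) (hx : Transcendental (ZMod p) x) :
    x ∉ IntermediateField.adjoin (ZMod p) {x ^ p} := by
  intro h
  obtain ⟨a, b, hab⟩ := (IntermediateField.mem_adjoin_simple_iff (ZMod p) _).1 h
  have hx0 : x ≠ 0 := by rintro rfl; exact hx isAlgebraic_zero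
  have hb : aeval (x ^ p) b ≠ 0 := by
    intro hb
    rw [hb, div_zero] at hab
    exact hx0 hab
  have h1 : x * aeval (x ^ p) b = aeval (x ^ p) a := by
    rw [eq_div_iff hb] at hab
    exact hab
  have h2 : aeval x (X * expand (ZMod p) p b - expand (ZMod p) p a) = 0 := by
    rw [map_sub, map_mul, aeval_X, expand_aeval, expand_aeval, h1, sub_self]
  have h3 : X * expand (ZMod p) p b - expand (ZMod p) p a = 0 := by
    by_contra hne
    exact hx ⟨_, hne, h2⟩
  have hb0 : b ≠ 0 := by rintro rfl; simp at hb
  have hb1 : expand (ZMod p) p b ≠ 0 := by rwa [Ne, expand_eq_zero hp.out.pos]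
  have h4 := congrArg natDegree (sub_eq_zero.1 h3)
  rw [natDegree_X_mul hb1, natDegree_expand, natDegree_expand] at h4
  have h5 : p ∣ 1 := by
    rw [← Nat.dvd_add_right (Dvd.intro_left b.natDegree rfl : p ∣ b.natDegree * p), h4]
    exact Dvd.intro_left _ rfl
  exact hp.out.one_lt.ne' (Nat.dvd_one.1 h5)

lemma exists_root (hK : GF p K) : ∀ (m : ℕ) (s : K), Transcendental (ZMod p) s →
    Module.finrank (IntermediateField.adjoin (ZMod p) {s}) K ≤ m →
    ∃ (t : K) (n : ℕ), t ^ p ^ n = s ∧ Transcendental (ZMod p) t ∧ ∀ x : K, x ^ p ≠ t := by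
  intro m
  induction m with
  | zero =>
    intro s hs hm
    have := hK s hs
    have := Module.finrank_pos (R := IntermediateField.adjoin (ZMod p) {s}) (M := K)
    omega
  | succ m ih =>
    intro s hs hm
    by_cases h : ∀ x : K, x ^ p ≠ s
    · exact ⟨s, 0, by simp, hs, h⟩
    · push Not at h
      obtain ⟨x, rfl⟩ := h
      have hx : Transcendental (ZMod p) x := fun hx => hs (hx.pow p)
      have := hK _ hs
      have hlt : IntermediateField.adjoin (ZMod p) {x ^ p} < IntermediateField.adjoin (ZMod p) {x} := by
        refine lt_of_le_of_ne ?_ ?_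
        · rw [IntermediateField.adjoin_simple_le_iff]
          exact pow_mem (IntermediateField.mem_adjoin_simple_self _ _) _
        · intro he
          apply not_mem_adjoin_pow x hx
          rw [he]
          exact IntermediateField.mem_adjoin_simple_self _ _
      have h2 := IntermediateField.finrank_lt_of_gt hlt
      obtain ⟨t, n, h3, h4, h5⟩ := ih x hx (by omega)
      exact ⟨t, n + 1, by rw [pow_succ, pow_mul, h3], h4, h5⟩

lemma exists_noether (hK : GF p K) (hex : ∃ z : K, Transcendental (ZMod p) z) (R : Subring K)
    (hfg : ∃ s : Finset K, Subring.closure (s : Set K) = R)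
    (hfrac : ∀ x : K, ∃ r s : K, r ∈ R ∧ s ∈ R ∧ s ≠ 0 ∧ x = r / s) :
    ∃ t ∈ R, Transcendental (ZMod p) t ∧ ∀ r ∈ R, IntOver p t r := by
  classical
  let R' : Subalgebra (ZMod p) K := { R with algebraMap_mem' := const_mem R }
  have hR' : ∀ x, x ∈ R' ↔ x ∈ R := fun x => Iff.rfl
  obtain ⟨S, hS⟩ := hfg
  have hFG : R'.FG := by
    refine ⟨S, le_antisymm ?_ ?_⟩
    · apply Algebra.adjoin_le
      intro x hx
      show x ∈ R
      rw [← hS]; exact Subring.subset_closure hx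
    · intro x hx
      have h1 : x ∈ Subring.closure (S : Set K) := by rw [hS]; exact hx
      have h2 : Subring.closure (S : Set K) ≤ (Algebra.adjoin (ZMod p) (S : Set K)).toSubring :=
        Subring.closure_le.2 Algebra.subset_adjoin
      exact h2 h1
  have hft : Algebra.FiniteType (ZMod p) R' := (Subalgebra.fg_iff_finiteType _).1 hFG
  obtain ⟨m, g, hg, hgi⟩ := exists_integral_inj_algHom_of_fg (ZMod p) R'
  let y : Fin m → K := fun i => (g (MvPolynomial.X i) : K)
  have hy : (R'.val.comp g) = MvPolynomial.aeval y := by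
    apply MvPolynomial.algHom_ext
    intro i
    simp [y]
  have hind : AlgebraicIndependent (ZMod p) y := by
    show Function.Injective (MvPolynomial.aeval y)
    rw [← hy]
    exact Subtype.val_injective.comp hg
  have hintegral : ∀ r ∈ R, IsIntegral (Algebra.adjoin (ZMod p) (Set.range y)) r := by
    intro r hr
    obtain ⟨q, hq, hq0⟩ := hgi ⟨r, hr⟩
    have hmem : ∀ z, (g z : K) ∈ Algebra.adjoin (ZMod p) (Set.range y) := by
      intro z
      rw [Algebra.adjoin_range_eq_range_aeval, ← hy]
      exact ⟨z, rfl⟩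
    let f : MvPolynomial (Fin m) (ZMod p) →+* Algebra.adjoin (ZMod p) (Set.range y) :=
      ((R'.val.comp g).codRestrict _ hmem).toRingHom
    refine ⟨q.map f, hq.map f, ?_⟩
    rw [eval₂_map]
    have h1 := congrArg R'.val.toRingHom hq0
    rw [map_zero, hom_eval₂] at h1
    exact h1
  have hyR : ∀ i, y i ∈ R := fun i => (g (MvPolynomial.X i)).2
  match m, y, hind, hintegral, hyR with
  | 0, y, hind, hintegral, hyR =>
    exfalso
    obtain ⟨z, hz⟩ := hex
    apply hz
    have halg : ∀ r ∈ R, IsAlgebraic (ZMod p) r := by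
      intro r hr
      have h1 := hintegral r hr
      have h2 : Algebra.adjoin (ZMod p) (Set.range y) = ⊥ := by
        rw [Set.range_eq_empty, Algebra.adjoin_empty]
      rw [h2] at h1
      have : Algebra.IsIntegral (ZMod p) (⊥ : Subalgebra (ZMod p) K) := inferInstance
      exact (isIntegral_trans r h1).isAlgebraic
    obtain ⟨r, s, hr, hs, -, rfl⟩ := hfrac z
    rw [div_eq_mul_inv]
    exact (halg r hr).mul (halg s hs).inv
  | 1, y, hind, hintegral, hyR =>
    have hr : Set.range y = {y 0} := by
      ext x
      simp [Fin.exists_fin_one, eq_comm]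
    rw [hr] at hintegral
    exact ⟨y 0, hyR 0, hind.transcendental 0, hintegral⟩
  | m + 2, y, hind, hintegral, hyR =>
    exfalso
    have h0 : Transcendental (ZMod p) (y 0) := hind.transcendental 0
    have h1 := hind.transcendental_adjoin (i := 1) (s := {0}) (by simp)
    rw [Set.image_singleton] at h1
    have := hK _ h0
    apply h1
    rw [← IntermediateField.isAlgebraic_adjoin_iff]
    exact Algebra.IsAlgebraic.isAlgebraic _

theorem GF_of {𝔽 : Type*} [Field 𝔽] [Finite 𝔽] [CharP 𝔽 p] [Algebra (RatFunc 𝔽) K]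
    [FiniteDimensional (RatFunc 𝔽) K] :
    GF p K ∧ ∃ z : K, Transcendental (ZMod p) z := by
  let i1 : Algebra 𝔽 K := ((algebraMap (RatFunc 𝔽) K).comp (algebraMap 𝔽 (RatFunc 𝔽))).toAlgebra
  have i2 : IsScalarTower 𝔽 (RatFunc 𝔽) K := IsScalarTower.of_algebraMap_eq fun _ => rfl
  let i3 : Algebra (ZMod p) 𝔽 := ZMod.algebra 𝔽 p
  have i4 : IsScalarTower (ZMod p) 𝔽 K := IsScalarTower.of_algebraMap_eq' (Subsingleton.elim _ _)
  have i5 : Algebra.IsAlgebraic (ZMod p) 𝔽 := by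
    have : Module.Finite (ZMod p) 𝔽 := Module.Finite.of_finite
    exact Algebra.IsAlgebraic.of_finite _ _
  refine ⟨fun s hs => ?_, algebraMap (RatFunc 𝔽) K RatFunc.X, ?_⟩
  · have hs' : Transcendental 𝔽 s := fun h => hs (h.restrictScalars (ZMod p))
    have hfin := FunctionField.finiteDimensional_of_adjoin_transcendental hs'
    let k0 := IntermediateField.adjoin (ZMod p) {s}
    let L' := IntermediateField.adjoin k0 (Set.range (algebraMap 𝔽 K))
    have h1 : FiniteDimensional k0 L' := by
      have : Finite (Set.range (algebraMap 𝔽 K)) := inferInstance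
      apply IntermediateField.finiteDimensional_adjoin
      rintro x ⟨a, rfl⟩
      have : IsAlgebraic (ZMod p) (algebraMap 𝔽 K a) :=
        (Algebra.IsAlgebraic.isAlgebraic (R := ZMod p) a).algebraMap
      exact (this.tower_top k0).isIntegral
    let L'' : IntermediateField 𝔽 K := L'.toSubfield.toIntermediateField (by
      intro x
      exact IntermediateField.subset_adjoin _ _ ⟨x, rfl⟩)
    have hle : IntermediateField.adjoin 𝔽 {s} ≤ L'' := by
      rw [IntermediateField.adjoin_simple_le_iff]
      exact L'.algebraMap_mem ⟨s, IntermediateField.mem_adjoin_simple_self _ _⟩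
    have h2 : FiniteDimensional L' K := by
      let j : IntermediateField.adjoin 𝔽 {s} →+* L' :=
        { toFun := fun y => ⟨y, hle y.2⟩
          map_one' := rfl
          map_mul' := fun _ _ => rfl
          map_zero' := rfl
          map_add' := fun _ _ => rfl }
      have h3 : ((algebraMap L' K).comp j).Finite := by
        have : (algebraMap (IntermediateField.adjoin 𝔽 {s}) K).Finite := by
          rw [RingHom.finite_algebraMap]; exact hfin
        exact this
      have h4 := RingHom.Finite.of_comp_finite h3
      rwa [RingHom.finite_algebraMap] at h4
    exact FiniteDimensional.trans k0 L' K
  · intro h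
    have h1 := h.tower_top 𝔽
    exact (transcendental_algebraMap_iff (algebraMap (RatFunc 𝔽) K).injective).2
      RatFunc.transcendental_X h1

end Fin2
end UnivDef


/-- Any finitely generated subring `R` of a global function field `K`
(a finite extension of `𝔽(T)` for a finite field `𝔽`) whose fraction field is `K`
has a universal first-order definition in `K`. -/
theorem fin_gen_subring_of_global_function_field_univ_definable
    (𝔽 : Type*) [Field 𝔽] [Finite 𝔽]
    (K : Type*) [Field K] [Algebra (RatFunc 𝔽) K] [FiniteDimensional (RatFunc 𝔽) K]
    (R : Subring K)
    (hfg : ∃ s : Finset K, Subring.closure (s : Set K) = R)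
    (hfrac : ∀ x : K, ∃ r s : K, r ∈ R ∧ s ∈ R ∧ s ≠ 0 ∧ x = r / s) :
    ∃ (n : ℕ) (F : MvPolynomial (Fin (n + 1)) K),
      (R : Set K) =
        {x : K | ∀ y : Fin n → K, MvPolynomial.eval (Fin.cons x y) F ≠ 0} := by
  obtain ⟨p, hc⟩ := CharP.exists 𝔽
  have hp : Fact p.Prime := ⟨CharP.char_is_prime 𝔽 p⟩
  have hcK : CharP K p := charP_of_injective_ringHom
    ((algebraMap (RatFunc 𝔽) K).comp (algebraMap 𝔽 (RatFunc 𝔽))).injective p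
  let _ : Algebra (ZMod p) K := ZMod.algebra K p
  obtain ⟨hK, hex⟩ := UnivDef.GF_of (p := p) (K := K) (𝔽 := 𝔽)
  obtain ⟨t0, ht0R, ht0, hintegral⟩ := UnivDef.exists_noether hK hex R hfg hfrac
  obtain ⟨t, n, h1, h2, h3⟩ := UnivDef.exists_root hK _ t0 ht0 le_rfl
  subst h1
  exact UnivDef.Dio1.final (UnivDef.main1 hK R hfrac t h2 h3 n ht0R hintegral)
end

section
/- Let K be a field that is not algebraically closed. Let n, m, p ∈ ℕ, let q, r : {1, …, p} → ℕ, and for each i ∈ {1,…,p}, j ∈ {1,…,q(i)}, k ∈ {1,…,r(i)} let f_{i,j} and g_{i,k} be polynomials in K[X₁, …, Xₙ, Y₁, …, Y_m]. Set B = { x ∈ Kⁿ : there exist y ∈ K^m and i ∈ {1,…,p} such that f_{i,j}(x, y) = 0 for all j ≤ q(i) and g_{i,k}(x, y) ≠ 0 for all k ≤ r(i) }. Then there exists a single polynomial F ∈ K[X₁, …, Xₙ, Y₁, …, Y_{m+1}] such that B = { x ∈ Kⁿ : ∃ y ∈ K^{m+1}, F(x, y) = 0 }. (In other words, every set with an existential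 definition of rank m over K has a diophantine definition of rank m+1.) -/
theorem aux_pair {K σ : Type*} [Field K]
    (hK : ∃ p : Polynomial K, 0 < p.degree ∧ ∀ x : K, Polynomial.eval x p ≠ 0)
    (P Q : MvPolynomial σ K) :
    ∃ R : MvPolynomial σ K, ∀ v : σ → K, MvPolynomial.eval v R = 0 ↔
      (MvPolynomial.eval v P = 0 ∧ MvPolynomial.eval v Q = 0) := by
  obtain ⟨h, hd, hr⟩ := hK
  have hd' : 0 < h.natDegree := Polynomial.natDegree_pos_iff_degree_pos.mpr hd
  have h0 : h ≠ 0 := by rintro rfl; simp at hd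
  refine ⟨∑ k ∈ Finset.range (h.natDegree + 1),
    MvPolynomial.C (h.coeff k) * P ^ k * Q ^ (h.natDegree - k), fun v => ?_⟩
  simp only [map_sum, map_mul, map_pow, MvPolynomial.eval_C]
  generalize MvPolynomial.eval v P = a
  generalize MvPolynomial.eval v Q = b
  constructor
  · intro hs
    by_cases hb : b = 0
    · subst hb
      refine ⟨?_, rfl⟩
      rw [Finset.sum_range_succ, Finset.sum_eq_zero] at hs
      · simp only [Nat.sub_self, pow_zero, mul_one, zero_add] at hs
        rcases mul_eq_zero.mp hs with h1 | h1
        · exact absurd (Polynomial.leadingCoeff_eq_zero.mp h1) h0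
        · exact eq_zero_of_pow_eq_zero h1
      · intro k hk
        have := Finset.mem_range.mp hk
        rw [zero_pow (by omega), mul_zero]
    · exfalso
      apply hr (a / b)
      have : b ^ h.natDegree * Polynomial.eval (a / b) h = 0 := by
        rw [← hs, Polynomial.eval_eq_sum_range, Finset.mul_sum]
        refine Finset.sum_congr rfl fun k hk => ?_
        have hk' := Finset.mem_range.mp hk
        have e : b ^ h.natDegree = b ^ k * b ^ (h.natDegree - k) := by
          rw [← pow_add]; congr 1; omega
        rw [e, div_pow]
        have := pow_ne_zero k hb
        field_simp
      exact (mul_eq_zero.mp this).resolve_left (pow_ne_zero _ hb)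
  · rintro ⟨rfl, rfl⟩
    refine Finset.sum_eq_zero fun k hk => ?_
    rcases Nat.eq_zero_or_pos k with rfl | hk
    · simp [hd'.ne']
    · simp [hk.ne']

theorem aux_family {K σ : Type*} [Field K]
    (hK : ∃ p : Polynomial K, 0 < p.degree ∧ ∀ x : K, Polynomial.eval x p ≠ 0)
    (q : ℕ) (f : Fin q → MvPolynomial σ K) :
    ∃ R : MvPolynomial σ K, ∀ v : σ → K, MvPolynomial.eval v R = 0 ↔
      ∀ j, MvPolynomial.eval v (f j) = 0 := by
  induction q with
  | zero => exact ⟨0, fun v => by simp⟩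
  | succ q ih =>
    obtain ⟨R, hR⟩ := ih (fun j => f j.succ)
    obtain ⟨S, hS⟩ := aux_pair hK (f 0) R
    exact ⟨S, fun v => by rw [hS, hR, Fin.forall_fin_succ]⟩

/-- Over a field `K` which is not algebraically closed, every set with
an existential definition of rank `m` (a disjunction over `i ∈ {1,…,p}` of systems of
polynomial equations `f_{i,j} = 0` and inequations `g_{i,k} ≠ 0` in variables
`x ∈ Kⁿ, y ∈ K^m`) has a diophantine definition of rank `m + 1`: it is the projection
of the zero set of a single polynomial `F` in `n + (m+1)` variables. -/
theorem existential_definable_iff_diophantine_rank_succ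
    (K : Type*) [Field K]
    (hK : ∃ p : Polynomial K, 0 < p.degree ∧ ∀ x : K, Polynomial.eval x p ≠ 0)
    (n m p : ℕ) (q r : Fin p → ℕ)
    (f : (i : Fin p) → Fin (q i) → MvPolynomial (Fin n ⊕ Fin m) K)
    (g : (i : Fin p) → Fin (r i) → MvPolynomial (Fin n ⊕ Fin m) K) :
    ∃ F : MvPolynomial (Fin n ⊕ Fin (m + 1)) K,
      {x : Fin n → K | ∃ (y : Fin m → K) (i : Fin p),
          (∀ j : Fin (q i), MvPolynomial.eval (Sum.elim x y) (f i j) = 0) ∧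
          (∀ k : Fin (r i), MvPolynomial.eval (Sum.elim x y) (g i k) ≠ 0)} =
        {x : Fin n → K | ∃ y : Fin (m + 1) → K,
          MvPolynomial.eval (Sum.elim x y) F = 0} := by
  classical
  have key : ∀ i : Fin p, ∃ R : MvPolynomial (Fin n ⊕ Fin (m + 1)) K,
      ∀ (x : Fin n → K) (y : Fin m → K) (z : K),
        MvPolynomial.eval (Sum.elim x (Fin.snoc y z : Fin (m + 1) → K)) R = 0 ↔
        (∀ j, MvPolynomial.eval (Sum.elim x y) (f i j) = 0) ∧
          z * ∏ k, MvPolynomial.eval (Sum.elim x y) (g i k) = 1 := by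
    intro i
    let ρ : Fin n ⊕ Fin m → Fin n ⊕ Fin (m + 1) := Sum.map id Fin.castSucc
    have hρ : ∀ (x : Fin n → K) (y : Fin m → K) (z : K),
        Sum.elim x (Fin.snoc y z : Fin (m + 1) → K) ∘ ρ = Sum.elim x y := by
      intro x y z
      funext s
      rcases s with s | s <;> simp [ρ]
    obtain ⟨A, hA⟩ := aux_family hK (q i) (fun j => MvPolynomial.rename ρ (f i j))
    obtain ⟨R, hR⟩ := aux_pair hK A
      (MvPolynomial.X (Sum.inr (Fin.last m)) * ∏ k, MvPolynomial.rename ρ (g i k) - 1)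
    refine ⟨R, fun x y z => ?_⟩
    rw [hR, hA]
    simp only [map_sub, map_mul, map_prod, MvPolynomial.eval_rename, hρ, MvPolynomial.eval_X,
      Sum.elim_inr, Fin.snoc_last, map_one, sub_eq_zero]
  choose R hR using key
  refine ⟨∏ i, R i, ?_⟩
  ext x
  simp only [Set.mem_setOf_eq, map_prod, Finset.prod_eq_zero_iff, Finset.mem_univ, true_and]
  constructor
  · rintro ⟨y, i, hf, hg⟩
    refine ⟨Fin.snoc y (∏ k, MvPolynomial.eval (Sum.elim x y) (g i k))⁻¹, i, ?_⟩
    rw [hR]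
    exact ⟨hf, inv_mul_cancel₀ (Finset.prod_ne_zero_iff.mpr fun k _ => hg k)⟩
  · rintro ⟨y, i, h⟩
    rw [← Fin.snoc_init_self y, hR] at h
    refine ⟨Fin.init y, i, h.1, fun k hk => ?_⟩
    have h2 := h.2
    rw [Finset.prod_eq_zero (Finset.mem_univ k) hk, mul_zero] at h2
    exact zero_ne_one h2
end

section
/- Let F be a finite field. Then there exists u ∈ F such that the polynomial X² − X − u² is irreducible in F[X]. -/
open Polynomial

/-- For every finite field `F` there exists `u ∈ F` such that the
polynomial `X² − X − u²` is irreducible over `F`. -/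
theorem exists_irreducible_X_sq_sub_X_sub_sq (F : Type*) [Field F] [Finite F] :
    ∃ u : F, Irreducible (X ^ 2 - X - C (u ^ 2) : F[X]) := by
  suffices h : ∃ u : F, ∀ x : F, x ^ 2 - x ≠ u ^ 2 by
    obtain ⟨u, hu⟩ := h
    refine ⟨u, ?_⟩
    have hd : (X ^ 2 - X - C (u ^ 2) : F[X]).natDegree = 2 := by compute_degree!
    refine Polynomial.irreducible_of_degree_le_three_of_not_isRoot ?_ ?_
    · rw [hd]; decide
    · intro x hx
      apply hu x
      simp only [IsRoot.def, eval_sub, eval_pow, eval_X, eval_C] at hx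
      exact sub_eq_zero.mp hx
  by_contra! hc
  have := Fintype.ofFinite F
  by_cases h2 : ringChar F = 2
  · have hs : Function.Surjective (fun x : F => x ^ 2 - x) := by
      intro a
      obtain ⟨u, hu⟩ := FiniteField.isSquare_of_char_two h2 a
      obtain ⟨x, hx⟩ := hc u
      exact ⟨x, by simp only [hx, hu]; ring⟩
    have hi := Finite.injective_iff_surjective.mpr hs
    exact zero_ne_one (hi (show (0 : F) ^ 2 - 0 = 1 ^ 2 - 1 by ring))
  · have h20 : (2 : F) ≠ 0 := Ring.two_ne_zero h2
    have hsq : ∀ a b : F, IsSquare (a ^ 2 + b ^ 2) := by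
      intro a b
      by_cases ha : a = 0
      · exact ⟨b, by rw [ha]; ring⟩
      · obtain ⟨x, hx⟩ := hc (b / a / 2)
        refine ⟨a * (2 * x - 1), ?_⟩
        field_simp at hx
        linear_combination -hx
    obtain ⟨a, ha⟩ := FiniteField.exists_nonsquare h2
    obtain ⟨x, y, hxy⟩ := FiniteField.exists_root_sum_quadratic (R := F)
      (f := X ^ 2) (g := X ^ 2 - C a) (by compute_degree!) (by compute_degree!)
      (FiniteField.odd_card_of_char_ne_two h2)
    simp only [eval_sub, eval_pow, eval_X, eval_C] at hxy
    apply ha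
    have := hsq x y
    rwa [show x ^ 2 + y ^ 2 = a by linear_combination hxy] at this
end

section
/- Let R be an integral domain whose field of fractions is a number field. Then for every nonzero ideal I of R, the quotient ring R/I is finite. -/
/-- If `R` is an integral domain whose fraction field is a number
field `K`, then `R/I` is finite for every nonzero ideal `I` of `R`. -/
theorem quotient_by_nonzero_ideal_finite
    (R K : Type*) [CommRing R] [IsDomain R] [Field K] [NumberField K]
    [Algebra R K] [IsFractionRing R K]
    (I : Ideal R) (hI : I ≠ ⊥) :
    Finite (R ⧸ I) := by
  classical
  have hinj : Function.Injective (algebraMap R K) := IsFractionRing.injective R K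
  have : CharZero R := by
    refine ⟨fun a b h => ?_⟩
    have := congrArg (algebraMap R K) h
    simpa using this
  have : Algebra.IsAlgebraic ℤ K := by
    have : Algebra.IsAlgebraic ℚ K := inferInstance
    exact (IsFractionRing.comap_isAlgebraic_iff (A := ℤ) (K := ℚ) (C := K)).2 this
  -- a nonzero integer in `I`
  obtain ⟨m, hm0, hmI⟩ : ∃ m : ℤ, m ≠ 0 ∧ (m : R) ∈ I := by
    obtain ⟨a, haI, ha0⟩ := Submodule.exists_mem_ne_zero_of_ne_bot hI
    have hKa : IsAlgebraic ℤ (algebraMap R K a) := Algebra.IsAlgebraic.isAlgebraic _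
    have hRa : IsAlgebraic ℤ a :=
      (isAlgebraic_algHom_iff ((algebraMap R K).toIntAlgHom) hinj).1 hKa
    have hne := Ideal.comap_ne_bot_of_algebraic_mem ha0 haI hRa
    obtain ⟨m, hm, hm0⟩ := Submodule.exists_mem_ne_zero_of_ne_bot hne
    exact ⟨m, hm0, by simpa using hm⟩
  set N := m.natAbs with hN
  have : NeZero N := ⟨by simpa [hN] using hm0⟩
  have hNI : (N : R) ∈ I := by
    obtain ⟨c, hc⟩ : m ∣ (N : ℤ) := Int.dvd_natAbs.2 dvd_rfl
    have h : (N : R) = (m : R) * (c : R) := by exact_mod_cast congrArg (Int.cast : ℤ → R) hc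
    rw [h]
    exact I.mul_mem_right _ hmI
  by_contra hfin
  have : Infinite (R ⧸ I) := not_finite_iff_infinite.1 hfin
  obtain ⟨T, hT⟩ := Infinite.exists_subset_card_eq (R ⧸ I) (N ^ Module.finrank ℚ K + 1)
  let f : R ⧸ I → R := Quotient.out
  have hf : ∀ q, Ideal.Quotient.mk I (f q) = q := fun q => Quotient.out_eq q
  let M : Submodule ℤ R := Submodule.span ℤ (f '' (T : Set (R ⧸ I)))
  have : Module.Finite ℤ M :=
    Module.Finite.span_of_finite ℤ (T.finite_toSet.image f)
  have : Module.Free ℤ M := inferInstance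
  let b := Module.finBasis ℤ M
  have hrank : Module.finrank ℤ M ≤ Module.finrank ℚ K := by
    have h1 : LinearIndependent ℤ (fun i => algebraMap R K (b i : R)) := by
      have := b.linearIndependent.map' (((algebraMap R K).toIntAlgHom.toLinearMap).comp M.subtype)
        (LinearMap.ker_eq_bot.2 (hinj.comp Subtype.val_injective))
      exact this
    have h2 := (LinearIndependent.iff_fractionRing ℤ ℚ).1 h1
    simpa using h2.fintype_card_le_finrank
  have hmem : ∀ q ∈ T, f q ∈ M := fun q hq => Submodule.subset_span ⟨q, hq, rfl⟩
  let g : R ⧸ I → (Fin (Module.finrank ℤ M) → ZMod N) := fun q i =>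
    if h : f q ∈ M then ((b.repr ⟨f q, h⟩ i : ℤ) : ZMod N) else 0
  have hcard : (Finset.univ : Finset (Fin (Module.finrank ℤ M) → ZMod N)).card < T.card := by
    rw [hT, Finset.card_univ, Fintype.card_fun, ZMod.card, Fintype.card_fin]
    exact Nat.lt_succ_of_le (Nat.pow_le_pow_right (NeZero.pos N) hrank)
  obtain ⟨x, hx, y, hy, hxy, hgxy⟩ := Finset.exists_ne_map_eq_of_card_lt_of_maps_to hcard
    (f := g) (fun _ _ => Finset.mem_univ _)
  apply hxy
  rw [← hf x, ← hf y, Ideal.Quotient.eq]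
  have hd : ∀ i, ∃ c : ℤ, b.repr (⟨f x, hmem x hx⟩ - ⟨f y, hmem y hy⟩) i = N * c := by
    intro i
    have := congrFun hgxy i
    simp only [g, dif_pos (hmem x hx), dif_pos (hmem y hy)] at this
    have h3 := (ZMod.intCast_eq_intCast_iff_dvd_sub _ _ _).1 this.symm
    obtain ⟨c, hc⟩ := h3
    exact ⟨c, by simpa using hc⟩
  choose c hc using hd
  have hs := congrArg (Subtype.val) (b.sum_repr (⟨f x, hmem x hx⟩ - ⟨f y, hmem y hy⟩))
  have hs' : f x - f y = ∑ i, (N : R) * ((c i : R) * (b i : R)) := by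
    simp only [hc] at hs
    rw [AddSubgroupClass.coe_sub] at hs
    rw [← hs]
    simp [mul_assoc]
  rw [hs']
  exact Ideal.sum_mem _ fun i _ => I.mul_mem_right _ hNI
end
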